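/- arXiv:1003.5072 — 3 statements merged into one kernel-verified Lean document; each statement's English description precedes it below -/
import Mathlib

section
/- Let n ≥ 1 and let f : ℝ^n → ℝ be a smooth function with 0 < a ≤ f ≤ b for some constants a, b and with bounded first and second derivatives. Then for every t > 0 and every x ∈ ℝ^n one has 1 − (2t/n) · P_t(f Δ(log f))(x)/P_t f(x) > 0 and P_t(f log f)(x) − P_t f(x) · log P_t f(x) ≤ t · Δ(P_t f)(x) + (n/2) · P_t f(x) · log( 1 − (2t/n) · P_t(f Δ(log f))(x)/P_t f(x) ) (dimensional local logarithmic Sobolev inequality for the Euclidean heat semigroup, expressing its CD(0,n) property). -/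
open MeasureTheory Real

/-- Euclidean heat semigroup, with `heat n 0 f = f`. -/
noncomputable def heat (n : ℕ) (t : ℝ) (f : EuclideanSpace ℝ (Fin n) → ℝ)
    (x : EuclideanSpace ℝ (Fin n)) : ℝ :=
  if t = 0 then f x
  else (4 * π * t) ^ (-(n : ℝ) / 2) * ∫ y, f y * Real.exp (-‖x - y‖ ^ 2 / (4 * t))

/-- Laplacian on `ℝ^n` as the sum of second derivatives in the coordinate directions. -/
noncomputable def laplacian (n : ℕ) (f : EuclideanSpace ℝ (Fin n) → ℝ)
    (x : EuclideanSpace ℝ (Fin n)) : ℝ :=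
  ∑ i : Fin n,
    fderiv ℝ (fderiv ℝ f) x (EuclideanSpace.single i 1) (EuclideanSpace.single i 1)

/-!
By Legendre duality, `log x = inf_{s > 0} (s x - 1 - log s)`, the inequality together with the
positivity of the argument of its logarithm is equivalent to the family of linear inequalities
`Ent f ≤ s/2 ∫ |∇f|²/f + (1 - s)/2 ∫ Δf + (s - 1 - log s) n/2 ∫ f`, `s > 0`, for the standard
Gaussian measure. Interpolate between `f` and its mean by the Ornstein–Uhlenbeck averages
`f_θ w = ∫ f (cos θ w + sin θ v) dγ(v)`, `θ ∈ [0, π/2]`. By de Bruijn's identity the entropy of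
`f_θ` has derivative `-sin θ cos θ ∫ |(∇f)_θ|²/f_θ`, and, as in the Blachman–Stam inequality,
Stein's lemma and Cauchy–Schwarz bound this Fisher information in terms of a free parameter `α`. The
choice `α = s / (s + (1 - s) sin² θ)` makes the bound integrate to the inequality of parameter `s`.
-/

open ProbabilityTheory Module
open scoped RealInnerProductSpace Gradient Laplacian

section RealVariable

lemma pos_and_le_log_of_forall_le {x y : ℝ} (h : ∀ s, 0 < s → y ≤ s * x - 1 - log s) :
    0 < x ∧ y ≤ log x := by
  have hx : 0 < x := by
    by_contra! hx
    have hle := h (exp (-y)) (exp_pos _)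
    rw [log_exp] at hle
    linarith [mul_nonpos_of_nonneg_of_nonpos (exp_pos (-y)).le hx]
  refine ⟨hx, (h x⁻¹ (inv_pos.2 hx)).trans_eq ?_⟩
  rw [inv_mul_cancel₀ hx.ne', log_inv]
  ring

/-- A primitive of `r ↦ α ^ 2 * A + (1 - α ^ 2) * D + (1 - α) ^ 2 / r * m`, the bound on the Fisher
information at `r = sin θ ^ 2`, for the choice `α = s / (s + (1 - s) * r)`. -/
noncomputable def fisherPrimitive (s A D m r : ℝ) : ℝ :=
  s * (r / (s + (1 - s) * r)) * A + (r - s * (r / (s + (1 - s) * r))) * D +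
    (log (s + (1 - s) * r) - (1 - s) * (r / (s + (1 - s) * r))) * m

lemma hasDerivAt_fisherPrimitive {s r : ℝ} (A D m : ℝ) (hN : 0 < s + (1 - s) * r) :
    HasDerivAt (fisherPrimitive s A D m)
      ((s / (s + (1 - s) * r)) ^ 2 * A + (1 - (s / (s + (1 - s) * r)) ^ 2) * D +
        ((1 - s) / (s + (1 - s) * r)) ^ 2 * r * m) r := by
  have hN' : HasDerivAt (fun r => s + (1 - s) * r) (1 - s) r := by
    simpa using ((hasDerivAt_id r).const_mul (1 - s)).const_add s
  have hu : HasDerivAt (fun r => r / (s + (1 - s) * r)) (s / (s + (1 - s) * r) ^ 2) r :=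
    ((hasDerivAt_id r).div hN' hN.ne').congr_deriv (by simp only [id]; ring)
  refine (((hu.const_mul s).mul_const A).add (((hasDerivAt_id r).sub (hu.const_mul s)).mul_const D)
    |>.add (((hN'.log hN.ne').sub (hu.const_mul (1 - s))).mul_const m)).congr_deriv ?_
  have := hN.ne'
  field_simp
  ring

lemma apply_zero_sub_apply_pi_div_two_le {Φ S : ℝ → ℝ} {A D m s : ℝ} (hs : 0 < s)
    (hΦ : ∀ θ, HasDerivAt Φ (-(sin θ * cos θ * S θ)) θ)
    (hS : ∀ θ α, sin θ ^ 2 * S θ ≤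
      sin θ ^ 2 * (α ^ 2 * A + (1 - α ^ 2) * D) + (1 - α) ^ 2 * m) :
    Φ 0 - Φ (π / 2) ≤ (s * A + (1 - s) * D + (s - 1 - log s) * m) / 2 := by
  have hN (θ : ℝ) : 0 < s + (1 - s) * sin θ ^ 2 := by
    rcases le_total s 1 with h | h <;> nlinarith [sq_nonneg (sin θ), sin_sq_le_one θ]
  have hsq (θ : ℝ) : HasDerivAt (fun θ => sin θ ^ 2) (2 * (sin θ * cos θ)) θ :=
    ((hasDerivAt_sin θ).pow 2).congr_deriv (by simp; ring)
  have hderiv (θ : ℝ) := (hΦ θ).add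
    (((hasDerivAt_fisherPrimitive A D m (hN θ)).comp θ (hsq θ)).div_const 2)
  have hmono : MonotoneOn (fun θ => Φ θ + fisherPrimitive s A D m (sin θ ^ 2) / 2)
      (Set.Icc 0 (π / 2)) := by
    refine monotoneOn_of_hasDerivWithinAt_nonneg (convex_Icc _ _)
      (fun θ _ => (hderiv θ).continuousAt.continuousWithinAt)
      (fun θ _ => (hderiv θ).hasDerivWithinAt) fun θ hθ => ?_
    rw [interior_Icc] at hθ
    have hsin : 0 < sin θ := sin_pos_of_pos_of_lt_pi hθ.1 (by linarith [hθ.2, pi_pos])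
    have hcos : 0 < cos θ := cos_pos_of_mem_Ioo ⟨by linarith [hθ.1, pi_pos], hθ.2⟩
    set α := s / (s + (1 - s) * sin θ ^ 2) with hα
    set β := (1 - s) / (s + (1 - s) * sin θ ^ 2) with hβ
    have hαβ : 1 - α = β * sin θ ^ 2 := by
      have := (hN θ).ne'
      rw [hα, hβ]
      field_simp
      ring
    have hSθ : S θ ≤ α ^ 2 * A + (1 - α ^ 2) * D + β ^ 2 * sin θ ^ 2 * m := by
      refine le_of_mul_le_mul_left ((hS θ α).trans_eq ?_) (pow_pos hsin 2)
      rw [hαβ]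
      ring
    linarith [mul_le_mul_of_nonneg_left hSθ (mul_pos hsin hcos).le]
  have hle := hmono ⟨le_rfl, by positivity⟩ ⟨by positivity, le_rfl⟩ (by positivity : 0 ≤ π / 2)
  have h0 : fisherPrimitive s A D m 0 = log s * m := by simp [fisherPrimitive]
  have h1 : fisherPrimitive s A D m 1 = s * A + (1 - s) * D - (1 - s) * m := by
    simp only [fisherPrimitive, mul_one, add_sub_cancel, div_one, log_one]
    ring
  simp only [sin_zero, sin_pi_div_two, zero_pow two_ne_zero, one_pow, h0, h1] at hle
  linarith

end RealVariable

lemma norm_integral_sq_div_le {Ω F : Type*} [MeasurableSpace Ω] {μ : Measure Ω}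
    [NormedAddCommGroup F] [NormedSpace ℝ F] {X : Ω → F} {g : Ω → ℝ} (hg : ∀ ω, 0 < g ω)
    (hgi : Integrable g μ) (hX : Integrable (fun ω => ‖X ω‖ ^ 2 / g ω) μ) :
    ‖∫ ω, X ω ∂μ‖ ^ 2 / ∫ ω, g ω ∂μ ≤ ∫ ω, ‖X ω‖ ^ 2 / g ω ∂μ := by
  set c := ‖∫ ω, X ω ∂μ‖ / ∫ ω, g ω ∂μ with hc
  have hgnn : 0 ≤ ∫ ω, g ω ∂μ := integral_nonneg fun ω => (hg ω).le
  have : 0 ≤ c := by positivity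
  have hpt (ω : Ω) : 2 * c * ‖X ω‖ ≤ ‖X ω‖ ^ 2 / g ω + c ^ 2 * g ω := by
    have := (hg ω).ne'
    have h : ‖X ω‖ ^ 2 / g ω + c ^ 2 * g ω - 2 * c * ‖X ω‖ = (‖X ω‖ - c * g ω) ^ 2 / g ω := by
      field_simp; ring
    linarith [div_nonneg (sq_nonneg (‖X ω‖ - c * g ω)) (hg ω).le]
  have hint : 2 * c * ‖∫ ω, X ω ∂μ‖ ≤ (∫ ω, ‖X ω‖ ^ 2 / g ω ∂μ) + c ^ 2 * ∫ ω, g ω ∂μ := by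
    calc 2 * c * ‖∫ ω, X ω ∂μ‖ ≤ 2 * c * ∫ ω, ‖X ω‖ ∂μ := by
          gcongr; exact norm_integral_le_integral_norm _
      _ = ∫ ω, 2 * c * ‖X ω‖ ∂μ := (integral_const_mul _ _).symm
      _ ≤ ∫ ω, (‖X ω‖ ^ 2 / g ω + c ^ 2 * g ω) ∂μ :=
          integral_mono_of_nonneg (.of_forall fun ω => by positivity) (hX.add (hgi.const_mul _))
            (.of_forall hpt)
      _ = _ := by rw [integral_add hX (hgi.const_mul _), integral_const_mul]
  rcases hgnn.eq_or_lt with h0 | hpos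
  · rw [← h0, div_zero]
    exact integral_nonneg fun ω => div_nonneg (sq_nonneg _) (hg ω).le
  · have hsq : c ^ 2 * ∫ ω, g ω ∂μ = ‖∫ ω, X ω ∂μ‖ ^ 2 / ∫ ω, g ω ∂μ := by
      rw [hc]; field_simp
    have hmul : c * ‖∫ ω, X ω ∂μ‖ = ‖∫ ω, X ω ∂μ‖ ^ 2 / ∫ ω, g ω ∂μ := by
      rw [hc]; ring
    linarith

section GaussianIntegrals

section Density

variable {E : Type*} [NormedAddCommGroup E] [InnerProductSpace ℝ E]

variable (E) in
/-- The density of the standard Gaussian measure with respect to the Lebesgue measure. -/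
noncomputable def stdGaussianDensity (w : E) : ℝ :=
  (2 * π) ^ (-(finrank ℝ E : ℝ) / 2) * exp (-‖w‖ ^ 2 / 2)

lemma stdGaussianDensity_pos (w : E) : 0 < stdGaussianDensity E w := by
  unfold stdGaussianDensity; positivity

lemma continuous_stdGaussianDensity : Continuous (stdGaussianDensity E) := by
  unfold stdGaussianDensity; fun_prop

lemma hasFDerivAt_stdGaussianDensity (w : E) :
    HasFDerivAt (stdGaussianDensity E) (-stdGaussianDensity E w • innerSL ℝ w) w := by
  have h : HasFDerivAt (fun w : E => -‖w‖ ^ 2 / 2) (-innerSL ℝ w) w := by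
    refine (((hasStrictFDerivAt_norm_sq w).hasFDerivAt.const_mul (-1 / 2 : ℝ)).congr_fderiv
      (by module)).congr_of_eventuallyEq (.of_forall fun w => by ring)
  refine (h.exp.const_mul ((2 * π) ^ (-(finrank ℝ E : ℝ) / 2))).congr_fderiv ?_
  rw [smul_smul, smul_neg, neg_smul, stdGaussianDensity]

variable [FiniteDimensional ℝ E] [MeasurableSpace E] [BorelSpace E]

lemma integrable_stdGaussianDensity : Integrable (stdGaussianDensity E) := by
  have h := GaussianFourier.integrable_cexp_neg_mul_sq_norm_add (b := 1 / 2) (by norm_num) 0 (0 : E)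
  refine (h.norm.congr (.of_forall fun w => ?_)).const_mul _
  simp only [Complex.norm_exp]
  congr 1
  simp [← Complex.ofReal_pow]
  ring

lemma charFun_withDensity_stdGaussianDensity (u : E) :
    charFun (volume.withDensity fun w => ENNReal.ofReal (stdGaussianDensity E w)) u =
      Complex.exp (-‖u‖ ^ 2 / 2) := by
  have hpt (w : E) : (ENNReal.ofReal (stdGaussianDensity E w)).toReal •
      Complex.exp (⟪w, u⟫ * Complex.I) =
      (((2 * π) ^ (-(finrank ℝ E : ℝ) / 2) : ℝ) : ℂ) *
        Complex.exp (-(1 / 2) * ‖w‖ ^ 2 + Complex.I * ⟪u, w⟫) := by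
    rw [ENNReal.toReal_ofReal (stdGaussianDensity_pos w).le, stdGaussianDensity, Complex.real_smul,
      Complex.exp_add, real_inner_comm, mul_comm Complex.I]
    push_cast
    ring_nf
  have hconst : ((π : ℂ) / (1 / 2)) ^ ((finrank ℝ E : ℂ) / 2) =
      (((2 * π) ^ ((finrank ℝ E : ℝ) / 2) : ℝ) : ℂ) := by
    rw [Complex.ofReal_cpow (by positivity)]
    push_cast
    ring_nf
  rw [charFun_apply, integral_withDensity_eq_integral_toReal_smul
    continuous_stdGaussianDensity.measurable.ennreal_ofReal (by simp)]
  simp_rw [hpt]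
  rw [integral_const_mul, GaussianFourier.integral_cexp_neg_mul_sq_norm_add (by norm_num), hconst,
    ← mul_assoc, ← Complex.ofReal_mul, ← rpow_add (by positivity)]
  norm_num [neg_div]

variable (E) in
lemma stdGaussian_eq_withDensity :
    stdGaussian E = volume.withDensity fun w => ENNReal.ofReal (stdGaussianDensity E w) := by
  have : IsFiniteMeasure (volume.withDensity fun w => ENNReal.ofReal (stdGaussianDensity E w)) :=
    isFiniteMeasure_withDensity_ofReal integrable_stdGaussianDensity.2
  refine Measure.ext_of_charFun (funext fun u => ?_)
  rw [charFun_stdGaussian, charFun_withDensity_stdGaussianDensity]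

lemma integral_stdGaussian (g : E → ℝ) :
    ∫ w, g w ∂(stdGaussian E) = ∫ w, stdGaussianDensity E w * g w := by
  rw [stdGaussian_eq_withDensity, integral_withDensity_eq_integral_toReal_smul
    continuous_stdGaussianDensity.measurable.ennreal_ofReal (by simp)]
  simp [ENNReal.toReal_ofReal (stdGaussianDensity_pos _).le]

lemma integrable_stdGaussian_iff {g : E → ℝ} :
    Integrable g (stdGaussian E) ↔ Integrable fun w => stdGaussianDensity E w * g w := by
  rw [stdGaussian_eq_withDensity, integrable_withDensity_iff_integrable_smul'
    continuous_stdGaussianDensity.measurable.ennreal_ofReal (by simp)]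
  simp [ENNReal.toReal_ofReal (stdGaussianDensity_pos _).le]

end Density

variable {E : Type*} [NormedAddCommGroup E] [InnerProductSpace ℝ E] [FiniteDimensional ℝ E]
  [MeasurableSpace E] [BorelSpace E]

lemma integral_inner_mul_stdGaussian {q : E → ℝ} (e : E) (hd : Differentiable ℝ q)
    (hq : Integrable q (stdGaussian E)) (hq' : Integrable (fderiv ℝ q · e) (stdGaussian E))
    (heq : Integrable (fun w => ⟪w, e⟫ * q w) (stdGaussian E)) :
    ∫ w, ⟪w, e⟫ * q w ∂(stdGaussian E) = ∫ w, fderiv ℝ q w e ∂(stdGaussian E) := by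
  rw [integrable_stdGaussian_iff] at hq hq' heq
  have hρ (w : E) : fderiv ℝ (stdGaussianDensity E) w e = -(stdGaussianDensity E w * ⟪w, e⟫) := by
    simp [(hasFDerivAt_stdGaussianDensity w).fderiv]
  have hibp := integral_mul_fderiv_eq_neg_fderiv_mul_of_integrable
    (by simpa [hρ, mul_assoc] using heq.neg) hq' hq
    (fun w _ => (hasFDerivAt_stdGaussianDensity w).differentiableAt) (fun w _ => hd w)
  rw [integral_stdGaussian, integral_stdGaussian, hibp, ← integral_neg]
  exact integral_congr_ae (.of_forall fun w => by simp only [hρ]; ring)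

lemma integral_smul_stdGaussian {q : E → ℝ} (hd : Differentiable ℝ q)
    (hq : Integrable q (stdGaussian E)) (hq' : Integrable (∇ q) (stdGaussian E))
    (hqw : Integrable (fun w => q w • w) (stdGaussian E)) :
    ∫ w, q w • w ∂(stdGaussian E) = ∫ w, ∇ q w ∂(stdGaussian E) := by
  refine ext_inner_right ℝ fun e => ?_
  have hqe := hqw.const_inner (𝕜 := ℝ) e
  have hqe' := hq'.const_inner (𝕜 := ℝ) e
  rw [real_inner_comm, real_inner_comm e, ← integral_inner hqw, ← integral_inner hq']
  simp only [real_inner_comm _ e, inner_gradient_left] at hqe' ⊢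
  simp only [real_inner_smul_left, mul_comm (q _)] at hqe ⊢
  exact integral_inner_mul_stdGaussian e hd hq hqe'
    (by simpa [real_inner_smul_right, real_inner_comm, mul_comm] using hqe)

lemma integral_apply_self_stdGaussian {ι : Type*} [Fintype ι] (b : OrthonormalBasis ι ℝ E)
    {Λ : E → E →L[ℝ] ℝ} (hd : Differentiable ℝ Λ) (hΛ : Integrable Λ (stdGaussian E))
    (hΛ' : ∀ i, Integrable (fun w => fderiv ℝ Λ w (b i) (b i)) (stdGaussian E))
    (hΛw : Integrable (fun w => ‖w‖ * ‖Λ w‖) (stdGaussian E)) :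
    ∫ w, Λ w w ∂(stdGaussian E) = ∫ w, ∑ i, fderiv ℝ Λ w (b i) (b i) ∂(stdGaussian E) := by
  have hd' (e : E) : (fderiv ℝ fun w => Λ w e) = fun w => (fderiv ℝ Λ w).flip e := by
    ext w u
    simp [((hd w).hasFDerivAt.clm_apply (hasFDerivAt_const e w)).fderiv]
  have hi (e : E) : Integrable (fun w => ⟪w, e⟫ * Λ w e) (stdGaussian E) := by
    refine (hΛw.mul_const (‖e‖ * ‖e‖)).mono' ?_ (.of_forall fun w => ?_)
    · exact .mul (by fun_prop) (hΛ.apply_continuousLinearMap e).1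
    · rw [norm_mul, show ‖w‖ * ‖Λ w‖ * (‖e‖ * ‖e‖) = (‖w‖ * ‖e‖) * (‖Λ w‖ * ‖e‖) by ring]
      gcongr
      exacts [norm_inner_le_norm w e, (Λ w).le_opNorm e]
  have hexpand (w : E) : Λ w w = ∑ i, ⟪w, b i⟫ * Λ w (b i) := by
    conv_lhs => enter [2]; rw [← b.sum_repr' w]
    simp [real_inner_comm]
  simp_rw [hexpand]
  rw [integral_finsetSum _ fun i _ => hi (b i), integral_finsetSum _ fun i _ => hΛ' i]
  refine Finset.sum_congr rfl fun i _ => ?_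
  rw [integral_inner_mul_stdGaussian (b i) (fun w => (hd w).clm_apply (by fun_prop))
    (hΛ.apply_continuousLinearMap (b i)) (by simpa [hd'] using hΛ' i) (hi (b i))]
  simp [hd']

lemma measurePreserving_rotation_stdGaussian (θ : ℝ) :
    MeasurePreserving (ContinuousLinearMap.rotation (E := E) θ)
      ((stdGaussian E).prod (stdGaussian E)) ((stdGaussian E).prod (stdGaussian E)) :=
  ⟨by fun_prop, IsGaussian.map_rotation_eq_self (by simp) θ⟩

lemma integral_integral_rotation_stdGaussian {F : Type*} [NormedAddCommGroup F] [NormedSpace ℝ F]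
    {h : E → E → F}
    (hh : Integrable (Function.uncurry h) ((stdGaussian E).prod (stdGaussian E))) (θ : ℝ) :
    ∫ w, ∫ v, h (cos θ • w + sin θ • v) (-sin θ • w + cos θ • v) ∂(stdGaussian E) ∂(stdGaussian E) =
      ∫ w, ∫ v, h w v ∂(stdGaussian E) ∂(stdGaussian E) := by
  have hR := measurePreserving_rotation_stdGaussian (E := E) θ
  have hhR := hR.integrable_comp_of_integrable hh
  have hmap := integral_map (φ := ContinuousLinearMap.rotation (E := E) θ)
    (f := Function.uncurry h) (by fun_prop) (hR.map_eq ▸ hh.1)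
  rw [hR.map_eq] at hmap
  rw [integral_integral hh]
  refine .trans ?_ hmap.symm
  simpa [ContinuousLinearMap.rotation_apply] using (integral_prod _ hhR).symm

end GaussianIntegrals

section Calculus

variable {E F : Type*} [NormedAddCommGroup E] [NormedAddCommGroup F]

lemma fderiv_comp_add_smul [NormedSpace ℝ E] [NormedSpace ℝ F] (q : E → F) (z : E) (κ : ℝ)
    (v : E) :
    fderiv ℝ (fun v => q (z + κ • v)) v = κ • fderiv ℝ q (z + κ • v) := by
  rw [fderiv_comp_smul (f := fun v => q (z + v)), fderiv_comp_add_left]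

lemma norm_fderiv_rotation_le [NormedSpace ℝ E] [NormedSpace ℝ F] {q : E → F} {C : ℝ}
    (hC : ∀ x, ‖fderiv ℝ q x‖ ≤ C) (θ : ℝ) (x w v : E) :
    ‖fderiv ℝ q x (-sin θ • w + cos θ • v)‖ ≤ C * (‖w‖ + ‖v‖) := by
  refine (fderiv ℝ q x).le_of_opNorm_le_of_le (hC x) ((norm_add_le _ _).trans ?_)
  simp only [norm_smul, norm_neg, norm_eq_abs]
  gcongr
  exacts [mul_le_of_le_one_left (norm_nonneg _) (abs_sin_le_one θ),
    mul_le_of_le_one_left (norm_nonneg _) (abs_cos_le_one θ)]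

lemma continuous_fderiv_rotation [NormedSpace ℝ E] [NormedSpace ℝ F] {q : E → F}
    (hq : Continuous (fderiv ℝ q)) (θ : ℝ) :
    Continuous fun z : E × E =>
      fderiv ℝ q (cos θ • z.1 + sin θ • z.2) (-sin θ • z.1 + cos θ • z.2) :=
  (hq.comp (by fun_prop)).clm_apply (by fun_prop)

variable [InnerProductSpace ℝ E]

section Gradient

variable [CompleteSpace E]

lemma norm_gradient (f : E → ℝ) (x : E) : ‖∇ f x‖ = ‖fderiv ℝ f x‖ := by
  rw [← toDual_gradient, LinearIsometryEquiv.norm_map]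

lemma gradient_comp_add_smul (f : E → ℝ) (z : E) (κ : ℝ) (v : E) :
    ∇ (fun v => f (z + κ • v)) v = κ • ∇ f (z + κ • v) := by
  simp [gradient, fderiv_comp_add_smul]

end Gradient

variable [FiniteDimensional ℝ E]

lemma laplacian_eq_sum_fderiv_fderiv [NormedSpace ℝ F] {ι : Type*} [Fintype ι]
    (b : OrthonormalBasis ι ℝ E) (f : E → F) (x : E) :
    Δ f x = ∑ i, fderiv ℝ (fderiv ℝ f) x (b i) (b i) := by
  simp [InnerProductSpace.laplacian_eq_iteratedFDeriv_orthonormalBasis f b,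
    iteratedFDeriv_two_apply]

lemma laplacian_comp_add_smul [NormedSpace ℝ F] (f : E → F) (z : E) (κ : ℝ) (v : E) :
    Δ (fun v => f (z + κ • v)) v = κ ^ 2 • Δ f (z + κ • v) := by
  have h : fderiv ℝ (fun v => f (z + κ • v)) = κ • fun v => fderiv ℝ f (z + κ • v) :=
    funext (fderiv_comp_add_smul f z κ)
  have h' : fderiv ℝ (κ • fun v => fderiv ℝ f (z + κ • v)) v =
      (κ ^ 2) • fderiv ℝ (fderiv ℝ f) (z + κ • v) := by
    rw [fderiv_const_smul_field (f := fun v => fderiv ℝ f (z + κ • v)), Pi.smul_apply,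
      fderiv_comp_add_smul, smul_smul, pow_two]
  simp only [laplacian_eq_sum_fderiv_fderiv (stdOrthonormalBasis ℝ E), h, h',
    smul_apply, Finset.smul_sum]

lemma mul_laplacian_log {f : E → ℝ} (hf : ContDiff ℝ 2 f) (hpos : ∀ x, 0 < f x) (x : E) :
    f x * Δ (fun y => log (f y)) x = Δ f x - ‖∇ f x‖ ^ 2 / f x := by
  have hd := hf.differentiable two_ne_zero
  have hd' : Differentiable ℝ (fderiv ℝ f) :=
    (hf.fderiv_right (m := 1) (by norm_num)).differentiable one_ne_zero
  have hlog : fderiv ℝ (fun y => log (f y)) = fun y => (f y)⁻¹ • fderiv ℝ f y :=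
    funext fun y => ((hd y).hasFDerivAt.log (hpos y).ne').fderiv
  have hlog' : fderiv ℝ (fun y => (f y)⁻¹ • fderiv ℝ f y) x = _ :=
    (((hasDerivAt_inv (hpos x).ne').comp_hasFDerivAt x (hd x).hasFDerivAt).fun_smul
      (hd' x).hasFDerivAt).fderiv
  set b := stdOrthonormalBasis ℝ E
  have hgrad : ‖∇ f x‖ ^ 2 = ∑ i, fderiv ℝ f x (b i) ^ 2 := by
    simp only [← b.sum_sq_norm_inner_left (∇ f x), inner_gradient_left, norm_eq_abs, sq_abs]
  simp only [laplacian_eq_sum_fderiv_fderiv b, hlog, hlog', hgrad, Finset.mul_sum, Finset.sum_div,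
    ← Finset.sum_sub_distrib]
  refine Finset.sum_congr rfl fun i _ => ?_
  have := (hpos x).ne'
  simp only [Function.comp_apply, neg_smul, add_apply, smul_apply,
    ContinuousLinearMap.smulRight_apply, neg_apply, smul_eq_mul]
  field_simp
  ring

end Calculus

section BoundedFunctions

/-- A bounded continuous function, unbundled: it is applied to derivatives and gradients of
given functions. -/
structure IsBoundedContinuous {X F : Type*} [TopologicalSpace X] [NormedAddCommGroup F]
    (q : X → F) : Prop where
  continuous : Continuous q
  bounded : ∃ C, ∀ x, ‖q x‖ ≤ C

namespace IsBoundedContinuous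

variable {X Y F G : Type*} [TopologicalSpace X] [TopologicalSpace Y] [NormedAddCommGroup F]
  [NormedAddCommGroup G] {q : X → F}

lemma comp (hq : IsBoundedContinuous q) {φ : Y → X} (hφ : Continuous φ) :
    IsBoundedContinuous (q ∘ φ) :=
  ⟨hq.continuous.comp hφ, hq.bounded.imp fun _ hC y => hC (φ y)⟩

lemma continuous_comp [ProperSpace F] {φ : F → G} (hφ : Continuous φ)
    (hq : IsBoundedContinuous q) : IsBoundedContinuous (φ ∘ q) := by
  obtain ⟨C, hC⟩ := hq.bounded
  obtain ⟨K, hK⟩ := (isCompact_closedBall (0 : F) C).exists_bound_of_continuousOn hφ.continuousOn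
  exact ⟨hφ.comp hq.continuous, K, fun x => hK _ (mem_closedBall_zero_iff.2 (hC x))⟩

lemma const_smul [NormedSpace ℝ F] (hq : IsBoundedContinuous q) (c : ℝ) :
    IsBoundedContinuous fun x => c • q x := by
  obtain ⟨C, hC⟩ := hq.bounded
  exact ⟨hq.continuous.const_smul c, ‖c‖ * C, fun x => by rw [norm_smul]; gcongr; exact hC x⟩

lemma smul [NormedSpace ℝ F] {p : X → ℝ} (hp : IsBoundedContinuous p)
    (hq : IsBoundedContinuous q) : IsBoundedContinuous fun x => p x • q x := by
  obtain ⟨C, hC⟩ := hp.bounded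
  obtain ⟨K, hK⟩ := hq.bounded
  exact ⟨hp.continuous.smul hq.continuous, C * K, fun x => by
    rw [norm_smul]
    exact mul_le_mul (hC x) (hK x) (norm_nonneg _) ((norm_nonneg _).trans (hC x))⟩

lemma clm_apply [NormedSpace ℝ F] [NormedSpace ℝ G] {Λ : X → F →L[ℝ] G}
    (hΛ : IsBoundedContinuous Λ) (hq : IsBoundedContinuous q) :
    IsBoundedContinuous fun x => Λ x (q x) := by
  obtain ⟨C, hC⟩ := hΛ.bounded
  obtain ⟨K, hK⟩ := hq.bounded
  exact ⟨hΛ.continuous.clm_apply hq.continuous, C * K, fun x =>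
    (Λ x).le_of_opNorm_le_of_le (hC x) (hK x)⟩

lemma comp_of_continuousOn_Ici {p : X → ℝ} {a : ℝ} (hp : IsBoundedContinuous p)
    (ha : ∀ x, a ≤ p x) {φ : ℝ → ℝ} (hφ : ContinuousOn φ (Set.Ici a)) :
    IsBoundedContinuous fun x => φ (p x) := by
  have hφ' : Continuous fun y => φ (max a y) :=
    hφ.comp_continuous (by fun_prop) fun y => le_max_left a y
  simpa [Function.comp_def, max_eq_right (ha _)] using hp.continuous_comp hφ'

lemma norm_sq_div [ProperSpace F] (hq : IsBoundedContinuous q) {p : X → ℝ} {a : ℝ}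
    (hp : IsBoundedContinuous p) (ha : 0 < a) (hap : ∀ x, a ≤ p x) :
    IsBoundedContinuous fun x => ‖q x‖ ^ 2 / p x := by
  have hinv := hp.comp_of_continuousOn_Ici hap (φ := (·⁻¹))
    (continuousOn_inv₀.mono fun y hy => (ha.trans_le hy).ne')
  have hsq := hq.continuous_comp (φ := (‖·‖ ^ 2)) (by fun_prop)
  simpa [div_eq_mul_inv] using hsq.smul hinv

end IsBoundedContinuous

/-- A bounded `C¹` function with bounded derivative. -/
structure IsBoundedC1 {E F : Type*} [NormedAddCommGroup E] [NormedSpace ℝ E]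
    [NormedAddCommGroup F] [NormedSpace ℝ F] (q : E → F) : Prop where
  differentiable : Differentiable ℝ q
  isBoundedContinuous : IsBoundedContinuous q
  isBoundedContinuous_fderiv : IsBoundedContinuous (fderiv ℝ q)

namespace IsBoundedC1

variable {E F : Type*} [NormedAddCommGroup E] [NormedAddCommGroup F] [NormedSpace ℝ F]

lemma of_contDiff_one [NormedSpace ℝ E] {q : E → F} {C C₁ : ℝ} (hq : ContDiff ℝ 1 q)
    (hC : ∀ x, ‖q x‖ ≤ C) (hC₁ : ∀ x, ‖fderiv ℝ q x‖ ≤ C₁) : IsBoundedC1 q :=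
  ⟨hq.differentiable one_ne_zero, ⟨hq.continuous, C, hC⟩,
    hq.continuous_fderiv one_ne_zero, C₁, hC₁⟩

lemma comp_add_smul [NormedSpace ℝ E] {q : E → F} (hq : IsBoundedC1 q) (z : E) (κ : ℝ) :
    IsBoundedC1 fun v => q (z + κ • v) where
  differentiable := hq.differentiable.comp (by fun_prop)
  isBoundedContinuous := hq.isBoundedContinuous.comp (by fun_prop)
  isBoundedContinuous_fderiv := by
    simp_rw [funext (fderiv_comp_add_smul q z κ)]
    exact (hq.isBoundedContinuous_fderiv.comp (by fun_prop)).const_smul κ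

lemma fderiv_comp_add_smul [NormedSpace ℝ E] {q : E → F} (hq : IsBoundedC1 (fderiv ℝ q)) (z : E)
    (κ : ℝ) :
    IsBoundedC1 (fderiv ℝ fun v => q (z + κ • v)) := by
  rw [funext (_root_.fderiv_comp_add_smul q z κ)]
  have h := hq.comp_add_smul z κ
  refine ⟨h.differentiable.const_smul κ, h.isBoundedContinuous.const_smul κ, ?_⟩
  rw [funext fun v => fderiv_fun_const_smul (h.differentiable v) κ]
  exact h.isBoundedContinuous_fderiv.const_smul κ

lemma add_const [NormedSpace ℝ E] {q : E → F} (hq : IsBoundedC1 q) (y : F) :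
    IsBoundedC1 fun x => q x + y where
  differentiable := hq.differentiable.add_const y
  isBoundedContinuous := by
    obtain ⟨C, hC⟩ := hq.isBoundedContinuous.bounded
    exact ⟨hq.isBoundedContinuous.continuous.add continuous_const, C + ‖y‖,
      fun x => (norm_add_le _ _).trans (by gcongr; exact hC x)⟩
  isBoundedContinuous_fderiv := by
    rw [funext fun x => fderiv_add_const (𝕜 := ℝ) (f := q) (x := x) y]
    exact hq.isBoundedContinuous_fderiv

lemma isBoundedContinuous_gradient [InnerProductSpace ℝ E] [CompleteSpace E] {f : E → ℝ}
    (hf : IsBoundedC1 f) : IsBoundedContinuous (∇ f) := by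
  obtain ⟨C, hC⟩ := hf.isBoundedContinuous_fderiv.bounded
  exact ⟨(LinearIsometryEquiv.continuous _).comp hf.isBoundedContinuous_fderiv.continuous, C,
    fun x => (norm_gradient f x).trans_le (hC x)⟩

lemma isBoundedContinuous_laplacian [InnerProductSpace ℝ E] [FiniteDimensional ℝ E] {f : E → ℝ}
    (hf : IsBoundedC1 (fderiv ℝ f)) : IsBoundedContinuous (Δ f) := by
  rw [funext (laplacian_eq_sum_fderiv_fderiv (stdOrthonormalBasis ℝ E) f)]
  exact hf.isBoundedContinuous_fderiv.continuous_comp (φ := fun Λ : E →L[ℝ] E →L[ℝ] ℝ =>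
    ∑ i, Λ (stdOrthonormalBasis ℝ E i) (stdOrthonormalBasis ℝ E i)) (by fun_prop)

lemma log [NormedSpace ℝ E] {f : E → ℝ} {a : ℝ} (hf : IsBoundedC1 f) (ha : 0 < a)
    (haf : ∀ x, a ≤ f x) :
    IsBoundedC1 fun x => Real.log (f x) where
  differentiable := hf.differentiable.log fun x => (ha.trans_le (haf x)).ne'
  isBoundedContinuous := hf.isBoundedContinuous.comp_of_continuousOn_Ici haf
    (continuousOn_log.mono fun y hy => (ha.trans_le hy).ne')
  isBoundedContinuous_fderiv := by
    have h (x : E) : fderiv ℝ (fun x => Real.log (f x)) x = (f x)⁻¹ • fderiv ℝ f x :=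
      fderiv.log (hf.differentiable x) (ha.trans_le (haf x)).ne'
    rw [funext h]
    exact (hf.isBoundedContinuous.comp_of_continuousOn_Ici haf (φ := (·⁻¹))
      (continuousOn_inv₀.mono fun y hy => (ha.trans_le hy).ne')).smul hf.isBoundedContinuous_fderiv

end IsBoundedC1

end BoundedFunctions

section GaussianAverages

lemma IsBoundedContinuous.integrable {X F : Type*} [TopologicalSpace X]
    [SecondCountableTopology X] [MeasurableSpace X] [OpensMeasurableSpace X]
    [NormedAddCommGroup F] {q : X → F} (hq : IsBoundedContinuous q) (μ : Measure X)
    [IsFiniteMeasure μ] : Integrable q μ := by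
  obtain ⟨C, hC⟩ := hq.bounded
  exact .of_bound hq.continuous.aestronglyMeasurable C (.of_forall hC)

variable {E F : Type*} [NormedAddCommGroup E] [InnerProductSpace ℝ E] [FiniteDimensional ℝ E]
  [MeasurableSpace E] [BorelSpace E] [NormedAddCommGroup F] [NormedSpace ℝ F]

/-- The average of `q` over a Gaussian of standard deviation `κ` centred at `c • w`. The scales
`(cos θ, sin θ)` give the Ornstein–Uhlenbeck semigroup at time `-log (cos θ)` (Mehler's formula),
and `(1, √(2t))` the heat semigroup at time `t`. -/
noncomputable def gaussAvg (c κ : ℝ) (q : E → F) (w : E) : F :=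
  ∫ v, q (c • w + κ • v) ∂(stdGaussian E)

variable {q : E → F} {f : E → ℝ} (c κ : ℝ)

lemma le_gaussAvg {a : ℝ} (hf : IsBoundedContinuous f) (ha : ∀ x, a ≤ f x) (w : E) :
    a ≤ gaussAvg c κ f w := by
  calc a = ∫ _, a ∂(stdGaussian E) := by simp
    _ ≤ gaussAvg c κ f w :=
      integral_mono (integrable_const a) ((hf.comp (by fun_prop)).integrable _) fun _ => ha _

lemma norm_gaussAvg_le {C : ℝ} (hC : ∀ x, ‖q x‖ ≤ C) (w : E) : ‖gaussAvg c κ q w‖ ≤ C := by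
  simpa [gaussAvg] using norm_integral_le_of_norm_le_const (μ := stdGaussian E)
    (.of_forall fun v => hC (c • w + κ • v))

lemma IsBoundedContinuous.gaussAvg (hq : IsBoundedContinuous q) :
    IsBoundedContinuous (gaussAvg c κ q) := by
  obtain ⟨C, hC⟩ := hq.bounded
  have hc := hq.continuous
  exact ⟨continuous_of_dominated (bound := fun _ => C)
    (fun w => ((hq.comp (by fun_prop)).integrable (stdGaussian E)).1)
    (fun w => .of_forall fun v => hC _) (integrable_const C) (.of_forall fun v => by fun_prop),
    C, norm_gaussAvg_le c κ hC⟩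

lemma map_gaussAvg {G : Type*} [NormedAddCommGroup G] [NormedSpace ℝ G] [CompleteSpace F]
    [CompleteSpace G] (L : F →L[ℝ] G) (hq : IsBoundedContinuous q) (w : E) :
    L (gaussAvg c κ q w) = gaussAvg c κ (fun x => L (q x)) w :=
  (L.integral_comp_comm ((hq.comp (φ := fun v => c • w + κ • v) (by fun_prop)).integrable _)).symm

lemma hasFDerivAt_gaussAvg (hq : IsBoundedC1 q) (w : E) :
    HasFDerivAt (gaussAvg c κ q) (c • gaussAvg c κ (fderiv ℝ q) w) w := by
  obtain ⟨C, hC⟩ := hq.isBoundedContinuous_fderiv.bounded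
  have hmeas (x : E) : AEStronglyMeasurable (fun v => q (c • x + κ • v)) (stdGaussian E) :=
    ((hq.isBoundedContinuous.comp (by fun_prop)).integrable (stdGaussian E)).1
  have hderiv (v x : E) : HasFDerivAt (fun x => q (c • x + κ • v))
      (c • fderiv ℝ q (c • x + κ • v)) x := by
    simpa [Function.comp_def] using (hq.differentiable (c • x + κ • v)).hasFDerivAt.comp x
      (((hasFDerivAt_id x).const_smul c).add_const (κ • v))
  have h := hasFDerivAt_integral_of_dominated_of_fderiv_le (μ := stdGaussian E) (x₀ := w)
    (bound := fun _ => ‖c‖ * C) Filter.univ_mem (.of_forall hmeas)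
    ((hq.isBoundedContinuous.comp (by fun_prop)).integrable _)
    (((hq.isBoundedContinuous_fderiv.comp (by fun_prop)).const_smul c).integrable _).1
    (.of_forall fun v x _ => by rw [norm_smul]; gcongr; exact hC _) (integrable_const _)
    (.of_forall fun v x _ => hderiv v x)
  rwa [integral_smul] at h

lemma fderiv_gaussAvg (hq : IsBoundedC1 q) :
    fderiv ℝ (gaussAvg c κ q) = fun w => c • gaussAvg c κ (fderiv ℝ q) w :=
  funext fun w => (hasFDerivAt_gaussAvg c κ hq w).fderiv

lemma IsBoundedC1.gaussAvg (hq : IsBoundedC1 q) : IsBoundedC1 (gaussAvg c κ q) where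
  differentiable w := (hasFDerivAt_gaussAvg c κ hq w).differentiableAt
  isBoundedContinuous := hq.isBoundedContinuous.gaussAvg c κ
  isBoundedContinuous_fderiv := by
    rw [fderiv_gaussAvg c κ hq]
    exact (hq.isBoundedContinuous_fderiv.gaussAvg c κ).const_smul c

lemma gradient_gaussAvg (hf : IsBoundedC1 f) (w : E) :
    ∇ (gaussAvg c κ f) w = c • gaussAvg c κ (∇ f) w := by
  rw [gradient, fderiv_gaussAvg c κ hf, map_smul]
  congr 1
  exact ((InnerProductSpace.toDual ℝ E).symm.toLinearIsometry.integral_comp_comm _).symm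

lemma laplacian_gaussAvg (hf : IsBoundedC1 f) (hf' : IsBoundedC1 (fderiv ℝ f)) (w : E) :
    Δ (gaussAvg c κ f) w = c ^ 2 * gaussAvg c κ (Δ f) w := by
  have hd : fderiv ℝ (fderiv ℝ (gaussAvg c κ f)) w =
      c ^ 2 • gaussAvg c κ (fderiv ℝ (fderiv ℝ f)) w := by
    rw [fderiv_gaussAvg c κ hf, pow_two, ← smul_smul]
    exact ((hasFDerivAt_gaussAvg c κ hf' w).const_smul c).fderiv
  set b := stdOrthonormalBasis ℝ E
  have htr := map_gaussAvg c κ (∑ i, .apply ℝ ℝ (b i) ∘L .apply ℝ (E →L[ℝ] ℝ) (b i))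
    hf'.isBoundedContinuous_fderiv w
  simp only [sum_apply, ContinuousLinearMap.comp_apply, ContinuousLinearMap.apply_apply] at htr
  rw [funext (laplacian_eq_sum_fderiv_fderiv b f), ← htr, laplacian_eq_sum_fderiv_fderiv b, hd]
  simp only [smul_apply, smul_eq_mul, Finset.mul_sum]

lemma integral_gaussAvg_cos_sin [CompleteSpace F] (hq : IsBoundedContinuous q) (θ : ℝ) :
    ∫ w, gaussAvg (cos θ) (sin θ) q w ∂(stdGaussian E) = ∫ w, q w ∂(stdGaussian E) := by
  have h := integral_integral_rotation_stdGaussian (h := fun w _ : E => q w)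
    ((hq.comp continuous_fst).integrable _) θ
  simpa [gaussAvg] using h

end GaussianAverages

section FisherInformation

lemma IsBoundedContinuous.integrable_of_norm_le_mul_norm_pow {V F G : Type*}
    [NormedAddCommGroup V] [NormedSpace ℝ V] [CompleteSpace V] [SecondCountableTopology V]
    [MeasurableSpace V] [BorelSpace V] [NormedAddCommGroup F] [NormedAddCommGroup G]
    {μ : Measure V} [IsGaussian μ] {q : V → F} (hq : IsBoundedContinuous q) {p : V → G}
    (hp : Continuous p) {k : ℕ} (h : ∀ w, ‖p w‖ ≤ ‖q w‖ * ‖w‖ ^ k) : Integrable p μ := by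
  obtain ⟨C, hC⟩ := hq.bounded
  have hk : Integrable (fun w : V => ‖w‖ ^ k) μ :=
    (IsGaussian.memLp_id μ k (by simp)).integrable_norm_pow'
  exact (hk.const_mul C).mono' hp.aestronglyMeasurable
    (.of_forall fun w => (h w).trans (by gcongr; exact hC w))

variable {E : Type*} [NormedAddCommGroup E] [InnerProductSpace ℝ E] [FiniteDimensional ℝ E]
  [MeasurableSpace E] [BorelSpace E] {f : E → ℝ}

lemma IsBoundedC1.integrable_fderiv_apply_self (hf : IsBoundedC1 f) :
    Integrable (fun w => fderiv ℝ f w w) (stdGaussian E) :=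
  hf.isBoundedContinuous_fderiv.integrable_of_norm_le_mul_norm_pow (k := 1)
    (hf.isBoundedContinuous_fderiv.continuous.clm_apply continuous_id)
    fun w => by simpa using (fderiv ℝ f w).le_opNorm w

lemma IsBoundedContinuous.integrable_mul_norm_sq (hf : IsBoundedContinuous f) :
    Integrable (fun w => f w * ‖w‖ ^ 2) (stdGaussian E) :=
  hf.integrable_of_norm_le_mul_norm_pow (k := 2) (hf.continuous.mul (by fun_prop))
    fun w => by simp

lemma IsBoundedC1.integral_inner_mul_stdGaussian (hf : IsBoundedC1 f) (e : E) :
    ∫ w, ⟪w, e⟫ * f w ∂(stdGaussian E) = ∫ w, fderiv ℝ f w e ∂(stdGaussian E) := by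
  refine _root_.integral_inner_mul_stdGaussian e hf.differentiable
    (hf.isBoundedContinuous.integrable _)
    ((hf.isBoundedContinuous_fderiv.integrable _).apply_continuousLinearMap e)
    ((hf.isBoundedContinuous.const_smul ‖e‖).integrable_of_norm_le_mul_norm_pow (k := 1)
      (.mul (by fun_prop) hf.isBoundedContinuous.continuous) fun w => ?_)
  simp only [norm_mul, norm_smul, norm_norm, pow_one]
  calc ‖⟪w, e⟫‖ * ‖f w‖ ≤ ‖w‖ * ‖e‖ * ‖f w‖ := by gcongr; exact norm_inner_le_norm w e
    _ = ‖e‖ * ‖f w‖ * ‖w‖ := by ring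

lemma integral_fderiv_apply_self_stdGaussian (hf : IsBoundedC1 (fderiv ℝ f)) :
    ∫ w, fderiv ℝ f w w ∂(stdGaussian E) = ∫ w, Δ f w ∂(stdGaussian E) := by
  simp only [laplacian_eq_sum_fderiv_fderiv (stdOrthonormalBasis ℝ E)]
  refine integral_apply_self_stdGaussian _ hf.differentiable
    (hf.isBoundedContinuous.integrable _) (fun i => ?_) ?_
  · exact (hf.isBoundedContinuous_fderiv.continuous_comp (φ := fun Λ : E →L[ℝ] E →L[ℝ] ℝ =>
      Λ (stdOrthonormalBasis ℝ E i) (stdOrthonormalBasis ℝ E i)) (by fun_prop)).integrable _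
  · exact hf.isBoundedContinuous.integrable_of_norm_le_mul_norm_pow (k := 1)
      (continuous_norm.mul hf.isBoundedContinuous.continuous.norm) fun w => by simp [mul_comm]

lemma integral_mul_norm_sq_stdGaussian (hf : IsBoundedC1 f) (hf' : IsBoundedC1 (fderiv ℝ f)) :
    ∫ w, f w * ‖w‖ ^ 2 ∂(stdGaussian E) =
      finrank ℝ E * ∫ w, f w ∂(stdGaussian E) + ∫ w, Δ f w ∂(stdGaussian E) := by
  set b := stdOrthonormalBasis ℝ E
  obtain ⟨J, hJ, hJ'⟩ : ∃ J : E →L[ℝ] E →L[ℝ] ℝ, (∀ w u, J w u = ⟪w, u⟫) ∧ ∀ w, ‖J w‖ = ‖w‖ :=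
    ⟨innerSL ℝ, fun _ _ => rfl, innerSL_apply_norm ℝ⟩
  have hΛ (w : E) := (hf.differentiable w).hasFDerivAt.fun_smul J.hasFDerivAt
  have hΛ' (w u : E) : fderiv ℝ (fun w => f w • J w) w u u =
      fderiv ℝ f w u * ⟪w, u⟫ + f w * ‖u‖ ^ 2 := by
    rw [(hΛ w).fderiv]
    simp [hJ, add_comm]
  have hsum (w : E) : ∑ i, fderiv ℝ (fun w => f w • J w) w (b i) (b i) =
      fderiv ℝ f w w + finrank ℝ E * f w := by
    conv_rhs => enter [1, 2]; rw [← b.sum_repr' w]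
    simp [hΛ', Finset.sum_add_distrib, real_inner_comm, mul_comm]
  have hc := hf.isBoundedContinuous.continuous
  have hdiv := integral_apply_self_stdGaussian b (fun w => (hΛ w).differentiableAt)
    (hf.isBoundedContinuous.integrable_of_norm_le_mul_norm_pow (k := 1) (by fun_prop)
      fun w => by simp [norm_smul, hJ'])
    (fun i => ?_)
    (hf.isBoundedContinuous.integrable_of_norm_le_mul_norm_pow (k := 2) (by fun_prop)
      fun w => le_of_eq (by simp [norm_smul, hJ']; ring))
  · simp only [hsum] at hdiv
    rw [integral_add hf.integrable_fderiv_apply_self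
      ((hf.isBoundedContinuous.integrable _).const_mul _), integral_const_mul,
      integral_fderiv_apply_self_stdGaussian hf', add_comm] at hdiv
    simpa [hJ] using hdiv
  · simp only [hΛ', b.norm_eq_one, one_pow, mul_one]
    refine .add ?_ (hf.isBoundedContinuous.integrable _)
    refine hf.isBoundedContinuous_fderiv.integrable_of_norm_le_mul_norm_pow (k := 1)
      ((hf.isBoundedContinuous_fderiv.continuous.clm_apply continuous_const).mul (by fun_prop))
      fun w => ?_
    simpa using mul_le_mul ((fderiv ℝ f w).le_opNorm (b i)) (abs_real_inner_le_norm w (b i))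
      (abs_nonneg _) (by positivity)

lemma norm_integral_gradient_sq_div_le {a : ℝ} (hf : IsBoundedC1 f)
    (hf' : IsBoundedC1 (fderiv ℝ f)) (ha : 0 < a) (haf : ∀ x, a ≤ f x) (α : ℝ) :
    ‖∫ w, ∇ f w ∂(stdGaussian E)‖ ^ 2 / ∫ w, f w ∂(stdGaussian E) ≤
      α ^ 2 * ∫ w, ‖∇ f w‖ ^ 2 / f w ∂(stdGaussian E) +
        (1 - α ^ 2) * ∫ w, Δ f w ∂(stdGaussian E) +
        (1 - α) ^ 2 * (finrank ℝ E * ∫ w, f w ∂(stdGaussian E)) := by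
  have hpos (w : E) : 0 < f w := ha.trans_le (haf w)
  have hb := hf.isBoundedContinuous
  have hi := hb.integrable (stdGaussian E)
  have hgrad := hf.isBoundedContinuous_gradient.integrable (stdGaussian E)
  have hfw : Integrable (fun w => f w • w) (stdGaussian E) :=
    hb.integrable_of_norm_le_mul_norm_pow (k := 1) (hb.continuous.smul continuous_id)
      fun w => by simp [norm_smul]
  -- Cauchy–Schwarz is applied to `α ∇f + (1 - α) f w`, which by Stein's lemma has the same
  -- integral as `∇f` for every `α`.
  have hX : ∫ w, (α • ∇ f w + (1 - α) • f w • w) ∂(stdGaussian E) =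
      ∫ w, ∇ f w ∂(stdGaussian E) := by
    rw [integral_add (hgrad.fun_smul α) (hfw.fun_smul (1 - α)), integral_smul, integral_smul,
      integral_smul_stdGaussian hf.differentiable hi hgrad hfw, ← add_smul,
      add_sub_cancel, one_smul]
  have hsq (w : E) : ‖α • ∇ f w + (1 - α) • f w • w‖ ^ 2 / f w =
      α ^ 2 * (‖∇ f w‖ ^ 2 / f w) + 2 * α * (1 - α) * fderiv ℝ f w w +
        (1 - α) ^ 2 * (f w * ‖w‖ ^ 2) := by
    have := (hpos w).ne'
    rw [norm_add_sq_real]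
    simp only [norm_smul, real_inner_smul_left, real_inner_smul_right, inner_gradient_left,
      mul_pow, norm_eq_abs, sq_abs]
    field_simp
  have h1 := ((hf.isBoundedContinuous_gradient.norm_sq_div hb ha haf).integrable
    (stdGaussian E)).const_mul (α ^ 2)
  have h2 := hf.integrable_fderiv_apply_self.const_mul (2 * α * (1 - α))
  have h3 := hb.integrable_mul_norm_sq.const_mul ((1 - α) ^ 2)
  have hCS := norm_integral_sq_div_le hpos hi (X := fun w => α • ∇ f w + (1 - α) • f w • w)
    (by simpa only [hsq] using (h1.fun_add h2).fun_add h3)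
  simp only [hX, hsq] at hCS
  rw [integral_add (h1.fun_add h2) h3, integral_add h1 h2, integral_const_mul, integral_const_mul,
    integral_const_mul, integral_fderiv_apply_self_stdGaussian hf',
    integral_mul_norm_sq_stdGaussian hf hf'] at hCS
  linarith

lemma sq_mul_norm_gaussAvg_gradient_sq_div_le {a : ℝ} (hf : IsBoundedC1 f)
    (hf' : IsBoundedC1 (fderiv ℝ f)) (ha : 0 < a) (haf : ∀ x, a ≤ f x) (c κ α : ℝ) (w : E) :
    κ ^ 2 * (‖gaussAvg c κ (∇ f) w‖ ^ 2 / gaussAvg c κ f w) ≤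
      κ ^ 2 * (α ^ 2 * gaussAvg c κ (fun x => ‖∇ f x‖ ^ 2 / f x) w +
        (1 - α ^ 2) * gaussAvg c κ (Δ f) w) +
        (1 - α) ^ 2 * (finrank ℝ E * gaussAvg c κ f w) := by
  have h := norm_integral_gradient_sq_div_le (hf.comp_add_smul (c • w) κ)
    (hf'.fderiv_comp_add_smul (c • w) κ) ha (fun x => haf _) α
  simp only [gradient_comp_add_smul, laplacian_comp_add_smul, norm_smul, mul_pow, norm_eq_abs,
    sq_abs, mul_div_assoc, integral_smul, integral_const_mul, smul_eq_mul] at h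
  unfold gaussAvg
  linarith

lemma sq_sin_mul_integral_norm_gaussAvg_gradient_sq_div_le {a : ℝ} (hf : IsBoundedC1 f)
    (hf' : IsBoundedC1 (fderiv ℝ f)) (ha : 0 < a) (haf : ∀ x, a ≤ f x) (θ α : ℝ) :
    sin θ ^ 2 * ∫ w, ‖gaussAvg (cos θ) (sin θ) (∇ f) w‖ ^ 2 / gaussAvg (cos θ) (sin θ) f w
        ∂(stdGaussian E) ≤
      sin θ ^ 2 * (α ^ 2 * ∫ w, ‖∇ f w‖ ^ 2 / f w ∂(stdGaussian E) +
        (1 - α ^ 2) * ∫ w, Δ f w ∂(stdGaussian E)) +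
        (1 - α) ^ 2 * (finrank ℝ E * ∫ w, f w ∂(stdGaussian E)) := by
  have hb := hf.isBoundedContinuous
  have hgrad := hf.isBoundedContinuous_gradient
  have hA := hgrad.norm_sq_div hb ha haf
  have hD := hf'.isBoundedContinuous_laplacian
  have hi {q : E → ℝ} (hq : IsBoundedContinuous q) (r : ℝ) :
      Integrable (fun w => r * gaussAvg (cos θ) (sin θ) q w) (stdGaussian E) :=
    ((hq.gaussAvg _ _).integrable _).const_mul r
  have hAD := ((hi hA (α ^ 2)).fun_add (hi hD (1 - α ^ 2))).const_mul (sin θ ^ 2)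
  have hm := (hi hb (finrank ℝ E)).const_mul ((1 - α) ^ 2)
  calc
    _ = ∫ w, sin θ ^ 2 * (‖gaussAvg (cos θ) (sin θ) (∇ f) w‖ ^ 2 /
          gaussAvg (cos θ) (sin θ) f w) ∂(stdGaussian E) := (integral_const_mul _ _).symm
    _ ≤ _ := integral_mono ((((hgrad.gaussAvg _ _).norm_sq_div (hb.gaussAvg _ _) ha
        (le_gaussAvg _ _ hb haf)).integrable _).const_mul _) (hAD.fun_add hm)
        (sq_mul_norm_gaussAvg_gradient_sq_div_le hf hf' ha haf _ _ α)
    _ = _ := by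
      rw [integral_add hAD hm, integral_const_mul, integral_add (hi hA _) (hi hD _)]
      simp only [integral_const_mul, integral_gaussAvg_cos_sin hA, integral_gaussAvg_cos_sin hD,
        integral_gaussAvg_cos_sin hb]

end FisherInformation

section DeBruijn

variable {E : Type*} [NormedAddCommGroup E] [InnerProductSpace ℝ E] [FiniteDimensional ℝ E]
  [MeasurableSpace E] [BorelSpace E] {f ψ : E → ℝ}

lemma IsBoundedC1.integrable_mul_fderiv_fst_apply_snd {p : E × E → ℝ} (hf : IsBoundedC1 f)
    (hp : IsBoundedContinuous p) :
    Integrable (fun z : E × E => p z * fderiv ℝ f z.1 z.2)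
      ((stdGaussian E).prod (stdGaussian E)) := by
  have hf' := hf.isBoundedContinuous_fderiv.comp (continuous_fst (X := E) (Y := E))
  refine (hp.smul hf').integrable_of_norm_le_mul_norm_pow (k := 1)
    (hp.continuous.mul (hf'.continuous.clm_apply continuous_snd)) fun z => ?_
  simp only [Function.comp_apply, norm_mul, norm_smul, pow_one, mul_assoc]
  gcongr
  exact (fderiv ℝ f z.1).le_opNorm_of_le (norm_snd_le z)

lemma integral_mul_integral_fderiv_rotation_stdGaussian (hψ : IsBoundedC1 ψ) (hf : IsBoundedC1 f)
    (θ : ℝ) :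
    ∫ w, ψ w * ∫ v, fderiv ℝ f (cos θ • w + sin θ • v) (-sin θ • w + cos θ • v) ∂(stdGaussian E)
        ∂(stdGaussian E) =
      -(sin θ * ∫ w, fderiv ℝ ψ w (gaussAvg (cos θ) (sin θ) (∇ f) w) ∂(stdGaussian E)) := by
  have hrot (w v : E) :
      cos θ • (cos θ • w + sin θ • v) + -sin θ • (-sin θ • w + cos θ • v) = w := by
    calc _ = (sin θ ^ 2 + cos θ ^ 2) • w := by module
      _ = w := by rw [sin_sq_add_cos_sq, one_smul]
  have hφ : Continuous fun p : E × E => cos θ • p.1 + -sin θ • p.2 := by fun_prop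
  have hstein (y : E) : ∫ y', ψ (cos θ • y + -sin θ • y') * fderiv ℝ f y y' ∂(stdGaussian E) =
      -sin θ * ∫ y', fderiv ℝ ψ (cos θ • y + -sin θ • y') (∇ f y) ∂(stdGaussian E) := by
    have h := (hψ.comp_add_smul (cos θ • y) (-sin θ)).integral_inner_mul_stdGaussian (∇ f y)
    simp only [fderiv_comp_add_smul, smul_apply, integral_const_mul, real_inner_comm (∇ f y),
      inner_gradient_left, smul_eq_mul] at h
    simpa only [mul_comm] using h
  have hrot₁ := integral_integral_rotation_stdGaussian
    (h := fun y y' => ψ (cos θ • y + -sin θ • y') * fderiv ℝ f y y')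
    (hf.integrable_mul_fderiv_fst_apply_snd (hψ.isBoundedContinuous.comp hφ)) θ
  have hrot₂ := integral_integral_rotation_stdGaussian
    (h := fun y y' => fderiv ℝ ψ (cos θ • y + -sin θ • y') (∇ f y))
    ((hψ.isBoundedContinuous_fderiv.comp hφ).clm_apply
      (hf.isBoundedContinuous_gradient.comp continuous_fst) |>.integrable _) θ
  have hmap (w : E) := map_gaussAvg (cos θ) (sin θ) (fderiv ℝ ψ w)
    hf.isBoundedContinuous_gradient w
  simp only [hrot, hstein, integral_const_mul] at hrot₁ hrot₂
  simp_rw [hmap, gaussAvg]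
  rw [hrot₁, ← hrot₂, neg_mul]

lemma integrable_norm_add_norm_stdGaussian (w : E) :
    Integrable (fun v => ‖w‖ + ‖v‖) (stdGaussian E) :=
  (integrable_const _).add IsGaussian.integrable_id.norm

lemma hasDerivAt_gaussAvg_cos_sin (hf : IsBoundedC1 f) (w : E) (θ : ℝ) :
    HasDerivAt (fun θ => gaussAvg (cos θ) (sin θ) f w)
      (∫ v, fderiv ℝ f (cos θ • w + sin θ • v) (-sin θ • w + cos θ • v) ∂(stdGaussian E)) θ := by
  obtain ⟨C, hC⟩ := hf.isBoundedContinuous_fderiv.bounded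
  have hi (θ : ℝ) : Integrable (fun v => f (cos θ • w + sin θ • v)) (stdGaussian E) :=
    (hf.isBoundedContinuous.comp (by fun_prop)).integrable _
  have hcurve (v : E) (θ : ℝ) : HasDerivAt (fun θ => cos θ • w + sin θ • v)
      (-sin θ • w + cos θ • v) θ :=
    ((hasDerivAt_cos θ).smul_const w).add ((hasDerivAt_sin θ).smul_const v)
  exact (hasDerivAt_integral_of_dominated_loc_of_deriv_le (bound := fun v => C * (‖w‖ + ‖v‖))
    Filter.univ_mem (.of_forall fun θ => (hi θ).1) (hi θ)
    ((continuous_fderiv_rotation hf.isBoundedContinuous_fderiv.continuous θ).comp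
      (.prodMk_right w)).aestronglyMeasurable
    (.of_forall fun v θ _ => norm_fderiv_rotation_le hC θ _ w v)
    ((integrable_norm_add_norm_stdGaussian w).const_mul C)
    (.of_forall fun v θ _ =>
      (hf.differentiable _).hasFDerivAt.comp_hasDerivAt θ (hcurve v θ))).2

lemma hasDerivAt_integral_comp_gaussAvg_cos_sin {a : ℝ} {φ φ' : ℝ → ℝ} (hf : IsBoundedC1 f)
    (haf : ∀ x, a ≤ f x) (hφ : ∀ y, a ≤ y → HasDerivAt φ (φ' y) y)
    (hφ' : ContinuousOn φ' (Set.Ici a)) (θ : ℝ) :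
    HasDerivAt (fun θ => ∫ w, φ (gaussAvg (cos θ) (sin θ) f w) ∂(stdGaussian E))
      (∫ w, φ' (gaussAvg (cos θ) (sin θ) f w) *
        ∫ v, fderiv ℝ f (cos θ • w + sin θ • v) (-sin θ • w + cos θ • v) ∂(stdGaussian E)
          ∂(stdGaussian E)) θ := by
  obtain ⟨b, hb⟩ := hf.isBoundedContinuous.bounded
  obtain ⟨C, hC⟩ := hf.isBoundedContinuous_fderiv.bounded
  obtain ⟨K, hK⟩ := (isCompact_Icc (a := a) (b := b)).exists_bound_of_continuousOn
    (hφ'.mono Set.Icc_subset_Ici_self)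
  have hG (θ : ℝ) := hf.isBoundedContinuous.gaussAvg (cos θ) (sin θ)
  have haG (θ : ℝ) := le_gaussAvg (cos θ) (sin θ) hf.isBoundedContinuous haf
  have hi (θ : ℝ) : Integrable (fun w => φ (gaussAvg (cos θ) (sin θ) f w)) (stdGaussian E) :=
    ((hG θ).comp_of_continuousOn_Ici (haG θ)
      fun y hy => (hφ y hy).continuousAt.continuousWithinAt).integrable _
  have hbound (w : E) (θ : ℝ) : ‖φ' (gaussAvg (cos θ) (sin θ) f w) *
      ∫ v, fderiv ℝ f (cos θ • w + sin θ • v) (-sin θ • w + cos θ • v) ∂(stdGaussian E)‖ ≤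
        K * (C * ∫ v, (‖w‖ + ‖v‖) ∂(stdGaussian E)) := by
    have hGw := hK _ ⟨haG θ w, (le_abs_self _).trans (norm_gaussAvg_le _ _ hb w)⟩
    rw [norm_mul, ← integral_const_mul]
    exact mul_le_mul hGw (norm_integral_le_of_norm_le
      ((integrable_norm_add_norm_stdGaussian w).const_mul C)
      (.of_forall fun v => norm_fderiv_rotation_le hC θ _ w v)) (norm_nonneg _)
      ((norm_nonneg _).trans hGw)
  refine (hasDerivAt_integral_of_dominated_loc_of_deriv_le Filter.univ_mem
    (.of_forall fun θ => (hi θ).1) (hi θ) ?_ (.of_forall fun w θ _ => hbound w θ) ?_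
    (.of_forall fun w θ _ => (hφ _ (haG θ w)).comp θ (hasDerivAt_gaussAvg_cos_sin hf w θ))).2
  · exact ((hG θ).comp_of_continuousOn_Ici (haG θ) hφ').continuous.aestronglyMeasurable.mul
      (continuous_fderiv_rotation hf.isBoundedContinuous_fderiv.continuous
        θ).aestronglyMeasurable.integral_prod_right'
  · have hnorm : Integrable (fun v => ‖v‖) (stdGaussian E) := IsGaussian.integrable_id.norm
    simp only [integral_add (integrable_const _) hnorm, integral_const, probReal_univ, one_smul]
    exact ((hnorm.add (integrable_const _)).const_mul C).const_mul K

lemma hasDerivAt_integral_gaussAvg_mul_log {a : ℝ} (hf : IsBoundedC1 f) (ha : 0 < a)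
    (haf : ∀ x, a ≤ f x) (θ : ℝ) :
    HasDerivAt (fun θ => ∫ w, gaussAvg (cos θ) (sin θ) f w *
        log (gaussAvg (cos θ) (sin θ) f w) ∂(stdGaussian E))
      (-(sin θ * cos θ * ∫ w, ‖gaussAvg (cos θ) (sin θ) (∇ f) w‖ ^ 2 /
        gaussAvg (cos θ) (sin θ) f w ∂(stdGaussian E))) θ := by
  have hpos {y : ℝ} (hy : a ≤ y) : y ≠ 0 := (ha.trans_le hy).ne'
  have h := hasDerivAt_integral_comp_gaussAvg_cos_sin hf haf (φ := fun y => y * log y)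
    (φ' := fun y => log y + 1) (fun y hy => hasDerivAt_mul_log (hpos hy))
    ((continuousOn_log.mono fun y hy => hpos hy).add continuousOn_const) θ
  have hG := le_gaussAvg (cos θ) (sin θ) hf.isBoundedContinuous haf
  have hlog := ((hf.gaussAvg (cos θ) (sin θ)).log ha hG).add_const 1
  have hfisher (w : E) : fderiv ℝ (fun w => log (gaussAvg (cos θ) (sin θ) f w) + 1) w
      (gaussAvg (cos θ) (sin θ) (∇ f) w) =
        cos θ * (‖gaussAvg (cos θ) (sin θ) (∇ f) w‖ ^ 2 / gaussAvg (cos θ) (sin θ) f w) := by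
    rw [fderiv_add_const, fderiv.log ((hf.gaussAvg _ _).differentiable w) (hpos (hG w)),
      smul_apply, ← inner_gradient_left, gradient_gaussAvg _ _ hf, real_inner_smul_left,
      real_inner_self_eq_norm_sq, smul_eq_mul]
    ring
  rw [integral_mul_integral_fderiv_rotation_stdGaussian hlog hf] at h
  simpa only [hfisher, integral_const_mul, mul_assoc] using h

end DeBruijn

section LogSobolev

variable {E : Type*} [NormedAddCommGroup E] [InnerProductSpace ℝ E] [FiniteDimensional ℝ E]
  [MeasurableSpace E] [BorelSpace E] {f : E → ℝ} {a : ℝ}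

lemma integral_mul_log_sub_le_stdGaussian (hf : IsBoundedC1 f) (hf' : IsBoundedC1 (fderiv ℝ f))
    (ha : 0 < a) (haf : ∀ x, a ≤ f x) {s : ℝ} (hs : 0 < s) :
    ∫ w, f w * log (f w) ∂(stdGaussian E) -
        (∫ w, f w ∂(stdGaussian E)) * log (∫ w, f w ∂(stdGaussian E)) ≤
      (s * ∫ w, ‖∇ f w‖ ^ 2 / f w ∂(stdGaussian E) + (1 - s) * ∫ w, Δ f w ∂(stdGaussian E) +
        (s - 1 - log s) * (finrank ℝ E * ∫ w, f w ∂(stdGaussian E))) / 2 := by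
  simpa [gaussAvg] using apply_zero_sub_apply_pi_div_two_le hs
    (hasDerivAt_integral_gaussAvg_mul_log hf ha haf)
    (sq_sin_mul_integral_norm_gaussAvg_gradient_sq_div_le hf hf' ha haf)

lemma integral_mul_laplacian_log_stdGaussian (hf : IsBoundedC1 f) (hf' : IsBoundedC1 (fderiv ℝ f))
    (ha : 0 < a) (haf : ∀ x, a ≤ f x) :
    ∫ w, f w * Δ (fun x => log (f x)) w ∂(stdGaussian E) =
      ∫ w, Δ f w ∂(stdGaussian E) - ∫ w, ‖∇ f w‖ ^ 2 / f w ∂(stdGaussian E) := by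
  have hC2 : ContDiff ℝ 2 f := by
    rw [← one_add_one_eq_two, contDiff_succ_iff_fderiv]
    exact ⟨hf.differentiable, by simp,
      contDiff_one_iff_fderiv.2 ⟨hf'.differentiable, hf'.isBoundedContinuous_fderiv.continuous⟩⟩
  simp only [mul_laplacian_log hC2 fun x => ha.trans_le (haf x)]
  exact integral_sub (hf'.isBoundedContinuous_laplacian.integrable _)
    ((hf.isBoundedContinuous_gradient.norm_sq_div hf.isBoundedContinuous ha haf).integrable _)

theorem dimensional_logSobolev_stdGaussian [Nontrivial E] (hf : IsBoundedC1 f)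
    (hf' : IsBoundedC1 (fderiv ℝ f)) (ha : 0 < a) (haf : ∀ x, a ≤ f x) :
    0 < 1 - (∫ w, f w * Δ (fun x => log (f x)) w ∂(stdGaussian E)) /
        (finrank ℝ E * ∫ w, f w ∂(stdGaussian E)) ∧
      ∫ w, f w * log (f w) ∂(stdGaussian E) -
          (∫ w, f w ∂(stdGaussian E)) * log (∫ w, f w ∂(stdGaussian E)) ≤
        (∫ w, Δ f w ∂(stdGaussian E)) / 2 +
          finrank ℝ E * (∫ w, f w ∂(stdGaussian E)) / 2 *
            log (1 - (∫ w, f w * Δ (fun x => log (f x)) w ∂(stdGaussian E)) /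
              (finrank ℝ E * ∫ w, f w ∂(stdGaussian E))) := by
  set F := ∫ w, f w ∂(stdGaussian E) with hF
  set H := ∫ w, f w * log (f w) ∂(stdGaussian E) - F * log F
  set D := ∫ w, Δ f w ∂(stdGaussian E)
  set L := ∫ w, f w * Δ (fun x => log (f x)) w ∂(stdGaussian E)
  set A := ∫ w, ‖∇ f w‖ ^ 2 / f w ∂(stdGaussian E)
  have hL : L = D - A := integral_mul_laplacian_log_stdGaussian hf hf' ha haf
  have hpos : 0 < finrank ℝ E * F := by
    have hmean := le_gaussAvg 0 1 hf.isBoundedContinuous haf 0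
    simp only [gaussAvg, smul_zero, one_smul, zero_add, ← hF] at hmean
    exact mul_pos (mod_cast finrank_pos) (ha.trans_le hmean)
  have hfamily (s : ℝ) (hs : 0 < s) :
      (2 * H - D) / (finrank ℝ E * F) ≤ s * (1 - L / (finrank ℝ E * F)) - 1 - log s := by
    have hH : H ≤ (s * A + (1 - s) * D + (s - 1 - log s) * (finrank ℝ E * F)) / 2 :=
      integral_mul_log_sub_le_stdGaussian hf hf' ha haf hs
    have hmul : s * (1 - L / (finrank ℝ E * F)) * (finrank ℝ E * F) =
        s * (finrank ℝ E * F - (D - A)) := by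
      rw [mul_assoc, sub_mul, one_mul, div_mul_cancel₀ _ hpos.ne', hL]
    rw [div_le_iff₀ hpos]
    linarith
  obtain ⟨harg, hle⟩ := pos_and_le_log_of_forall_le hfamily
  rw [div_le_iff₀ hpos] at hle
  exact ⟨harg, by linarith⟩

end LogSobolev

section Heat

variable {n : ℕ} {f : EuclideanSpace ℝ (Fin n) → ℝ}

lemma laplacian_eq : laplacian n f = Δ f := by
  ext x
  simp [laplacian, laplacian_eq_sum_fderiv_fderiv (EuclideanSpace.basisFun (Fin n) ℝ)]

lemma rpow_mul_stdGaussianDensity {t : ℝ} (ht : 0 < t) (w : EuclideanSpace ℝ (Fin n)) :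
    (2 * t) ^ (-(n : ℝ) / 2) * stdGaussianDensity _ w =
      (4 * π * t) ^ (-(n : ℝ) / 2) * exp (-‖√(2 * t) • w‖ ^ 2 / (4 * t)) := by
  have hexp : -‖√(2 * t) • w‖ ^ 2 / (4 * t) = -‖w‖ ^ 2 / 2 := by
    rw [norm_smul, mul_pow, norm_eq_abs, sq_abs, sq_sqrt (by positivity)]
    field_simp
    ring
  rw [hexp, stdGaussianDensity, finrank_euclideanSpace_fin, ← mul_assoc,
    ← mul_rpow (by positivity) (by positivity)]
  ring_nf

lemma heat_eq_gaussAvg {t : ℝ} (ht : 0 < t) (f : EuclideanSpace ℝ (Fin n) → ℝ) :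
    heat n t f = gaussAvg 1 √(2 * t) f := by
  ext x
  have hscale := Measure.integral_comp_smul volume
    (fun v : EuclideanSpace ℝ (Fin n) => f (x + v) * exp (-‖v‖ ^ 2 / (4 * t))) √(2 * t)
  have hpow : (2 * t) ^ (-(n : ℝ) / 2) = |(√(2 * t) ^ n)⁻¹| := by
    rw [abs_of_pos (by positivity), sqrt_eq_rpow, ← rpow_mul_natCast (by positivity),
      ← rpow_neg (by positivity)]
    ring_nf
  have hpos : 0 < (2 * t) ^ (-(n : ℝ) / 2) := by positivity
  rw [finrank_euclideanSpace_fin, ← hpow, smul_eq_mul] at hscale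
  refine mul_left_cancel₀ hpos.ne' ?_
  calc
    _ = (4 * π * t) ^ (-(n : ℝ) / 2) *
          ((2 * t) ^ (-(n : ℝ) / 2) * ∫ v, f (x + v) * exp (-‖v‖ ^ 2 / (4 * t))) := by
      rw [heat, if_neg ht.ne', ← integral_add_left_eq_self _ x]
      simp only [sub_add_cancel_left, norm_neg]
      ring
    _ = ∫ w, (4 * π * t) ^ (-(n : ℝ) / 2) *
          (f (x + √(2 * t) • w) * exp (-‖√(2 * t) • w‖ ^ 2 / (4 * t))) := by
      rw [← hscale, integral_const_mul]
    _ = ∫ w, (2 * t) ^ (-(n : ℝ) / 2) *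
          (stdGaussianDensity _ w * f (x + √(2 * t) • w)) := by
      refine integral_congr_ae (.of_forall fun w => ?_)
      linear_combination -f (x + √(2 * t) • w) * rpow_mul_stdGaussianDensity ht w
    _ = _ := by
      rw [integral_const_mul, gaussAvg, integral_stdGaussian, one_smul]

end Heat

theorem dimensional_local_logSobolev_heat_general (n : ℕ) (hn : 1 ≤ n)
    (f : EuclideanSpace ℝ (Fin n) → ℝ) (hf : ContDiff ℝ 2 f)
    (a b : ℝ) (ha : 0 < a) (hab : ∀ x, a ≤ f x ∧ f x ≤ b)
    (C₁ C₂ : ℝ) (hder : ∀ x, ‖fderiv ℝ f x‖ ≤ C₁ ∧ ‖iteratedFDeriv ℝ 2 f x‖ ≤ C₂)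
    (t : ℝ) (ht : 0 < t) (x : EuclideanSpace ℝ (Fin n)) :
    0 < 1 - (2 * t / n) *
        (heat n t (fun y => f y * laplacian n (fun z => Real.log (f z)) y) x / heat n t f x) ∧
    heat n t (fun y => f y * Real.log (f y)) x - heat n t f x * Real.log (heat n t f x) ≤
      t * laplacian n (heat n t f) x + (n / 2) * heat n t f x *
        Real.log (1 - (2 * t / n) *
          (heat n t (fun y => f y * laplacian n (fun z => Real.log (f z)) y) x
            / heat n t f x)) := by
  have : Nonempty (Fin n) := ⟨⟨0, hn⟩⟩
  have hC₂ (y : EuclideanSpace ℝ (Fin n)) : ‖fderiv ℝ (fderiv ℝ f) y‖ ≤ C₂ := by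
    rw [← norm_iteratedFDeriv_one, norm_iteratedFDeriv_fderiv]
    exact (hder y).2
  have hb : IsBoundedC1 f := .of_contDiff_one (hf.of_le one_le_two)
    (fun y => (norm_of_nonneg (ha.le.trans (hab y).1)).trans_le (hab y).2) fun y => (hder y).1
  have hb' : IsBoundedC1 (fderiv ℝ f) :=
    .of_contDiff_one (hf.fderiv_right (by norm_num)) (fun y => (hder y).1) hC₂
  have h := dimensional_logSobolev_stdGaussian (hb.comp_add_smul x √(2 * t))
    (hb'.fderiv_comp_add_smul x √(2 * t)) ha fun y => (hab _).1
  have hlog := laplacian_comp_add_smul (fun y => log (f y)) x √(2 * t)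
  have hsqrt : √(2 * t) ^ 2 = 2 * t := sq_sqrt (by positivity)
  simp only [laplacian_comp_add_smul, hlog, hsqrt, smul_eq_mul, mul_left_comm _ (2 * t),
    integral_const_mul, finrank_euclideanSpace_fin, mul_div_mul_comm (2 * t)] at h
  simp only [laplacian_eq, heat_eq_gaussAvg ht, laplacian_gaussAvg _ _ hb hb']
  simp only [gaussAvg, one_smul, one_pow, one_mul]
  refine ⟨h.1, h.2.trans_eq ?_⟩
  ring

theorem dimensional_local_logSobolev_heat (n : ℕ) (hn : 1 ≤ n)
    (f : EuclideanSpace ℝ (Fin n) → ℝ) (hf : ContDiff ℝ (⊤ : ℕ∞) f)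
    (a b : ℝ) (ha : 0 < a) (hab : ∀ x, a ≤ f x ∧ f x ≤ b)
    (C₁ C₂ : ℝ) (hder : ∀ x, ‖fderiv ℝ f x‖ ≤ C₁ ∧ ‖iteratedFDeriv ℝ 2 f x‖ ≤ C₂)
    (t : ℝ) (ht : 0 < t) (x : EuclideanSpace ℝ (Fin n)) :
    0 < 1 - (2 * t / n) *
        (heat n t (fun y => f y * laplacian n (fun z => Real.log (f z)) y) x / heat n t f x) ∧
    heat n t (fun y => f y * Real.log (f y)) x - heat n t f x * Real.log (heat n t f x) ≤
      t * laplacian n (heat n t f) x + (n / 2) * heat n t f x *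
        Real.log (1 - (2 * t / n) *
          (heat n t (fun y => f y * laplacian n (fun z => Real.log (f z)) y) x
            / heat n t f x)) :=
  dimensional_local_logSobolev_heat_general n hn f (contDiff_infty.1 hf 2) a b ha hab C₁ C₂ hder
    t ht x
end

section
/- Let n ≥ 1 and let f : ℝ^n → ℝ be a smooth function with 0 < a ≤ f ≤ b for some constants a, b and with bounded first and second derivatives. Then for every t > 0 and every x ∈ ℝ^n one has 1 + (2t/n) · Δ(log P_t f)(x) > 0 (the Li–Yau inequality) and P_t(f log f)(x) − P_t f(x) · log P_t f(x) ≥ t · Δ(P_t f)(x) − (n/2) · P_t f(x) · log( 1 + (2t/n) · Δ(log P_t f)(x) ) (reverse dimensional local logarithmic Sobolev inequality for the Euclidean heat semigroup). -/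
open MeasureTheory Real

/-!
Fix `x` and consider the measure with density `w y = f y * p_t (x - y)`, whose mass is `P_t f x`.
Differentiating the heat kernel expresses the barycentre of `w` through `∇ (P_t f)` and its second
moment through `Δ (P_t f)`. Hence the variance of the normalized measure about its barycentre is
`2 t n r`, where `r = 1 + (2 t / n) Δ (log P_t f)`, and the Li–Yau inequality says that this
variance is positive. Since `log p_t` is quadratic, `∫ w log w` is `P_t (f log f) - t Δ (P_t f)` up
to an explicit multiple of `P_t f`. Among densities of given mass and variance the Gaussian
minimizes `∫ w log w`; comparing `w` with the Gaussian of variance `2 t r` in each direction gives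
the reverse logarithmic Sobolev inequality.
-/

namespace HeatFlow

open ContinuousLinearMap Filter InnerProductSpace Module
open scoped Convolution ContDiff ENNReal Gradient Laplacian LineDeriv RealInnerProductSpace
  SchwartzMap Topology

theorem gradient_norm_sq {E : Type*} [NormedAddCommGroup E] [InnerProductSpace ℝ E]
    [CompleteSpace E] (x : E) : ∇ (fun y : E ↦ ‖y‖ ^ 2) x = (2 : ℝ) • x := by
  refine HasGradientAt.gradient (hasGradientAt_iff_hasFDerivAt.mpr ?_)
  refine (hasStrictFDerivAt_norm_sq x).hasFDerivAt.congr_fderiv ?_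
  ext y
  simp [two_smul]

section Laplacian

variable {E : Type*} [NormedAddCommGroup E] [InnerProductSpace ℝ E] [FiniteDimensional ℝ E]

theorem laplacian_eq_sum_fderiv_fderiv {F ι : Type*} [NormedAddCommGroup F] [NormedSpace ℝ F]
    [Fintype ι] (b : OrthonormalBasis ι ℝ E) (g : E → F) (x : E) :
    Δ g x = ∑ i, fderiv ℝ (fderiv ℝ g) x (b i) (b i) := by
  simp [laplacian_eq_iteratedFDeriv_orthonormalBasis g b, iteratedFDeriv_two_apply]

theorem laplacian_comp_scalar {φ φ' : ℝ → ℝ} {φ'' : ℝ} {g : E → ℝ} {x : E}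
    (hφ : ∀ᶠ s in 𝓝 (g x), HasDerivAt φ (φ' s) s) (hφ' : HasDerivAt φ' φ'' (g x))
    (hg : ContDiffAt ℝ 2 g x) :
    Δ (fun y ↦ φ (g y)) x = φ' (g x) * Δ g x + φ'' * ‖∇ g x‖ ^ 2 := by
  have hg_near : ∀ᶠ y in 𝓝 x, DifferentiableAt ℝ g y :=
    (hg.eventually (by simp)).mono fun y hy ↦ hy.differentiableAt (by simp)
  have hg' : DifferentiableAt ℝ (fderiv ℝ g) x :=
    (hg.fderiv_right (m := 1) (by norm_num)).differentiableAt (by simp)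
  have hfirst : fderiv ℝ (fun y ↦ φ (g y)) =ᶠ[𝓝 x] fun y ↦ φ' (g y) • fderiv ℝ g y := by
    filter_upwards [hg_near, hg.continuousAt.eventually hφ] with y hy hφy
    exact (hφy.comp_hasFDerivAt y hy.hasFDerivAt).fderiv
  have hsecond := ((hφ'.comp_hasFDerivAt x hg_near.self_of_nhds.hasFDerivAt).smul
    hg'.hasFDerivAt).congr_of_eventuallyEq hfirst
  let b := stdOrthonormalBasis ℝ E
  have hnorm : ∑ i, fderiv ℝ g x (b i) ^ 2 = ‖∇ g x‖ ^ 2 := by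
    simp_rw [← inner_gradient_left, ← b.sum_sq_norm_inner_left, Real.norm_eq_abs, sq_abs]
  rw [laplacian_eq_sum_fderiv_fderiv b, laplacian_eq_sum_fderiv_fderiv b, hsecond.fderiv, ← hnorm,
    Finset.mul_sum, Finset.mul_sum, ← Finset.sum_add_distrib]
  refine Finset.sum_congr rfl fun i _ ↦ ?_
  simp [pow_two, mul_assoc]

theorem laplacian_log_comp {g : E → ℝ} {x : E} (hg : ContDiffAt ℝ 2 g x) (hx : g x ≠ 0) :
    Δ (fun y ↦ log (g y)) x = Δ g x / g x - ‖∇ g x‖ ^ 2 / g x ^ 2 := by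
  have hlog : ∀ᶠ s in 𝓝 (g x), HasDerivAt log s⁻¹ s :=
    (eventually_ne_nhds hx).mono fun _ hs ↦ hasDerivAt_log hs
  rw [laplacian_comp_scalar hlog (hasDerivAt_inv hx) hg]
  ring

theorem laplacian_norm_sq (x : E) :
    Δ (fun y : E ↦ ‖y‖ ^ 2) x = 2 * finrank ℝ E := by
  have hfirst : fderiv ℝ (fun y : E ↦ ‖y‖ ^ 2) = ⇑((2 : ℝ) • innerSL ℝ (E := E)) := by
    rw [fderiv_norm_sq]; ext; simp [two_smul]
  let b := stdOrthonormalBasis ℝ E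
  calc Δ (fun y : E ↦ ‖y‖ ^ 2) x = ∑ i, 2 * ⟪b i, b i⟫ := by
        rw [laplacian_eq_sum_fderiv_fderiv b, hfirst, ContinuousLinearMap.fderiv]; rfl
    _ = 2 * finrank ℝ E := by simp [mul_comm]

end Laplacian

section Gaussian

variable {E : Type*} [NormedAddCommGroup E] [InnerProductSpace ℝ E]

theorem norm_iteratedFDeriv_exp_neg_mul_le {κ s : ℝ} (hκ : 0 ≤ κ) {i n : ℕ} (hi : i ≤ n) :
    ‖iteratedFDeriv ℝ i (fun s ↦ rexp (-κ * s)) s‖ ≤ (1 + κ) ^ n * rexp (-κ * s) := by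
  rw [norm_iteratedFDeriv_eq_norm_iteratedDeriv, iteratedDeriv_exp_const_mul]
  simp only [norm_mul, norm_pow, norm_neg, Real.norm_eq_abs, abs_of_nonneg hκ, abs_exp]
  gcongr
  calc κ ^ i ≤ (1 + κ) ^ i := by gcongr; linarith
    _ ≤ (1 + κ) ^ n := pow_le_pow_right₀ (by linarith) hi

theorem one_add_pow_mul_exp_neg_mul_sq_le {κ r : ℝ} (hκ : 0 < κ) (hr : 0 ≤ r) (m : ℕ) :
    (1 + r) ^ m * rexp (-κ * r ^ 2) ≤ m.factorial * rexp (1 + 1 / (4 * κ)) := by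
  have hpow : (1 + r) ^ m ≤ m.factorial * rexp (1 + r) :=
    (div_le_iff₀' (by positivity)).mp (pow_div_factorial_le_exp (1 + r) (by linarith) m)
  have hquad : 1 + r + -κ * r ^ 2 = 1 + 1 / (4 * κ) - κ * (r - 1 / (2 * κ)) ^ 2 := by
    field_simp
    ring
  calc (1 + r) ^ m * rexp (-κ * r ^ 2) ≤ m.factorial * rexp (1 + r) * rexp (-κ * r ^ 2) := by gcongr
    _ = m.factorial * rexp (1 + r + -κ * r ^ 2) := by rw [mul_assoc, ← exp_add]
    _ = m.factorial * rexp (1 + 1 / (4 * κ) - κ * (r - 1 / (2 * κ)) ^ 2) := by rw [hquad]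
    _ ≤ m.factorial * rexp (1 + 1 / (4 * κ)) := by gcongr; exact sub_le_self _ (by positivity)

theorem exists_norm_pow_mul_iteratedFDeriv_gaussian_le {κ : ℝ} (hκ : 0 < κ) (k n : ℕ) :
    ∃ C, ∀ x : E, ‖x‖ ^ k * ‖iteratedFDeriv ℝ n (fun u : E ↦ rexp (-κ * ‖u‖ ^ 2)) x‖ ≤ C := by
  obtain ⟨l, C, hC, hbound⟩ :=
    (Function.hasTemperateGrowth_norm_sq (H := E)).norm_iteratedFDeriv_le_uniform n
  refine ⟨n.factorial * (1 + κ) ^ n * (1 + C) ^ n *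
    ((k + l * n).factorial * rexp (1 + 1 / (4 * κ))), fun x ↦ ?_⟩
  have hinner (i : ℕ) (hi : 1 ≤ i) (hin : i ≤ n) :
      ‖iteratedFDeriv ℝ i (fun u : E ↦ ‖u‖ ^ 2) x‖ ≤ ((1 + C) * (1 + ‖x‖) ^ l) ^ i := by
    have hone : 1 ≤ (1 + C) * (1 + ‖x‖) ^ l :=
      one_le_mul_of_one_le_of_one_le (by linarith) (one_le_pow₀ (by simp))
    calc _ ≤ C * (1 + ‖x‖) ^ l := hbound i hin x
      _ ≤ (1 + C) * (1 + ‖x‖) ^ l := by gcongr; linarith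
      _ ≤ _ := le_self_pow₀ hone (by lia)
  have hcomp := norm_iteratedFDeriv_comp_le (n := n) (N := ∞)
    (g := fun s ↦ rexp (-κ * s)) (by fun_prop) (contDiff_norm_sq ℝ) (mod_cast le_top) x
    (fun i hi ↦ norm_iteratedFDeriv_exp_neg_mul_le hκ.le hi) hinner
  calc ‖x‖ ^ k * ‖iteratedFDeriv ℝ n (fun u : E ↦ rexp (-κ * ‖u‖ ^ 2)) x‖
    _ ≤ (1 + ‖x‖) ^ k * (n.factorial * ((1 + κ) ^ n * rexp (-κ * ‖x‖ ^ 2))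
          * ((1 + C) * (1 + ‖x‖) ^ l) ^ n) := by
      gcongr
      · linarith
      · exact hcomp
    _ = n.factorial * (1 + κ) ^ n * (1 + C) ^ n
          * ((1 + ‖x‖) ^ (k + l * n) * rexp (-κ * ‖x‖ ^ 2)) := by rw [mul_pow]; ring
    _ ≤ _ := mul_le_mul_of_nonneg_left
      (one_add_pow_mul_exp_neg_mul_sq_le hκ (norm_nonneg x) _) (by positivity)

/-- The unnormalized Gaussian `u ↦ exp (-κ ‖u‖²)`, bundled as a Schwartz function. -/
noncomputable def gaussianSchwartz {κ : ℝ} (hκ : 0 < κ) : 𝓢(E, ℝ) where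
  toFun u := rexp (-κ * ‖u‖ ^ 2)
  smooth' := ((contDiff_norm_sq ℝ).const_smul (-κ)).exp
  decay' := exists_norm_pow_mul_iteratedFDeriv_gaussian_le hκ

end Gaussian

section SchwartzConvolution

variable {E F : Type*} [NormedAddCommGroup E] [NormedSpace ℝ E] [NormedAddCommGroup F]
  [NormedSpace ℝ F]

/-- The Schwartz function `y ↦ K (x - y)`: the kernel of a convolution evaluated at `x`, seen as a
function of the integration variable. -/
noncomputable def schwartzReflect (K : 𝓢(E, F)) (x : E) : 𝓢(E, F) :=
  SchwartzMap.compCLMOfAntilipschitz ℝ (g := fun y ↦ x - y) (K := 1) (by fun_prop)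
    (fun _ _ ↦ by simp) K

theorem schwartzReflect_apply (K : 𝓢(E, F)) (x y : E) : schwartzReflect K x y = K (x - y) := rfl

theorem exists_norm_schwartz_sub_le (K : 𝓢(E, F)) (r : ℕ) (x : E) :
    ∃ C, ∀ z ∈ Metric.ball x 1, ∀ y, ‖K (z - y)‖ ≤ C * (1 + ‖y‖) ^ (-(r : ℝ)) := by
  let C := 2 ^ r * ((Finset.Iic (r, 0)).sup fun m ↦ SchwartzMap.seminorm ℝ m.1 m.2) K
  have hdecay (u : E) : (1 + ‖u‖) ^ r * ‖K u‖ ≤ C := by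
    simpa using SchwartzMap.one_add_le_sup_seminorm_apply (𝕜 := ℝ) (m := (r, 0))
      (le_refl r) (le_refl 0) K u
  refine ⟨(2 + ‖x‖) ^ r * C, fun z hz y ↦ ?_⟩
  have hpeetre : 1 + ‖y‖ ≤ (2 + ‖x‖) * (1 + ‖z - y‖) := by
    have hzx : ‖z - x‖ < 1 := mem_ball_iff_norm.mp hz
    have hz_norm : ‖z‖ ≤ ‖x‖ + ‖z - x‖ := norm_le_insert' z x
    have hy_norm : ‖y‖ ≤ ‖z‖ + ‖z - y‖ := norm_le_insert z y
    nlinarith [norm_nonneg x, norm_nonneg (z - y)]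
  rw [rpow_neg (by positivity), rpow_natCast, ← div_eq_mul_inv, le_div_iff₀' (by positivity)]
  calc (1 + ‖y‖) ^ r * ‖K (z - y)‖
    _ ≤ ((2 + ‖x‖) * (1 + ‖z - y‖)) ^ r * ‖K (z - y)‖ := by gcongr
    _ = (2 + ‖x‖) ^ r * ((1 + ‖z - y‖) ^ r * ‖K (z - y)‖) := by rw [mul_pow, mul_assoc]
    _ ≤ (2 + ‖x‖) ^ r * C := by gcongr; exact hdecay _

variable [MeasurableSpace E] [BorelSpace E] [SecondCountableTopology E] {μ : Measure E}
  [μ.HasTemperateGrowth] {f : E → ℝ}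

theorem integrable_smul_schwartz (hf : MemLp f ∞ μ) (S : 𝓢(E, F)) :
    Integrable (fun y ↦ f y • S y) μ :=
  S.integrable.smul_of_top_right hf

theorem convolutionExistsAt_schwartz (hf : MemLp f ∞ μ) (K : 𝓢(E, F)) (x : E) :
    ConvolutionExistsAt f K x (lsmul ℝ ℝ) μ :=
  integrable_smul_schwartz hf (schwartzReflect K x)

theorem hasFDerivAt_convolution_schwartz (hf : MemLp f ∞ μ) (K : 𝓢(E, F)) (x : E) :
    HasFDerivAt (f ⋆[lsmul ℝ ℝ, μ] K)
      ((f ⋆[lsmul ℝ ℝ, μ] SchwartzMap.fderivCLM ℝ E F K) x) x := by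
  let K' := SchwartzMap.fderivCLM ℝ E F K
  obtain ⟨C, hC⟩ := exists_norm_schwartz_sub_le K' μ.integrablePower x
  have hdom : Integrable (fun y ↦ |f y| * (C * (1 + ‖y‖) ^ (-(μ.integrablePower : ℝ)))) μ :=
    ((Measure.integrable_pow_neg_integrablePower μ).const_mul C).smul_of_top_right hf.norm
  refine hasFDerivAt_integral_of_dominated_of_fderiv_le (Metric.ball_mem_nhds x one_pos)
    (.of_forall fun z ↦ (convolutionExistsAt_schwartz hf K z).aestronglyMeasurable)
    (convolutionExistsAt_schwartz hf K x)
    (F' := fun z y ↦ f y • K' (z - y))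
    (convolutionExistsAt_schwartz hf K' x).aestronglyMeasurable
    (.of_forall fun y z hz ↦ ?_) hdom (.of_forall fun y z _ ↦ ?_)
  · rw [norm_smul, Real.norm_eq_abs]
    gcongr
    exact hC z hz y
  · exact ((K.hasFDerivAt (z - y)).comp z ((hasFDerivAt_id z).sub_const y)).const_smul (f y)

theorem fderiv_convolution_schwartz_apply (hf : MemLp f ∞ μ) (K : 𝓢(E, F)) (x v : E) :
    fderiv ℝ (f ⋆[lsmul ℝ ℝ, μ] K) x v =
      (f ⋆[lsmul ℝ ℝ, μ] (∂_{v} K : 𝓢(E, F))) x := by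
  rw [(hasFDerivAt_convolution_schwartz hf K x).fderiv]
  exact integral_apply (convolutionExistsAt_schwartz hf (SchwartzMap.fderivCLM ℝ E F K) x) v

theorem contDiff_convolution_schwartz [FiniteDimensional ℝ E] (hf : MemLp f ∞ μ) (K : 𝓢(E, F))
    (n : ℕ) : ContDiff ℝ n (f ⋆[lsmul ℝ ℝ, μ] K) := by
  have hdiff (L : 𝓢(E, F)) : Differentiable ℝ (f ⋆[lsmul ℝ ℝ, μ] L) := fun x ↦
    (hasFDerivAt_convolution_schwartz hf L x).differentiableAt
  induction n generalizing K with
  | zero => exact contDiff_zero.mpr (hdiff K).continuous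
  | succ n ih =>
    rw [Nat.cast_succ, contDiff_succ_iff_fderiv_apply]
    refine ⟨hdiff K, by simp, fun v ↦ ?_⟩
    simpa only [fderiv_convolution_schwartz_apply hf] using ih (∂_{v} K)

end SchwartzConvolution

section ConvolutionLaplacian

variable {E F : Type*} [NormedAddCommGroup E] [InnerProductSpace ℝ E] [FiniteDimensional ℝ E]
  [NormedAddCommGroup F] [NormedSpace ℝ F]
  [MeasurableSpace E] [BorelSpace E] {μ : Measure E} [μ.HasTemperateGrowth] {f : E → ℝ}

theorem laplacian_convolution_schwartz (hf : MemLp f ∞ μ) (K : 𝓢(E, F)) (x : E) :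
    Δ (f ⋆[lsmul ℝ ℝ, μ] K) x =
      (f ⋆[lsmul ℝ ℝ, μ] (Δ K : 𝓢(E, F))) x := by
  let b := stdOrthonormalBasis ℝ E
  have hfderiv : Differentiable ℝ (fderiv ℝ (f ⋆[lsmul ℝ ℝ, μ] K)) :=
    ((contDiff_convolution_schwartz hf K 2).fderiv_right (m := 1) (by norm_num)).differentiable
      (by simp)
  have hsecond (v : E) : fderiv ℝ (fderiv ℝ (f ⋆[lsmul ℝ ℝ, μ] K)) x v v =
      (f ⋆[lsmul ℝ ℝ, μ] (∂_{v} (∂_{v} K) : 𝓢(E, F))) x := by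
    rw [← fderiv_convolution_schwartz_apply hf,
      ← funext fun z ↦ fderiv_convolution_schwartz_apply hf K z v,
      fderiv_clm_apply (hfderiv x) (differentiableAt_const v)]
    simp
  simp_rw [laplacian_eq_sum_fderiv_fderiv b, hsecond, SchwartzMap.laplacian_eq_sum b,
    convolution_lsmul, sum_apply, Finset.smul_sum]
  exact (integral_finsetSum _ fun i _ ↦ convolutionExistsAt_schwartz hf _ x).symm

end ConvolutionLaplacian

section WeightedIntegrals

variable {α : Type*} [MeasurableSpace α] {μ : Measure α}

theorem integral_mul_pos_of_ae {f g : α → ℝ} (hf : 0 ≤ᵐ[μ] f) (hf₀ : ¬f =ᵐ[μ] 0)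
    (hg : ∀ᵐ y ∂μ, 0 < g y) (hfg : Integrable (fun y ↦ f y * g y) μ) :
    0 < ∫ y, f y * g y ∂μ := by
  have hnonneg : 0 ≤ᵐ[μ] fun y ↦ f y * g y := by
    filter_upwards [hf, hg] with y hfy hgy using mul_nonneg hfy hgy.le
  refine (integral_nonneg_of_ae hnonneg).lt_of_ne' fun hzero ↦ hf₀ ?_
  filter_upwards [(integral_eq_zero_iff_of_nonneg_ae hnonneg hfg).mp hzero, hg] with y hy hgy
  exact (mul_eq_zero.mp hy).resolve_right hgy.ne'

theorem memLp_top_continuous_comp {F G : Type*} [NormedAddCommGroup F] [ProperSpace F]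
    [NormedAddCommGroup G] {φ : F → G} (hφ : Continuous φ) {f : α → F} (hf : MemLp f ∞ μ) :
    MemLp (fun y ↦ φ (f y)) ∞ μ := by
  let R := (eLpNormEssSup f μ).toReal
  obtain ⟨C, hC⟩ :=
    (isCompact_closedBall (0 : F) R).exists_bound_of_continuousOn hφ.continuousOn
  refine memLp_top_of_bound (hφ.comp_aestronglyMeasurable hf.1) C ?_
  filter_upwards [ae_le_eLpNormEssSup (f := f) (μ := μ)] with y hy
  refine hC _ (mem_closedBall_zero_iff.mpr ?_)
  simpa using ENNReal.toReal_mono (by simpa using hf.eLpNorm_ne_top) hy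

theorem memLp_top_mul_log {f : α → ℝ} (hf : MemLp f ∞ μ) :
    MemLp (fun y ↦ f y * log (f y)) ∞ μ :=
  memLp_top_continuous_comp continuous_mul_log hf

theorem integral_mul_log_le_integral_mul_log {w g : α → ℝ} (hw : 0 ≤ᵐ[μ] w)
    (hg : ∀ᵐ y ∂μ, 0 < g y) (hw_int : Integrable w μ) (hg_int : Integrable g μ)
    (hwg : Integrable (fun y ↦ w y * log (g y)) μ)
    (hww : Integrable (fun y ↦ w y * log (w y)) μ) (hmass : ∫ y, g y ∂μ ≤ ∫ y, w y ∂μ) :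
    ∫ y, w y * log (g y) ∂μ ≤ ∫ y, w y * log (w y) ∂μ := by
  have hpointwise : ∀ᵐ y ∂μ, w y * log (g y) - w y * log (w y) ≤ g y - w y := by
    filter_upwards [hw, hg] with y hwy hgy
    rcases (show 0 ≤ w y from hwy).eq_or_lt with hzero | hpos
    · simpa [← hzero] using hgy.le
    · calc w y * log (g y) - w y * log (w y) = w y * log (g y / w y) := by
            rw [log_div hgy.ne' hpos.ne']; ring
        _ ≤ w y * (g y / w y - 1) := by gcongr; exact log_le_sub_one_of_pos (by positivity)
        _ = g y - w y := by field_simp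
  have hint := integral_mono_ae (hwg.sub hww) (hg_int.sub hw_int) hpointwise
  rw [integral_sub' hwg hww, integral_sub' hg_int hw_int] at hint
  linarith

theorem integral_mul_norm_sub_sq {E : Type*} [NormedAddCommGroup E] [InnerProductSpace ℝ E]
    [CompleteSpace E] {w : α → ℝ} {u : α → E} (hw : Integrable w μ)
    (hwu : Integrable (fun y ↦ w y • u y) μ) (hwu2 : Integrable (fun y ↦ w y * ‖u y‖ ^ 2) μ)
    (c : E) :
    ∫ y, w y * ‖u y - c‖ ^ 2 ∂μ =
      (∫ y, w y * ‖u y‖ ^ 2 ∂μ) - 2 * ⟪∫ y, w y • u y ∂μ, c⟫ + (∫ y, w y ∂μ) * ‖c‖ ^ 2 := by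
  have hexpand (y : α) : w y * ‖u y - c‖ ^ 2 =
      w y * ‖u y‖ ^ 2 - 2 * ⟪c, w y • u y⟫ + w y * ‖c‖ ^ 2 := by
    rw [norm_sub_sq_real, inner_smul_right, real_inner_comm]
    ring
  have hcross : Integrable (fun y ↦ 2 * ⟪c, w y • u y⟫) μ := (hwu.const_inner c).const_mul 2
  simp_rw [hexpand]
  rw [integral_add (by exact hwu2.sub hcross) (hw.mul_const _), integral_sub hwu2 hcross,
    integral_const_mul, integral_inner hwu, integral_mul_const, real_inner_comm]

end WeightedIntegrals

section HeatKernel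

variable {E : Type*} [NormedAddCommGroup E] [InnerProductSpace ℝ E] {t : ℝ}

/-- The Gaussian heat kernel of `Δ` at time `t`, so of variance `2 * t` in each direction, bundled
as a Schwartz function; this is why positivity of `t` is an argument. -/
noncomputable def heatKernel (ht : 0 < t) : 𝓢(E, ℝ) :=
  (4 * π * t) ^ (-(finrank ℝ E : ℝ) / 2) • gaussianSchwartz (κ := (4 * t)⁻¹) (by positivity)

theorem heatKernel_apply (ht : 0 < t) (u : E) :
    heatKernel ht u = (4 * π * t) ^ (-(finrank ℝ E : ℝ) / 2) * rexp (-(4 * t)⁻¹ * ‖u‖ ^ 2) := rfl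

theorem heatKernel_pos (ht : 0 < t) (u : E) : 0 < heatKernel ht u := by
  rw [heatKernel_apply]; positivity

theorem log_heatKernel (ht : 0 < t) (u : E) :
    log (heatKernel ht u) = -(finrank ℝ E / 2 * log (4 * π * t)) - (4 * t)⁻¹ * ‖u‖ ^ 2 := by
  rw [heatKernel_apply, log_mul (by positivity) (by positivity), log_rpow (by positivity), log_exp]
  ring

theorem hasDerivAt_const_mul_exp_mul (c κ s : ℝ) :
    HasDerivAt (fun s ↦ c * rexp (κ * s)) (c * κ * rexp (κ * s)) s := by
  convert! ((hasDerivAt_const_mul κ).exp.const_mul c) using 1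
  ring

theorem fderiv_heatKernel_apply (ht : 0 < t) (u v : E) :
    fderiv ℝ (heatKernel ht) u v = heatKernel ht u * -((2 * t)⁻¹ * ⟪u, v⟫) := by
  have hcomp := ((hasDerivAt_const_mul_exp_mul ((4 * π * t) ^ (-(finrank ℝ E : ℝ) / 2)) (-(4 * t)⁻¹)
    (‖u‖ ^ 2)).comp_hasFDerivAt u (hasStrictFDerivAt_norm_sq u).hasFDerivAt).fderiv
  change fderiv ℝ (heatKernel ht) u = _ at hcomp
  rw [hcomp, heatKernel_apply]
  simp only [smul_apply, innerSL_apply_apply, smul_eq_mul, nsmul_eq_mul, Nat.cast_ofNat]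
  field_simp
  ring

/-- The integrand of the heat semigroup at `x`: for `0 ≤ f`, the density of a finite measure
of mass `heatSemigroup ht f x`, whose barycentre and variance encode the derivatives of the heat
semigroup at `x`. -/
noncomputable def heatDensity (ht : 0 < t) (f : E → ℝ) (x y : E) : ℝ :=
  f y * heatKernel ht (x - y)

theorem heatDensity_mul_log (ht : 0 < t) (f : E → ℝ) (x y : E) :
    heatDensity ht f x y * log (heatDensity ht f x y) =
      heatDensity ht (fun y ↦ f y * log (f y)) x y
        - finrank ℝ E / 2 * log (4 * π * t) * heatDensity ht f x y
        - (4 * t)⁻¹ * (heatDensity ht f x y * ‖y - x‖ ^ 2) := by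
  rcases eq_or_ne (f y) 0 with hy | hy
  · simp [heatDensity, hy]
  · simp only [heatDensity]
    rw [log_mul hy (heatKernel_pos ht _).ne', log_heatKernel, norm_sub_rev]
    ring

variable [FiniteDimensional ℝ E]

theorem laplacian_heatKernel (ht : 0 < t) (u : E) :
    Δ (heatKernel ht : E → ℝ) u =
      heatKernel ht u * ((4 * t ^ 2)⁻¹ * ‖u‖ ^ 2 - (2 * t)⁻¹ * finrank ℝ E) := by
  have hcomp := laplacian_comp_scalar (g := fun u : E ↦ ‖u‖ ^ 2) (x := u)
    (.of_forall
      (hasDerivAt_const_mul_exp_mul ((4 * π * t) ^ (-(finrank ℝ E : ℝ) / 2)) (-(4 * t)⁻¹)))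
    (hasDerivAt_const_mul_exp_mul _ _ _) (contDiff_norm_sq ℝ).contDiffAt
  change Δ (heatKernel ht : E → ℝ) u = _ at hcomp
  rw [hcomp, laplacian_norm_sq, gradient_norm_sq, norm_smul, heatKernel_apply,
    Real.norm_eq_abs, mul_pow, sq_abs]
  field_simp
  ring

variable [MeasurableSpace E] [BorelSpace E]

theorem integral_heatKernel (ht : 0 < t) : ∫ u : E, heatKernel ht u = 1 := by
  have hπ : π / (4 * t)⁻¹ = 4 * π * t := by field_simp
  simp_rw [heatKernel_apply]
  rw [integral_const_mul, GaussianFourier.integral_rexp_neg_mul_sq_norm (by positivity), hπ,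
    ← rpow_add (by positivity), neg_div, neg_add_cancel, rpow_zero]

theorem mul_log_sub_le_integral_mul_log_of_variance_le {w : E → ℝ} (hw : 0 ≤ᵐ[volume] w)
    (hw_int : Integrable w) (hmass : 0 < ∫ y, w y)
    (hwlog : Integrable fun y ↦ w y * log (w y)) {m : E} {s : ℝ} (hs : 0 < s)
    (hsq : Integrable fun y ↦ w y * ‖y - m‖ ^ 2)
    (hvar : ∫ y, w y * ‖y - m‖ ^ 2 ≤ 2 * finrank ℝ E * s * ∫ y, w y) :
    (∫ y, w y) * (log (∫ y, w y) - finrank ℝ E / 2 * (log (4 * π * s) + 1)) ≤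
      ∫ y, w y * log (w y) := by
  let W := ∫ y, w y
  let g (y : E) : ℝ := W * heatKernel hs (y - m)
  have hlog (y : E) : w y * log (g y) =
      w y * (log W - finrank ℝ E / 2 * log (4 * π * s)) - (4 * s)⁻¹ * (w y * ‖y - m‖ ^ 2) := by
    rw [log_mul hmass.ne' (heatKernel_pos hs _).ne', log_heatKernel]
    ring
  have hwg : Integrable fun y ↦ w y * log (g y) := by
    simp_rw [hlog]
    exact (hw_int.mul_const _).sub (hsq.const_mul _)
  have hg_mass : ∫ y, g y = W := by
    rw [integral_const_mul, integral_sub_right_eq_self (heatKernel hs : E → ℝ),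
      integral_heatKernel, mul_one]
  calc W * (log W - finrank ℝ E / 2 * (log (4 * π * s) + 1))
    _ = W * (log W - finrank ℝ E / 2 * log (4 * π * s))
          - (4 * s)⁻¹ * (2 * finrank ℝ E * s * W) := by field_simp; ring
    _ ≤ W * (log W - finrank ℝ E / 2 * log (4 * π * s))
          - (4 * s)⁻¹ * ∫ y, w y * ‖y - m‖ ^ 2 := by gcongr
    _ = ∫ y, w y * log (g y) := by
      simp_rw [hlog]
      rw [integral_sub (hw_int.mul_const _) (hsq.const_mul _), integral_mul_const,
        integral_const_mul]
    _ ≤ ∫ y, w y * log (w y) :=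
      integral_mul_log_le_integral_mul_log hw
        (.of_forall fun y ↦ mul_pos hmass (heatKernel_pos hs _)) hw_int
        (((heatKernel hs).integrable.comp_sub_right m).const_mul W) hwg hwlog hg_mass.le

end HeatKernel

section HeatSemigroup

variable {E : Type*} [NormedAddCommGroup E] [InnerProductSpace ℝ E] [FiniteDimensional ℝ E]
  [MeasurableSpace E] [BorelSpace E] {t : ℝ} {f : E → ℝ}

/-- The heat semigroup at a positive time, on an arbitrary finite-dimensional inner product
space, as the convolution with the heat kernel. -/
noncomputable def heatSemigroup (ht : 0 < t) (f : E → ℝ) : E → ℝ :=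
  f ⋆[lsmul ℝ ℝ] heatKernel ht

theorem integral_heatDensity (ht : 0 < t) (f : E → ℝ) (x : E) :
    ∫ y, heatDensity ht f x y = heatSemigroup ht f x := rfl

theorem integrable_heatDensity_smul {F : Type*} [NormedAddCommGroup F] [NormedSpace ℝ F]
    (hf : MemLp f ∞) (ht : 0 < t) (x : E) {g : E → F} (hg : g.HasTemperateGrowth) :
    Integrable fun y ↦ heatDensity ht f x y • g y := by
  simpa [heatDensity, smul_smul, schwartzReflect_apply] using integrable_smul_schwartz hf
    (SchwartzMap.bilinLeftCLM (lsmul ℝ ℝ) hg (schwartzReflect (heatKernel ht) x))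

theorem integrable_heatDensity (hf : MemLp f ∞) (ht : 0 < t) (x : E) :
    Integrable (heatDensity ht f x) :=
  integrable_smul_schwartz hf (schwartzReflect (heatKernel ht) x)

theorem integrable_heatDensity_mul_norm_sub_sq (hf : MemLp f ∞) (ht : 0 < t) (x m : E) :
    Integrable fun y ↦ heatDensity ht f x y * ‖y - m‖ ^ 2 := by
  have htranslate : (fun y : E ↦ y - m).HasTemperateGrowth := by fun_prop
  exact integrable_heatDensity_smul hf ht x
    ((Function.hasTemperateGrowth_norm_sq (H := E)).comp htranslate)

theorem heatDensity_nonneg (hf₀ : 0 ≤ᵐ[volume] f) (ht : 0 < t) (x : E) :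
    0 ≤ᵐ[volume] heatDensity ht f x := by
  filter_upwards [hf₀] with y hy using mul_nonneg hy (heatKernel_pos ht _).le

theorem heatSemigroup_pos (hf : MemLp f ∞) (hf₀ : 0 ≤ᵐ[volume] f) (hf_ne : ¬f =ᵐ[volume] 0)
    (ht : 0 < t) (x : E) : 0 < heatSemigroup ht f x :=
  integral_mul_pos_of_ae hf₀ hf_ne (.of_forall fun _ ↦ heatKernel_pos ht _)
    (integrable_heatDensity hf ht x)

theorem contDiff_heatSemigroup (hf : MemLp f ∞) (ht : 0 < t) (n : ℕ) :
    ContDiff ℝ n (heatSemigroup ht f) :=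
  contDiff_convolution_schwartz hf _ n

theorem gradient_heatSemigroup (hf : MemLp f ∞) (ht : 0 < t) (x : E) :
    ∇ (heatSemigroup ht f) x = (2 * t)⁻¹ • ∫ y, heatDensity ht f x y • (y - x) := by
  refine ext_inner_right ℝ fun v ↦ ?_
  have hint : Integrable fun y ↦ heatDensity ht f x y • (y - x) :=
    integrable_heatDensity_smul hf ht x (by fun_prop)
  rw [inner_gradient_left, real_inner_smul_left, real_inner_comm, ← integral_inner hint,
    ← integral_const_mul]
  refine (fderiv_convolution_schwartz_apply hf _ x v).trans
    (integral_congr_ae (.of_forall fun y ↦ ?_))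
  simp only [lsmul_apply, SchwartzMap.lineDerivOp_apply_eq_fderiv, fderiv_heatKernel_apply,
    heatDensity, inner_smul_right, smul_eq_mul]
  rw [real_inner_comm (y - x) v, ← neg_sub x y, inner_neg_left]
  ring

theorem laplacian_heatSemigroup (hf : MemLp f ∞) (ht : 0 < t) (x : E) :
    Δ (heatSemigroup ht f) x =
      (4 * t ^ 2)⁻¹ * (∫ y, heatDensity ht f x y * ‖y - x‖ ^ 2)
        - (2 * t)⁻¹ * finrank ℝ E * heatSemigroup ht f x := by
  have hsq := integrable_heatDensity_mul_norm_sub_sq hf ht x x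
  rw [← integral_heatDensity, ← integral_const_mul, ← integral_const_mul,
    ← integral_sub (hsq.const_mul _) ((integrable_heatDensity hf ht x).const_mul _)]
  refine (laplacian_convolution_schwartz hf _ x).trans (integral_congr_ae (.of_forall fun y ↦ ?_))
  simp only [lsmul_apply, SchwartzMap.laplacian_apply, laplacian_heatKernel, heatDensity,
    smul_eq_mul, norm_sub_rev x y]
  ring

theorem integral_heatDensity_mul_norm_sub_sq (hf : MemLp f ∞) (ht : 0 < t) {x : E}
    (hx : heatSemigroup ht f x ≠ 0) :
    ∫ y, heatDensity ht f x y *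
        ‖y - (x + (2 * t / heatSemigroup ht f x) • ∇ (heatSemigroup ht f) x)‖ ^ 2 =
      2 * t * (finrank ℝ E + 2 * t * Δ (fun z ↦ log (heatSemigroup ht f z)) x)
        * heatSemigroup ht f x := by
  have hfirst := gradient_heatSemigroup hf ht x
  have hsecond := laplacian_heatSemigroup hf ht x
  rw [eq_inv_smul_iff₀ (by positivity)] at hfirst
  rw [laplacian_log_comp (contDiff_heatSemigroup hf ht 2).contDiffAt hx, hsecond]
  simp_rw [← sub_sub _ x]
  rw [integral_mul_norm_sub_sq (integrable_heatDensity hf ht x)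
    (integrable_heatDensity_smul hf ht x (by fun_prop))
    (integrable_heatDensity_mul_norm_sub_sq hf ht x x), ← hfirst, integral_heatDensity,
    real_inner_smul_left, real_inner_smul_right, real_inner_self_eq_norm_sq, norm_smul, mul_pow,
    Real.norm_eq_abs, sq_abs]
  field_simp
  ring

theorem liYau_heatSemigroup [Nontrivial E] (hf : MemLp f ∞) (hf₀ : 0 ≤ᵐ[volume] f)
    (hf_ne : ¬f =ᵐ[volume] 0) (ht : 0 < t) (x : E) :
    0 < 1 + 2 * t / finrank ℝ E * Δ (fun z ↦ log (heatSemigroup ht f z)) x := by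
  have hpos := heatSemigroup_pos hf hf₀ hf_ne ht x
  have hdim : (0 : ℝ) < finrank ℝ E := mod_cast finrank_pos
  have hw_ne : ¬heatDensity ht f x =ᵐ[volume] 0 := fun hzero ↦
    hpos.ne' (integral_eq_zero_of_ae hzero)
  have hvar := integral_mul_pos_of_ae (heatDensity_nonneg hf₀ ht x) hw_ne
    (g := fun y ↦ ‖y - (x + (2 * t / heatSemigroup ht f x) • ∇ (heatSemigroup ht f) x)‖ ^ 2)
    ((Measure.ae_ne volume _).mono fun y hy ↦ by have := norm_sub_pos_iff.mpr hy; positivity)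
    (integrable_heatDensity_mul_norm_sub_sq hf ht x _)
  rw [integral_heatDensity_mul_norm_sub_sq hf ht hpos.ne', mul_pos_iff_of_pos_right hpos,
    mul_pos_iff_of_pos_left (by positivity)] at hvar
  calc 0 < (finrank ℝ E + 2 * t * Δ (fun z ↦ log (heatSemigroup ht f z)) x) / finrank ℝ E :=
        div_pos hvar hdim
    _ = _ := by field_simp

theorem integrable_heatDensity_mul_log (hf : MemLp f ∞) (ht : 0 < t) (x : E) :
    Integrable fun y ↦ heatDensity ht f x y * log (heatDensity ht f x y) := by
  simp_rw [heatDensity_mul_log]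
  exact ((integrable_heatDensity (memLp_top_mul_log hf) ht x).sub
    ((integrable_heatDensity hf ht x).const_mul _)).sub
    ((integrable_heatDensity_mul_norm_sub_sq hf ht x x).const_mul _)

theorem integral_heatDensity_mul_log (hf : MemLp f ∞) (ht : 0 < t) (x : E) :
    ∫ y, heatDensity ht f x y * log (heatDensity ht f x y) =
      heatSemigroup ht (fun y ↦ f y * log (f y)) x - t * Δ (heatSemigroup ht f) x
        - finrank ℝ E / 2 * (log (4 * π * t) + 1) * heatSemigroup ht f x := by
  have hflog := integrable_heatDensity (memLp_top_mul_log hf) ht x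
  have hw := (integrable_heatDensity hf ht x).const_mul (finrank ℝ E / 2 * log (4 * π * t))
  have hsq := (integrable_heatDensity_mul_norm_sub_sq hf ht x x).const_mul (4 * t)⁻¹
  simp_rw [heatDensity_mul_log]
  rw [integral_sub (by exact hflog.sub hw) hsq, integral_sub hflog hw, integral_const_mul,
    integral_const_mul, laplacian_heatSemigroup hf]
  simp_rw [integral_heatDensity]
  field_simp
  ring

theorem reverse_logSobolev_heatSemigroup [Nontrivial E] (hf : MemLp f ∞)
    (hf₀ : 0 ≤ᵐ[volume] f) (hf_ne : ¬f =ᵐ[volume] 0) (ht : 0 < t) (x : E) :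
    t * Δ (heatSemigroup ht f) x - finrank ℝ E / 2 * heatSemigroup ht f x *
        log (1 + 2 * t / finrank ℝ E * Δ (fun z ↦ log (heatSemigroup ht f z)) x) ≤
      heatSemigroup ht (fun y ↦ f y * log (f y)) x
        - heatSemigroup ht f x * log (heatSemigroup ht f x) := by
  have hpos := heatSemigroup_pos hf hf₀ hf_ne ht x
  have hliYau := liYau_heatSemigroup hf hf₀ hf_ne ht x
  have hdim : (0 : ℝ) < finrank ℝ E := mod_cast finrank_pos
  set r := 1 + 2 * t / finrank ℝ E * Δ (fun z ↦ log (heatSemigroup ht f z)) x with hr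
  have hvar : ∫ y, heatDensity ht f x y *
      ‖y - (x + (2 * t / heatSemigroup ht f x) • ∇ (heatSemigroup ht f) x)‖ ^ 2 =
        2 * finrank ℝ E * (t * r) * heatSemigroup ht f x := by
    rw [integral_heatDensity_mul_norm_sub_sq hf ht hpos.ne', hr]
    field_simp
  have hentropy := mul_log_sub_le_integral_mul_log_of_variance_le (heatDensity_nonneg hf₀ ht x)
    (integrable_heatDensity hf ht x) hpos (integrable_heatDensity_mul_log hf ht x)
    (mul_pos ht hliYau) (integrable_heatDensity_mul_norm_sub_sq hf ht x _) hvar.le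
  rw [integral_heatDensity_mul_log hf, integral_heatDensity, ← mul_assoc,
    log_mul (by positivity) hliYau.ne'] at hentropy
  linarith

end HeatSemigroup

theorem heat_eq_heatSemigroup {n : ℕ} {t : ℝ} (ht : 0 < t) (f : EuclideanSpace ℝ (Fin n) → ℝ) :
    heat n t f = heatSemigroup ht f := by
  ext x
  rw [heat, if_neg ht.ne', ← integral_const_mul]
  refine integral_congr_ae (.of_forall fun y ↦ ?_)
  simp only [lsmul_apply, heatKernel_apply, finrank_euclideanSpace_fin, smul_eq_mul]
  rw [neg_mul, inv_mul_eq_div, neg_div (4 * t)]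
  ring

theorem laplacian_eq_laplacian {n : ℕ} (f : EuclideanSpace ℝ (Fin n) → ℝ)
    (x : EuclideanSpace ℝ (Fin n)) : _root_.laplacian n f x = Δ f x := by
  rw [laplacian_eq_sum_fderiv_fderiv (EuclideanSpace.basisFun (Fin n) ℝ)]
  simp only [_root_.laplacian, EuclideanSpace.basisFun_apply]

end HeatFlow

section

open HeatFlow Module
open scoped ENNReal Laplacian

theorem reverse_dimensional_local_logSobolev_heat_general {E : Type*} [NormedAddCommGroup E]
    [InnerProductSpace ℝ E] [FiniteDimensional ℝ E] [Nontrivial E] [MeasurableSpace E]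
    [BorelSpace E] {f : E → ℝ} (hf : MemLp f ∞) (hf₀ : 0 ≤ᵐ[volume] f)
    (hf_ne : ¬f =ᵐ[volume] 0) {t : ℝ} (ht : 0 < t) (x : E) :
    0 < 1 + 2 * t / finrank ℝ E * Δ (fun z ↦ log (heatSemigroup ht f z)) x ∧
    heatSemigroup ht (fun y ↦ f y * log (f y)) x
        - heatSemigroup ht f x * log (heatSemigroup ht f x) ≥
      t * Δ (heatSemigroup ht f) x - finrank ℝ E / 2 * heatSemigroup ht f x *
        log (1 + 2 * t / finrank ℝ E * Δ (fun z ↦ log (heatSemigroup ht f z)) x) :=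
  ⟨liYau_heatSemigroup hf hf₀ hf_ne ht x, reverse_logSobolev_heatSemigroup hf hf₀ hf_ne ht x⟩

end

theorem reverse_dimensional_local_logSobolev_heat (n : ℕ) (hn : 1 ≤ n)
    (f : EuclideanSpace ℝ (Fin n) → ℝ) (hf : ContDiff ℝ (⊤ : ℕ∞) f)
    (a b : ℝ) (ha : 0 < a) (hab : ∀ x, a ≤ f x ∧ f x ≤ b)
    (C₁ C₂ : ℝ) (hder : ∀ x, ‖fderiv ℝ f x‖ ≤ C₁ ∧ ‖iteratedFDeriv ℝ 2 f x‖ ≤ C₂)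
    (t : ℝ) (ht : 0 < t) (x : EuclideanSpace ℝ (Fin n)) :
    0 < 1 + (2 * t / n) * laplacian n (fun z => Real.log (heat n t f z)) x ∧
    heat n t (fun y => f y * Real.log (f y)) x - heat n t f x * Real.log (heat n t f x) ≥
      t * laplacian n (heat n t f) x - (n / 2) * heat n t f x *
        Real.log (1 + (2 * t / n) * laplacian n (fun z => Real.log (heat n t f z)) x) := by
  have : Nontrivial (EuclideanSpace ℝ (Fin n)) :=
    Module.nontrivial_of_finrank_pos (R := ℝ) (by rwa [finrank_euclideanSpace_fin])
  have hf_bdd : MemLp f ⊤ :=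
    memLp_top_of_bound hf.continuous.aestronglyMeasurable b (.of_forall fun y ↦ by
      rw [norm_of_nonneg (ha.le.trans (hab y).1)]
      exact (hab y).2)
  have hf_ne : ¬f =ᵐ[volume] 0 := fun hzero ↦ by
    obtain ⟨y, hy⟩ := hzero.exists
    exact (ha.trans_le (hab y).1).ne' hy
  simpa only [HeatFlow.heat_eq_heatSemigroup ht, HeatFlow.laplacian_eq_laplacian,
    finrank_euclideanSpace_fin] using
    reverse_dimensional_local_logSobolev_heat_general hf_bdd
      (.of_forall fun y ↦ ha.le.trans (hab y).1) hf_ne ht x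
end

section
/- Let n ≥ 1, let 0 < s ≤ t and 1 < q₁ ≤ q₂ satisfy (q₂ − 1)/(q₁ − 1) = t/s. Then for every measurable function f : ℝ^n → ℝ with 0 < a ≤ f ≤ b for some constants a, b, and every x ∈ ℝ^n, ( P_s( (P_{t−s} f)^{q₂} )(x) )^{1/q₂} ≤ ( P_t( f^{q₁} )(x) )^{1/q₁}, where P_0 g = g (local hypercontractivity of the heat semigroup, i.e. Theorem on CD(0,∞) hypercontractivity applied to the Laplacian on ℝ^n). -/
open MeasureTheory Real

/-!
By duality in `L^{q₂}`, the inequality reduces to the two-function Gaussian estimate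
`𝔼[F(ρX + σZ)^α G(X)^β] ≤ 𝔼[F]^α 𝔼[G]^β`, where `ρ² = s / t = 1 - σ²`, `α = 1 / q₁`,
`β = 1 - 1 / q₂`, and the relation between `q₁, q₂, s, t` reads `ρ²αβ ≤ (1 - α)(1 - β)`. This
estimate tensorises over the coordinates, so that the dimension may be taken to be one. There, let
`T` and `S` be the monotone maps transporting the probability densities proportional to `F` and `G`
(with respect to the Gaussian) to the Gaussian. Perturbing the identity of the plane by
`α (T - id)` in the direction `(ρ, σ)` and by `β (S - id)` in the direction `(1, 0)` gives an
injective map whose Jacobian is at least `T'^α S'^β` by the arithmetic-geometric mean inequality,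
while a quadratic form inequality controls the Gaussian weight of the image. Changing variables
along this map bounds the normalised left-hand side by the total mass of the Gaussian.
-/

section Gaussian

open ProbabilityTheory Filter Set
open scoped Topology ENNReal

section Pair

variable {W W' X X' Y Y' : Type*} [MeasurableSpace W] [MeasurableSpace W'] [MeasurableSpace X]
  [MeasurableSpace X'] [MeasurableSpace Y] [MeasurableSpace Y']

/-- Two random variables `A` and `B` on `(W, μ)` form an `(α, β)`-hypercontractive pair if
`𝔼[F(A)^α G(B)^β] ≤ 𝔼[F(A)]^α 𝔼[G(B)]^β` for all measurable `F, G ≥ 0`. Expectations are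
`ℝ≥0∞`-valued, so that infinite ones are allowed. -/
def HypercontractivePair (α β : ℝ) (μ : Measure W) (A : W → X) (B : W → Y) : Prop :=
  ∀ ⦃F : X → ℝ≥0∞⦄ ⦃G : Y → ℝ≥0∞⦄, Measurable F → Measurable G →
    ∫⁻ w, F (A w) ^ α * G (B w) ^ β ∂μ ≤ (∫⁻ w, F (A w) ∂μ) ^ α * (∫⁻ w, G (B w) ∂μ) ^ β

namespace HypercontractivePair

variable {α β : ℝ} {μ : Measure W} {ν : Measure W'} {A : W → X} {B : W → Y} {A' : W' → X'}
  {B' : W' → Y'}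

lemma comp (h : HypercontractivePair α β μ A B) {a : X → X'} {b : Y → Y'} (ha : Measurable a)
    (hb : Measurable b) : HypercontractivePair α β μ (a ∘ A) (b ∘ B) :=
  fun _ _ hF hG => h (hF.comp ha) (hG.comp hb)

lemma map {φ : W' → W} (hφ : Measurable φ) (hA : Measurable A) (hB : Measurable B)
    (h : HypercontractivePair α β ν (A ∘ φ) (B ∘ φ)) :
    HypercontractivePair α β (ν.map φ) A B := by
  intro F G hF hG
  rw [lintegral_map (by fun_prop) hφ, lintegral_map (by fun_prop) hφ,
    lintegral_map (by fun_prop) hφ]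
  exact h hF hG

lemma prodMap [SFinite μ] [SFinite ν] (hA : Measurable A) (hB : Measurable B)
    (hA' : Measurable A') (hB' : Measurable B') (h : HypercontractivePair α β μ A B)
    (h' : HypercontractivePair α β ν A' B') :
    HypercontractivePair α β (μ.prod ν) (Prod.map A A') (Prod.map B B') := by
  intro F G hF hG
  have hFm : Measurable fun x' => ∫⁻ w, F (A w, x') ∂μ :=
    Measurable.lintegral_prod_left' (f := fun p => F (A p.1, p.2)) (by fun_prop)
  have hGm : Measurable fun y' => ∫⁻ w, G (B w, y') ∂μ :=
    Measurable.lintegral_prod_left' (f := fun p => G (B p.1, p.2)) (by fun_prop)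
  rw [lintegral_prod_symm' _ (by fun_prop), lintegral_prod_symm' _ (by fun_prop),
    lintegral_prod_symm' _ (by fun_prop)]
  calc ∫⁻ w', ∫⁻ w, F (A w, A' w') ^ α * G (B w, B' w') ^ β ∂μ ∂ν
      ≤ ∫⁻ w', (∫⁻ w, F (A w, A' w') ∂μ) ^ α * (∫⁻ w, G (B w, B' w') ∂μ) ^ β ∂ν :=
        lintegral_mono fun w' => h (F := fun x => F (x, A' w')) (G := fun y => G (y, B' w'))
          (by fun_prop) (by fun_prop)
    _ ≤ (∫⁻ w', ∫⁻ w, F (A w, A' w') ∂μ ∂ν) ^ α * (∫⁻ w', ∫⁻ w, G (B w, B' w') ∂μ ∂ν) ^ β :=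
        h' hFm hGm

lemma piMap [SigmaFinite μ] (hA : Measurable A) (hB : Measurable B)
    (h : HypercontractivePair α β μ A B) (n : ℕ) :
    HypercontractivePair α β (Measure.pi fun _ : Fin n => μ) (A ∘ ·) (B ∘ ·) := by
  induction n with
  | zero =>
    intro F G _ _
    rw [Measure.pi_of_empty _ default]
    simp [Subsingleton.elim _ (default : Fin 0 → X), Subsingleton.elim _ (default : Fin 0 → Y)]
  | succ n ih =>
    have hcons := (h.prodMap hA hB (by fun_prop) (by fun_prop) ih).comp
      (MeasurableEquiv.piFinSuccAbove (fun _ => X) 0).symm.measurable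
      (MeasurableEquiv.piFinSuccAbove (fun _ => Y) 0).symm.measurable
    rw [← (measurePreserving_piFinSuccAbove (fun _ : Fin (n + 1) => μ) 0).symm.map_eq]
    refine map (MeasurableEquiv.measurable _) (by fun_prop) (by fun_prop) ?_
    convert hcons using 1
    · ext p i
      refine Fin.cases ?_ (fun i => ?_) i <;> simp
    · ext p i
      refine Fin.cases ?_ (fun i => ?_) i <;> simp

end HypercontractivePair

end Pair

section Approximation

open scoped BoundedContinuousFunction

variable {X : Type*} [TopologicalSpace X] [NormalSpace X] [MeasurableSpace X] [BorelSpace X]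
  {μ : Measure X} [μ.WeaklyRegular]

lemma exists_boundedContinuous_pos_eLpNorm_sub_le {F : X → ℝ} (hF : Integrable F μ)
    (hF0 : ∀ x, 0 ≤ F x) {ε : ℝ} (hε : 0 < ε) :
    ∃ f : X →ᵇ ℝ, (∀ x, 0 < f x) ∧ eLpNorm (⇑f - F) 1 μ ≤ ENNReal.ofReal ε * (1 + μ univ) := by
  obtain ⟨g, hg, -⟩ := (memLp_one_iff_integrable.2 hF).exists_boundedContinuous_eLpNorm_sub_le
    ENNReal.one_ne_top (ENNReal.ofReal_ne_zero_iff.2 hε)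
  have hdist (x : X) : ‖|g x| + ε - F x‖ ≤ ‖F x - g x‖ + ε := by
    have h := abs_abs_sub_abs_le (g x) (F x)
    rw [abs_of_nonneg (hF0 x), abs_sub_comm (g x)] at h
    rw [add_sub_right_comm]
    exact (norm_add_le _ _).trans (add_le_add h (Real.norm_of_nonneg hε.le).le)
  refine ⟨|g| + .const X ε, fun x => add_pos_of_nonneg_of_pos (abs_nonneg (g x)) hε, ?_⟩
  calc eLpNorm (fun x => |g x| + ε - F x) 1 μ
      ≤ eLpNorm (fun x => ‖F x - g x‖ + ε) 1 μ := eLpNorm_mono_real hdist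
    _ ≤ eLpNorm (fun x => ‖F x - g x‖) 1 μ + eLpNorm (fun _ => ε) 1 μ :=
        eLpNorm_add_le (hF.aestronglyMeasurable.sub g.continuous.aestronglyMeasurable).norm
          aestronglyMeasurable_const le_rfl
    _ ≤ ENNReal.ofReal ε + ENNReal.ofReal ε * μ univ := by
        gcongr
        · exact (eLpNorm_norm (F - ⇑g)).trans_le hg
        · simp [eLpNorm_one_eq_lintegral_enorm, Real.enorm_eq_ofReal hε.le]
    _ = ENNReal.ofReal ε * (1 + μ univ) := by rw [mul_add, mul_one]

lemma exists_boundedContinuous_pos_seq_tendsto [IsFiniteMeasure μ] {F : X → ℝ≥0∞}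
    (hF : Measurable F) (hFint : ∫⁻ x, F x ∂μ ≠ ∞) :
    ∃ f : ℕ → X →ᵇ ℝ, (∀ k x, 0 < f k x) ∧
      (∀ᵐ x ∂μ, Tendsto (fun k => ENNReal.ofReal (f k x)) atTop (𝓝 (F x))) ∧
      Tendsto (fun k => ∫⁻ x, ENNReal.ofReal (f k x) ∂μ) atTop (𝓝 (∫⁻ x, F x ∂μ)) := by
  have hFr : Integrable (fun x => (F x).toReal) μ :=
    integrable_toReal_of_lintegral_ne_top hF.aemeasurable hFint
  choose f hfpos hf using fun k : ℕ => exists_boundedContinuous_pos_eLpNorm_sub_le hFr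
    (fun _ => ENNReal.toReal_nonneg) (Nat.one_div_pos_of_nat (α := ℝ) (n := k))
  have hlim : Tendsto (fun k => eLpNorm (⇑(f k) - fun x => (F x).toReal) 1 μ) atTop (𝓝 0) := by
    refine tendsto_of_tendsto_of_tendsto_of_le_of_le tendsto_const_nhds ?_ (fun _ => zero_le) hf
    have h := ENNReal.tendsto_ofReal (tendsto_one_div_add_atTop_nhds_zero_nat (𝕜 := ℝ))
    simpa using ENNReal.Tendsto.mul_const h (.inr (by finiteness : 1 + μ univ ≠ ∞))
  obtain ⟨ns, hns, hae⟩ := (tendstoInMeasure_of_tendsto_eLpNorm one_ne_zero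
    (fun k => (f k).continuous.aestronglyMeasurable) hFr.aestronglyMeasurable
    hlim).exists_seq_tendsto_ae
  have hFfin := ae_lt_top hF hFint
  have hint := ENNReal.tendsto_ofReal (tendsto_integral_of_L1' _ hFr.aestronglyMeasurable
    (.of_forall fun k => (f k).integrable μ) hlim)
  simp only [integral_toReal hF.aemeasurable hFfin, ENNReal.ofReal_toReal hFint,
    ofReal_integral_eq_lintegral_ofReal ((f _).integrable μ)
      (.of_forall fun x => (hfpos _ x).le)] at hint
  refine ⟨fun k => f (ns k), fun k => hfpos (ns k), ?_, hint.comp hns.tendsto_atTop⟩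
  filter_upwards [hae, hFfin] with x hx hxfin
  simpa only [ENNReal.ofReal_toReal hxfin.ne] using ENNReal.tendsto_ofReal hx

end Approximation

section PairOfBoundedContinuous

open TopologicalSpace
open scoped BoundedContinuousFunction

variable {W X Y : Type*} [MeasurableSpace W] {α β : ℝ} {μ : Measure W} {A : W → X} {B : W → Y}

lemma tendsto_rpow_mul_rpow {ι : Type*} {l : Filter ι} {u v : ι → ℝ≥0∞} {a b : ℝ≥0∞} (hα : 0 ≤ α)
    (hβ : 0 ≤ β) (hu : Tendsto u l (𝓝 a)) (hv : Tendsto v l (𝓝 b)) (ha : a ≠ ∞) (hb : b ≠ ∞) :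
    Tendsto (fun k => u k ^ α * v k ^ β) l (𝓝 (a ^ α * b ^ β)) :=
  ENNReal.Tendsto.mul (hu.ennrpow_const α) (.inr (ENNReal.rpow_ne_top_of_nonneg hβ hb))
    (hv.ennrpow_const β) (.inr (ENNReal.rpow_ne_top_of_nonneg hα ha))

lemma HypercontractivePair.of_lintegral_ne_zero_ne_top [MeasurableSpace X] [MeasurableSpace Y]
    (hα : 0 < α) (hβ : 0 < β) (hA : Measurable A) (hB : Measurable B)
    (h : ∀ ⦃F : X → ℝ≥0∞⦄ ⦃G : Y → ℝ≥0∞⦄, Measurable F → Measurable G →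
      ∫⁻ w, F (A w) ∂μ ≠ 0 → ∫⁻ w, F (A w) ∂μ ≠ ∞ → ∫⁻ w, G (B w) ∂μ ≠ 0 → ∫⁻ w, G (B w) ∂μ ≠ ∞ →
      ∫⁻ w, F (A w) ^ α * G (B w) ^ β ∂μ ≤ (∫⁻ w, F (A w) ∂μ) ^ α * (∫⁻ w, G (B w) ∂μ) ^ β) :
    HypercontractivePair α β μ A B := by
  intro F G hF hG
  by_cases hF0 : ∫⁻ w, F (A w) ∂μ = 0
  · have hzero : ∀ᵐ w ∂μ, F (A w) ^ α * G (B w) ^ β = 0 := by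
      filter_upwards [(lintegral_eq_zero_iff (hF.comp hA)).1 hF0] with w hw
      simp [show F (A w) = 0 from hw, hα]
    simp [lintegral_congr_ae hzero]
  by_cases hG0 : ∫⁻ w, G (B w) ∂μ = 0
  · have hzero : ∀ᵐ w ∂μ, F (A w) ^ α * G (B w) ^ β = 0 := by
      filter_upwards [(lintegral_eq_zero_iff (hG.comp hB)).1 hG0] with w hw
      simp [show G (B w) = 0 from hw, hβ]
    simp [lintegral_congr_ae hzero]
  by_cases hFtop : ∫⁻ w, F (A w) ∂μ = ∞
  · simp [hFtop, hα, hG0, hβ.le]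
  by_cases hGtop : ∫⁻ w, G (B w) ∂μ = ∞
  · simp [hGtop, hβ, hF0, hα.le]
  exact h hF hG hF0 hFtop hG0 hGtop

variable [TopologicalSpace X] [PseudoMetrizableSpace X] [MeasurableSpace X] [BorelSpace X]
  [TopologicalSpace Y] [PseudoMetrizableSpace Y] [MeasurableSpace Y] [BorelSpace Y]
  [IsFiniteMeasure μ]

lemma HypercontractivePair.of_boundedContinuous (hα : 0 < α) (hβ : 0 < β) (hA : Measurable A)
    (hB : Measurable B)
    (h : ∀ (f : X →ᵇ ℝ) (g : Y →ᵇ ℝ), (∀ x, 0 < f x) → (∀ y, 0 < g y) →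
      ∫⁻ w, ENNReal.ofReal (f (A w)) ^ α * ENNReal.ofReal (g (B w)) ^ β ∂μ ≤
        (∫⁻ w, ENNReal.ofReal (f (A w)) ∂μ) ^ α * (∫⁻ w, ENNReal.ofReal (g (B w)) ∂μ) ^ β) :
    HypercontractivePair α β μ A B := by
  refine .of_lintegral_ne_zero_ne_top hα hβ hA hB fun F G hF hG hF0 hFtop hG0 hGtop => ?_
  rw [← lintegral_map hF hA] at hF0 hFtop ⊢
  rw [← lintegral_map hG hB] at hG0 hGtop ⊢
  obtain ⟨f, hfpos, hfae, hfint⟩ := exists_boundedContinuous_pos_seq_tendsto hF hFtop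
  obtain ⟨g, hgpos, hgae, hgint⟩ := exists_boundedContinuous_pos_seq_tendsto hG hGtop
  have hrhs := tendsto_rpow_mul_rpow hα.le hβ.le hfint hgint hFtop hGtop
  have hlhs : ∀ᵐ w ∂μ, Tendsto (fun k => ENNReal.ofReal (f k (A w)) ^ α *
      ENNReal.ofReal (g k (B w)) ^ β) atTop (𝓝 (F (A w) ^ α * G (B w) ^ β)) := by
    filter_upwards [ae_of_ae_map hA.aemeasurable hfae, ae_of_ae_map hB.aemeasurable hgae,
      ae_of_ae_map hA.aemeasurable (ae_lt_top hF hFtop),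
      ae_of_ae_map hB.aemeasurable (ae_lt_top hG hGtop)] with w hf hg hFw hGw
    exact tendsto_rpow_mul_rpow hα.le hβ.le hf hg hFw.ne hGw.ne
  have hfm (k : ℕ) : Measurable fun x => ENNReal.ofReal (f k x) :=
    (f k).continuous.measurable.ennreal_ofReal
  have hgm (k : ℕ) : Measurable fun y => ENNReal.ofReal (g k y) :=
    (g k).continuous.measurable.ennreal_ofReal
  calc ∫⁻ w, F (A w) ^ α * G (B w) ^ β ∂μ
      = ∫⁻ w, liminf (fun k => ENNReal.ofReal (f k (A w)) ^ α *
          ENNReal.ofReal (g k (B w)) ^ β) atTop ∂μ :=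
        lintegral_congr_ae (hlhs.mono fun w hw => hw.liminf_eq.symm)
    _ ≤ liminf (fun k => ∫⁻ w, ENNReal.ofReal (f k (A w)) ^ α *
          ENNReal.ofReal (g k (B w)) ^ β ∂μ) atTop :=
        lintegral_liminf_le fun k => (((hfm k).comp hA).pow_const α).mul
          (((hgm k).comp hB).pow_const β)
    _ ≤ liminf (fun k => (∫⁻ x, ENNReal.ofReal (f k x) ∂μ.map A) ^ α *
          (∫⁻ y, ENNReal.ofReal (g k y) ∂μ.map B) ^ β) atTop := by
        refine liminf_le_liminf (.of_forall fun k => ?_)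
        rw [lintegral_map (hfm k) hA, lintegral_map (hgm k) hB]
        exact h (f k) (g k) (hfpos k) (hgpos k)
    _ = (∫⁻ x, F x ∂μ.map A) ^ α * (∫⁻ y, G y ∂μ.map B) ^ β := hrhs.liminf_eq

end PairOfBoundedContinuous

section MonotoneTransport

variable {h k : ℝ → ℝ}

lemma hasDerivAt_integral_Iic (hc : Continuous h) (hi : Integrable h) (x : ℝ) :
    HasDerivAt (fun x => ∫ y in Iic x, h y) (h x) x := by
  have heq : (fun x => ∫ y in Iic x, h y) = fun x => (∫ y in Iic 0, h y) + ∫ y in (0)..x, h y := by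
    ext x
    rw [← intervalIntegral.integral_Iic_sub_Iic hi.integrableOn hi.integrableOn, add_sub_cancel]
  rw [heq]
  exact (hc.integral_hasStrictDerivAt 0 x).hasDerivAt.const_add _

lemma continuous_integral_Iic (hc : Continuous h) (hi : Integrable h) :
    Continuous fun x => ∫ y in Iic x, h y :=
  continuous_iff_continuousAt.2 fun x => (hasDerivAt_integral_Iic hc hi x).continuousAt

lemma strictMono_integral_Iic (hc : Continuous h) (hi : Integrable h) (hpos : ∀ x, 0 < h x) :
    StrictMono fun x => ∫ y in Iic x, h y :=
  strictMono_of_deriv_pos fun x => by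
    rw [(hasDerivAt_integral_Iic hc hi x).deriv]
    exact hpos x

lemma range_integral_Iic (hc : Continuous h) (hi : Integrable h) (hpos : ∀ x, 0 < h x) :
    range (fun x => ∫ y in Iic x, h y) = Ioo 0 (∫ y, h y) := by
  have hmono := strictMono_integral_Iic hc hi hpos
  have hbot : Tendsto (fun x => ∫ y in Iic x, h y) atBot (𝓝 0) :=
    tendsto_integral_Iic_zero tendsto_id
  have htop : Tendsto (fun x => ∫ y in Iic x, h y) atTop (𝓝 (∫ y, h y)) :=
    (aecover_Iic tendsto_id).integral_tendsto_of_countably_generated hi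
  refine Subset.antisymm ?_ fun m hm => ?_
  · rintro _ ⟨x, rfl⟩
    exact ⟨(hmono.monotone.le_of_tendsto hbot (x - 1)).trans_lt (hmono (sub_one_lt x)),
      (hmono (lt_add_one x)).trans_le (hmono.monotone.ge_of_tendsto htop (x + 1))⟩
  · exact mem_range_of_exists_le_of_exists_ge (continuous_integral_Iic hc hi)
      (hbot.eventually_le_const hm.1).exists (htop.eventually_const_le hm.2).exists

lemma exists_hasDerivAt_transport (hc : Continuous h) (hi : Integrable h) (hpos : ∀ x, 0 < h x)
    (kc : Continuous k) (ki : Integrable k) (kpos : ∀ x, 0 < k x) (heq : ∫ x, h x = ∫ x, k x) :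
    ∃ T T' : ℝ → ℝ, (∀ x, 0 < T' x) ∧ (∀ x, HasDerivAt T (T' x) x) ∧
      ∀ x, h x = T' x * k (T x) := by
  have hrange : range (fun x => ∫ y in Iic x, h y) = range fun x => ∫ y in Iic x, k y := by
    rw [range_integral_Iic hc hi hpos, range_integral_Iic kc ki kpos, heq]
  have hemb : Topology.IsOpenEmbedding fun x => ∫ y in Iic x, k y := by
    refine ⟨(strictMono_integral_Iic kc ki kpos).isEmbedding_of_ordConnected ?_, ?_⟩ <;>
      rw [range_integral_Iic kc ki kpos]
    · exact ordConnected_Ioo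
    · exact isOpen_Ioo
  let e := hemb.toOpenPartialHomeomorph
  have hmem (x : ℝ) : ∫ y in Iic x, h y ∈ e.target := by
    rw [hemb.toOpenPartialHomeomorph_target, ← hrange]
    exact mem_range_self x
  let T (x : ℝ) : ℝ := e.symm (∫ y in Iic x, h y)
  refine ⟨T, fun x => (k (T x))⁻¹ * h x, fun x => mul_pos (inv_pos.2 (kpos _)) (hpos x),
    fun x => ?_, fun x => ?_⟩
  · exact (e.hasDerivAt_symm (hmem x) (kpos _).ne' (hasDerivAt_integral_Iic kc ki _)).comp x
      (hasDerivAt_integral_Iic hc hi x)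
  · rw [mul_right_comm, inv_mul_cancel₀ (kpos _).ne', one_mul]

end MonotoneTransport

section CoupledTransport

/-- The map `p ↦ p + α (T ⟪u, p⟫ - ⟪u, p⟫) u + β (S ⟪e, p⟫ - ⟪e, p⟫) e` of the plane, for
`u = (ρ, σ)` and `e = (1, 0)`. It combines monotone transports `T` and `S` along
the directions `u` and `e`. -/
def coupledTransport (ρ σ α β : ℝ) (T S : ℝ → ℝ) (p : ℝ × ℝ) : ℝ × ℝ :=
  (p.1 + α * (T (ρ * p.1 + σ * p.2) - (ρ * p.1 + σ * p.2)) * ρ + β * (S p.1 - p.1),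
    p.2 + α * (T (ρ * p.1 + σ * p.2) - (ρ * p.1 + σ * p.2)) * σ)

/-- The differential of `coupledTransport ρ σ α β T S` at a point where `α (T' - 1) = a` and
`β (S' - 1) = b`. -/
noncomputable def coupledTransportDeriv (ρ σ a b : ℝ) : ℝ × ℝ →L[ℝ] ℝ × ℝ :=
  (Matrix.toLin (Module.Basis.finTwoProd ℝ) (Module.Basis.finTwoProd ℝ)
    !![1 + a * ρ ^ 2 + b, a * ρ * σ; a * ρ * σ, 1 + a * σ ^ 2]).toContinuousLinearMap

variable {ρ σ α β : ℝ} {T S T' S' : ℝ → ℝ}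

lemma hasFDerivAt_coupledTransport (hT : ∀ y, HasDerivAt T (T' y) y)
    (hS : ∀ x, HasDerivAt S (S' x) x) (p : ℝ × ℝ) :
    HasFDerivAt (coupledTransport ρ σ α β T S) (coupledTransportDeriv ρ σ
      (α * (T' (ρ * p.1 + σ * p.2) - 1)) (β * (S' p.1 - 1))) p := by
  have hy : HasFDerivAt (fun p : ℝ × ℝ => ρ * p.1 + σ * p.2)
      (ρ • ContinuousLinearMap.fst ℝ ℝ ℝ + σ • ContinuousLinearMap.snd ℝ ℝ ℝ) p :=
    (hasFDerivAt_fst.const_mul ρ).add (hasFDerivAt_snd.const_mul σ)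
  have hTy := (((hT _).comp_hasFDerivAt p hy).sub hy).const_mul α
  have hx : HasFDerivAt (fun p : ℝ × ℝ => p.1) (ContinuousLinearMap.fst ℝ ℝ ℝ) p :=
    hasFDerivAt_fst
  have hSx := (((hS p.1).comp_hasFDerivAt (f := Prod.fst) p hx).sub hx).const_mul β
  refine (((hx.add (hTy.mul_const ρ)).add hSx).prodMk
    (hasFDerivAt_snd.add (hTy.mul_const σ))).congr_fderiv ?_
  rw [coupledTransportDeriv, Matrix.toLin_finTwoProd_toContinuousLinearMap]
  ext <;> simp <;> ring

lemma det_coupledTransportDeriv (hρσ : ρ ^ 2 + σ ^ 2 = 1) (a b : ℝ) :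
    (coupledTransportDeriv ρ σ a b).det = 1 + a + b + a * b * σ ^ 2 := by
  rw [coupledTransportDeriv, LinearMap.det_toContinuousLinearMap, LinearMap.det_toLin,
    Matrix.det_fin_two_of]
  linear_combination a * hρσ

lemma rpow_mul_rpow_le_det_coupledTransportDeriv (hρσ : ρ ^ 2 + σ ^ 2 = 1)
    (hα : α ∈ Icc 0 1) (hβ : β ∈ Icc 0 1) (hαβ : ρ ^ 2 * (α * β) ≤ (1 - α) * (1 - β))
    {t s : ℝ} (ht : 0 < t) (hs : 0 < s) :
    t ^ α * s ^ β ≤ (coupledTransportDeriv ρ σ (α * (t - 1)) (β * (s - 1))).det := by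
  have hσ : σ ^ 2 ≤ 1 := by linarith [sq_nonneg ρ]
  have hw₁ : 0 ≤ α * β * σ ^ 2 := mul_nonneg (mul_nonneg hα.1 hβ.1) (sq_nonneg σ)
  have hw₂ : 0 ≤ α - α * β * σ ^ 2 := by
    nlinarith [mul_nonneg hα.1 (sub_nonneg.2 (mul_le_one₀ hβ.2 (sq_nonneg σ) hσ))]
  have hw₃ : 0 ≤ β - α * β * σ ^ 2 := by
    nlinarith [mul_nonneg hβ.1 (sub_nonneg.2 (mul_le_one₀ hα.2 (sq_nonneg σ) hσ))]
  have hw₀ : 0 ≤ 1 - α - β + α * β * σ ^ 2 := by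
    linear_combination hαβ - α * β * hρσ
  calc t ^ α * s ^ β
      = 1 ^ (1 - α - β + α * β * σ ^ 2) * (t * s) ^ (α * β * σ ^ 2) * t ^ (α - α * β * σ ^ 2) *
          s ^ (β - α * β * σ ^ 2) := by
        rw [one_rpow, one_mul, mul_rpow ht.le hs.le, rpow_sub ht, rpow_sub hs]
        field_simp
    _ ≤ (1 - α - β + α * β * σ ^ 2) * 1 + α * β * σ ^ 2 * (t * s) + (α - α * β * σ ^ 2) * t +
          (β - α * β * σ ^ 2) * s :=
        geom_mean_le_arith_mean4_weighted hw₀ hw₁ hw₂ hw₃ zero_le_one (mul_pos ht hs).le ht.le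
          hs.le (by ring)
    _ = _ := by rw [det_coupledTransportDeriv hρσ]; ring

lemma sq_coupledTransport_le (hρσ : ρ ^ 2 + σ ^ 2 = 1) (hα : α ∈ Ico 0 1) (hβ : 0 ≤ β)
    (hαβ : ρ ^ 2 * (α * β) ≤ (1 - α) * (1 - β)) (T S : ℝ → ℝ) (p : ℝ × ℝ) :
    (coupledTransport ρ σ α β T S p).1 ^ 2 + (coupledTransport ρ σ α β T S p).2 ^ 2 ≤
      p.1 ^ 2 + p.2 ^ 2 + α * (T (ρ * p.1 + σ * p.2) ^ 2 - (ρ * p.1 + σ * p.2) ^ 2) +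
        β * (S p.1 ^ 2 - p.1 ^ 2) := by
  obtain ⟨x, z⟩ := p
  simp only [coupledTransport]
  set y := ρ * x + σ * z
  have hquad (τ ς : ℝ) : 0 ≤ α * (1 - α) * τ ^ 2 + β * (1 - β) * ς ^ 2 - 2 * α * β * ρ * τ * ς := by
    have hα' : 0 < 1 - α := sub_pos.2 hα.2
    refine nonneg_of_mul_nonneg_right (a := 1 - α) ?_ hα'
    linear_combination mul_nonneg hα.1 (sq_nonneg ((1 - α) * τ - β * ρ * ς)) +
      mul_le_mul_of_nonneg_left hαβ (mul_nonneg hβ (sq_nonneg ς))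
  linear_combination hquad (T y - y) (S x - x) + α ^ 2 * (T y - y) ^ 2 * hρσ

lemma coupledTransport_injective (hρσ : ρ ^ 2 + σ ^ 2 = 1) (hα : α ∈ Ico 0 1) (hβ : 0 < β)
    (hαβ : ρ ^ 2 * (α * β) ≤ (1 - α) * (1 - β)) (hT : Monotone T) (hS : StrictMono S) :
    Function.Injective (coupledTransport ρ σ α β T S) := by
  intro p q hpq
  obtain ⟨hfst, hsnd⟩ := Prod.ext_iff.1 hpq
  simp only [coupledTransport] at hfst hsnd
  have hTy := (hT.monovary monotone_id).sub_mul_sub_nonneg (ρ * q.1 + σ * q.2) (ρ * p.1 + σ * p.2)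
  have hSx := (hS.monotone.monovary monotone_id).sub_mul_sub_nonneg q.1 p.1
  simp only [id] at hTy hSx
  have hασ : 0 < 1 - α * σ ^ 2 := by
    linear_combination hα.2 + α * hρσ + mul_nonneg hα.1 (sq_nonneg ρ)
  have hquad (x z : ℝ) : 0 ≤ x ^ 2 + z ^ 2 - α * (ρ * x + σ * z) ^ 2 - β * x ^ 2 := by
    refine nonneg_of_mul_nonneg_right (a := 1 - α * σ ^ 2) ?_ hασ
    linear_combination sq_nonneg ((1 - α * σ ^ 2) * z - α * ρ * σ * x) + x ^ 2 * hαβ +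
      α * x ^ 2 * (1 - β) * hρσ
  -- Pairing the (vanishing) difference of the images with `p - q` gives a zero sum of three
  -- nonnegative terms.
  have hsum : ((p.1 - q.1) ^ 2 + (p.2 - q.2) ^ 2 -
      α * (ρ * (p.1 - q.1) + σ * (p.2 - q.2)) ^ 2 - β * (p.1 - q.1) ^ 2) +
      α * ((T (ρ * p.1 + σ * p.2) - T (ρ * q.1 + σ * q.2)) *
        (ρ * p.1 + σ * p.2 - (ρ * q.1 + σ * q.2))) + β * ((S p.1 - S q.1) * (p.1 - q.1)) = 0 := by
    linear_combination (p.1 - q.1) * hfst + (p.2 - q.2) * hsnd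
  have hx : p.1 = q.1 := by
    have h0 : (S p.1 - S q.1) * (p.1 - q.1) = 0 := by
      refine le_antisymm (nonpos_of_mul_nonpos_right (a := β) ?_ hβ) hSx
      linear_combination hsum + hquad (p.1 - q.1) (p.2 - q.2) + mul_nonneg hα.1 hTy
    rcases mul_eq_zero.1 h0 with h | h
    · exact hS.injective (sub_eq_zero.1 h)
    · exact sub_eq_zero.1 h
  have hz : (p.2 - q.2) ^ 2 = 0 := by
    refine le_antisymm (nonpos_of_mul_nonpos_right (a := 1 - α * σ ^ 2) ?_ hασ) (sq_nonneg _)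
    rw [hx] at hsum hTy
    linear_combination hsum + mul_nonneg hα.1 hTy
  exact Prod.ext hx (sub_eq_zero.1 (pow_eq_zero_iff two_ne_zero |>.1 hz))

end CoupledTransport

section GaussianPlane

variable {ρ σ α β : ℝ}

lemma gaussianPDFReal_zero_one (x : ℝ) :
    gaussianPDFReal 0 1 x = (√(2 * π))⁻¹ * rexp (-x ^ 2 / 2) := by
  simp [gaussianPDFReal]

lemma exists_hasDerivAt_gaussian_transport {f : ℝ → ℝ} (hc : Continuous f)
    (hi : Integrable f (gaussianReal 0 1)) (hpos : ∀ x, 0 < f x) :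
    ∃ T T' : ℝ → ℝ, (∀ x, 0 < T' x) ∧ (∀ x, HasDerivAt T (T' x) x) ∧
      ∀ x, f x = (∫ y, f y ∂gaussianReal 0 1) * (T' x * rexp ((x ^ 2 - T x ^ 2) / 2)) := by
  have hφc : Continuous (gaussianPDFReal 0 1) := by
    simp only [funext gaussianPDFReal_zero_one]
    fun_prop
  have hφpos (x : ℝ) : 0 < gaussianPDFReal 0 1 x := gaussianPDFReal_pos 0 1 x one_ne_zero
  set m := ∫ y, f y ∂gaussianReal 0 1 with hm
  have hmφ : ∫ x, gaussianPDFReal 0 1 x * f x = m := by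
    simp only [hm, integral_gaussianReal_eq_integral_smul one_ne_zero, smul_eq_mul]
  have hmpos : 0 < m := by
    refine (integral_pos_iff_support_of_nonneg (fun x => (hpos x).le) hi).2 ?_
    rw [Function.support_eq_univ fun x => (hpos x).ne', measure_univ]
    exact one_pos
  have hfφ : Integrable fun x => gaussianPDFReal 0 1 x * f x := by
    rw [gaussianReal_of_var_ne_zero _ one_ne_zero, integrable_withDensity_iff_integrable_smul'
      (measurable_gaussianPDF 0 1) (.of_forall fun _ => gaussianPDF_lt_top)] at hi
    simpa only [toReal_gaussianPDF, smul_eq_mul] using hi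
  have hmass : ∫ x, gaussianPDFReal 0 1 x * f x / m = ∫ x, gaussianPDFReal 0 1 x := by
    rw [integral_div, hmφ, div_self hmpos.ne', integral_gaussianPDFReal_eq_one 0 one_ne_zero]
  obtain ⟨T, T', hT'pos, hT, hfT⟩ := exists_hasDerivAt_transport ((hφc.mul hc).div_const m)
    (hfφ.div_const m) (fun x => div_pos (mul_pos (hφpos x) (hpos x)) hmpos) hφc
    (integrable_gaussianPDFReal 0 1) hφpos hmass
  refine ⟨T, T', hT'pos, hT, fun x => mul_left_cancel₀ (hφpos x).ne' ?_⟩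
  have hφT : gaussianPDFReal 0 1 (T x) =
      gaussianPDFReal 0 1 x * rexp ((x ^ 2 - T x ^ 2) / 2) := by
    rw [gaussianPDFReal_zero_one, gaussianPDFReal_zero_one, mul_assoc, ← Real.exp_add]
    ring_nf
  have hx : gaussianPDFReal 0 1 x * f x = T' x * gaussianPDFReal 0 1 (T x) * m :=
    (div_eq_iff hmpos.ne').1 (hfT x)
  rw [hx, hφT]
  ring

lemma gaussianReal_prod_gaussianReal : (gaussianReal 0 1).prod (gaussianReal 0 1) =
    volume.withDensity fun p : ℝ × ℝ => gaussianPDF 0 1 p.1 * gaussianPDF 0 1 p.2 := by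
  rw [gaussianReal_of_var_ne_zero _ one_ne_zero, prod_withDensity (measurable_gaussianPDF _ _)
    (measurable_gaussianPDF _ _)]
  rfl

lemma lintegral_gaussianPDF_mul_gaussianPDF :
    ∫⁻ p : ℝ × ℝ, gaussianPDF 0 1 p.1 * gaussianPDF 0 1 p.2 = 1 := by
  rw [← setLIntegral_univ, ← withDensity_apply _ MeasurableSet.univ,
    ← gaussianReal_prod_gaussianReal, measure_univ]

variable {T S T' S' : ℝ → ℝ}

lemma rpow_mul_rpow_mul_gaussianPDFReal_le (hρσ : ρ ^ 2 + σ ^ 2 = 1) (hα : α ∈ Ioo 0 1)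
    (hβ : β ∈ Ioo 0 1) (hαβ : ρ ^ 2 * (α * β) ≤ (1 - α) * (1 - β)) (hT' : ∀ y, 0 < T' y)
    (hS' : ∀ x, 0 < S' x) (p : ℝ × ℝ) :
    gaussianPDFReal 0 1 p.1 * gaussianPDFReal 0 1 p.2 *
        ((T' (ρ * p.1 + σ * p.2) *
          rexp (((ρ * p.1 + σ * p.2) ^ 2 - T (ρ * p.1 + σ * p.2) ^ 2) / 2)) ^ α *
        (S' p.1 * rexp ((p.1 ^ 2 - S p.1 ^ 2) / 2)) ^ β) ≤
      (coupledTransportDeriv ρ σ (α * (T' (ρ * p.1 + σ * p.2) - 1)) (β * (S' p.1 - 1))).det *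
        (gaussianPDFReal 0 1 (coupledTransport ρ σ α β T S p).1 *
          gaussianPDFReal 0 1 (coupledTransport ρ σ α β T S p).2) := by
  have hdet := rpow_mul_rpow_le_det_coupledTransportDeriv hρσ (Ioo_subset_Icc_self hα)
    (Ioo_subset_Icc_self hβ) hαβ (hT' (ρ * p.1 + σ * p.2)) (hS' p.1)
  have hsq := sq_coupledTransport_le hρσ (Ioo_subset_Ico_self hα) hβ.1.le hαβ T S p
  have hφ (u v : ℝ) : gaussianPDFReal 0 1 u * gaussianPDFReal 0 1 v =
      (2 * π)⁻¹ * rexp (-(u ^ 2 + v ^ 2) / 2) := by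
    rw [gaussianPDFReal_zero_one, gaussianPDFReal_zero_one, mul_mul_mul_comm, ← mul_inv,
      Real.mul_self_sqrt (by positivity), ← Real.exp_add]
    ring_nf
  rw [hφ, hφ, mul_rpow (hT' _).le (Real.exp_pos _).le, mul_rpow (hS' _).le (Real.exp_pos _).le,
    ← Real.exp_mul, ← Real.exp_mul]
  set y := ρ * p.1 + σ * p.2
  calc (2 * π)⁻¹ * rexp (-(p.1 ^ 2 + p.2 ^ 2) / 2) *
        (T' y ^ α * rexp ((y ^ 2 - T y ^ 2) / 2 * α) *
          (S' p.1 ^ β * rexp ((p.1 ^ 2 - S p.1 ^ 2) / 2 * β)))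
      = T' y ^ α * S' p.1 ^ β * ((2 * π)⁻¹ * rexp (-(p.1 ^ 2 + p.2 ^ 2 +
          α * (T y ^ 2 - y ^ 2) + β * (S p.1 ^ 2 - p.1 ^ 2)) / 2)) := by
        rw [show -(p.1 ^ 2 + p.2 ^ 2 + α * (T y ^ 2 - y ^ 2) + β * (S p.1 ^ 2 - p.1 ^ 2)) / 2 =
          -(p.1 ^ 2 + p.2 ^ 2) / 2 + (y ^ 2 - T y ^ 2) / 2 * α + (p.1 ^ 2 - S p.1 ^ 2) / 2 * β
          by ring, Real.exp_add, Real.exp_add]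
        ring
    _ ≤ _ := by
        have hdet0 :=
          (mul_pos (rpow_pos_of_pos (hT' y) α) (rpow_pos_of_pos (hS' p.1) β)).le.trans hdet
        gcongr

lemma lintegral_rpow_mul_rpow_le_one (hρσ : ρ ^ 2 + σ ^ 2 = 1) (hα : α ∈ Ioo 0 1)
    (hβ : β ∈ Ioo 0 1) (hαβ : ρ ^ 2 * (α * β) ≤ (1 - α) * (1 - β)) (hT' : ∀ y, 0 < T' y)
    (hS' : ∀ x, 0 < S' x) (hT : ∀ y, HasDerivAt T (T' y) y) (hS : ∀ x, HasDerivAt S (S' x) x) :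
    ∫⁻ p : ℝ × ℝ, ENNReal.ofReal ((T' (ρ * p.1 + σ * p.2) *
          rexp (((ρ * p.1 + σ * p.2) ^ 2 - T (ρ * p.1 + σ * p.2) ^ 2) / 2)) ^ α *
        (S' p.1 * rexp ((p.1 ^ 2 - S p.1 ^ 2) / 2)) ^ β)
      ∂(gaussianReal 0 1).prod (gaussianReal 0 1) ≤ 1 := by
  have hinj := coupledTransport_injective hρσ (Ioo_subset_Ico_self hα) hβ.1 hαβ
    (strictMono_of_hasDerivAt_pos hT hT').monotone (strictMono_of_hasDerivAt_pos hS hS')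
  have hφ (u v : ℝ) : 0 ≤ gaussianPDFReal 0 1 u * gaussianPDFReal 0 1 v :=
    mul_nonneg (gaussianPDFReal_nonneg _ _ _) (gaussianPDFReal_nonneg _ _ _)
  set Φ := coupledTransport ρ σ α β T S
  set J := fun p : ℝ × ℝ =>
    coupledTransportDeriv ρ σ (α * (T' (ρ * p.1 + σ * p.2) - 1)) (β * (S' p.1 - 1))
  rw [gaussianReal_prod_gaussianReal]
  calc _ ≤ _ := lintegral_withDensity_le_lintegral_mul _ (by fun_prop) _
    _ ≤ ∫⁻ p, ENNReal.ofReal |(J p).det| * (gaussianPDF 0 1 (Φ p).1 * gaussianPDF 0 1 (Φ p).2) := by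
        refine lintegral_mono fun p => ?_
        simp only [Pi.mul_apply, gaussianPDF, ← ENNReal.ofReal_mul (gaussianPDFReal_nonneg _ _ _)]
        rw [← ENNReal.ofReal_mul (hφ _ _), ← ENNReal.ofReal_mul (abs_nonneg _)]
        exact ENNReal.ofReal_le_ofReal
          ((rpow_mul_rpow_mul_gaussianPDFReal_le hρσ hα hβ hαβ hT' hS' p).trans
            (mul_le_mul_of_nonneg_right (le_abs_self _) (hφ _ _)))
    _ = ∫⁻ p in range Φ, gaussianPDF 0 1 p.1 * gaussianPDF 0 1 p.2 := by
        rw [← image_univ, lintegral_image_eq_lintegral_abs_det_fderiv_mul volume .univ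
          (fun p _ => (hasFDerivAt_coupledTransport hT hS p).hasFDerivWithinAt) hinj.injOn
          (fun p : ℝ × ℝ => gaussianPDF 0 1 p.1 * gaussianPDF 0 1 p.2), setLIntegral_univ]
    _ ≤ 1 := lintegral_gaussianPDF_mul_gaussianPDF ▸ setLIntegral_le_lintegral _ _

lemma lintegral_ofReal_rpow_mul_rpow_le (hρσ : ρ ^ 2 + σ ^ 2 = 1) (hα : α ∈ Ioo 0 1)
    (hβ : β ∈ Ioo 0 1) (hαβ : ρ ^ 2 * (α * β) ≤ (1 - α) * (1 - β)) {f g : ℝ → ℝ}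
    (hfc : Continuous f) (hfi : Integrable f (gaussianReal 0 1)) (hfpos : ∀ x, 0 < f x)
    (hgc : Continuous g) (hgi : Integrable g (gaussianReal 0 1)) (hgpos : ∀ x, 0 < g x) :
    ∫⁻ p : ℝ × ℝ, ENNReal.ofReal (f (ρ * p.1 + σ * p.2)) ^ α * ENNReal.ofReal (g p.1) ^ β
        ∂(gaussianReal 0 1).prod (gaussianReal 0 1) ≤
      ENNReal.ofReal (∫ x, f x ∂gaussianReal 0 1) ^ α *
        ENNReal.ofReal (∫ x, g x ∂gaussianReal 0 1) ^ β := by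
  obtain ⟨T, T', hT', hT, hfT⟩ := exists_hasDerivAt_gaussian_transport hfc hfi hfpos
  obtain ⟨S, S', hS', hS, hgS⟩ := exists_hasDerivAt_gaussian_transport hgc hgi hgpos
  set m := ∫ x, f x ∂gaussianReal 0 1
  set k := ∫ x, g x ∂gaussianReal 0 1
  have hm : 0 ≤ m := integral_nonneg fun x => (hfpos x).le
  have hk : 0 ≤ k := integral_nonneg fun x => (hgpos x).le
  have hsplit {c u γ : ℝ} (hc : 0 ≤ c) (hu : 0 < u) (hγ : 0 ≤ γ) :
      ENNReal.ofReal (c * u) ^ γ = ENNReal.ofReal c ^ γ * ENNReal.ofReal (u ^ γ) := by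
    rw [ENNReal.ofReal_mul hc, ENNReal.mul_rpow_of_nonneg _ _ hγ, ENNReal.ofReal_rpow_of_pos hu]
  set u := fun y => T' y * rexp ((y ^ 2 - T y ^ 2) / 2)
  set v := fun x => S' x * rexp ((x ^ 2 - S x ^ 2) / 2)
  have hu (y : ℝ) : 0 < u y := mul_pos (hT' y) (Real.exp_pos _)
  have hv (x : ℝ) : 0 < v x := mul_pos (hS' x) (Real.exp_pos _)
  calc ∫⁻ p : ℝ × ℝ, ENNReal.ofReal (f (ρ * p.1 + σ * p.2)) ^ α * ENNReal.ofReal (g p.1) ^ β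
        ∂(gaussianReal 0 1).prod (gaussianReal 0 1)
      = ∫⁻ p : ℝ × ℝ, ENNReal.ofReal m ^ α * ENNReal.ofReal k ^ β *
          ENNReal.ofReal (u (ρ * p.1 + σ * p.2) ^ α * v p.1 ^ β)
          ∂(gaussianReal 0 1).prod (gaussianReal 0 1) := by
        congr! 2 with p
        rw [hfT, hgS, hsplit hm (hu _) hα.1.le, hsplit hk (hv _) hβ.1.le,
          ENNReal.ofReal_mul (rpow_nonneg (hu _).le _), mul_mul_mul_comm]
    _ = ENNReal.ofReal m ^ α * ENNReal.ofReal k ^ β *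
          ∫⁻ p : ℝ × ℝ, ENNReal.ofReal (u (ρ * p.1 + σ * p.2) ^ α * v p.1 ^ β)
            ∂(gaussianReal 0 1).prod (gaussianReal 0 1) :=
        lintegral_const_mul' _ _ (ENNReal.mul_ne_top
          (ENNReal.rpow_ne_top_of_nonneg hα.1.le ENNReal.ofReal_ne_top)
          (ENNReal.rpow_ne_top_of_nonneg hβ.1.le ENNReal.ofReal_ne_top))
    _ ≤ _ := mul_le_of_le_one_right' (lintegral_rpow_mul_rpow_le_one hρσ hα hβ hαβ hT' hS' hT hS)

lemma measurePreserving_smul_add_smul {E : Type*} [NormedAddCommGroup E] [NormedSpace ℝ E]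
    [MeasurableSpace E] [BorelSpace E] [SecondCountableTopology E] [CompleteSpace E]
    {μ : Measure E} [IsGaussian μ] (hμ : ∫ x, x ∂μ = 0) (hρσ : ρ ^ 2 + σ ^ 2 = 1) :
    MeasurePreserving (fun p : E × E => ρ • p.1 + σ • p.2) (μ.prod μ) μ := by
  have hnorm : ‖(⟨ρ, σ⟩ : ℂ)‖ = 1 := by
    rw [← sq_eq_sq₀ (norm_nonneg _) zero_le_one, Complex.sq_norm, Complex.normSq_mk]
    linear_combination hρσ
  obtain ⟨θ, hθ⟩ := (Complex.norm_eq_one_iff _).1 hnorm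
  obtain ⟨rfl, rfl⟩ : cos θ = ρ ∧ sin θ = σ := by
    simpa [Complex.exp_ofReal_mul_I_re, Complex.exp_ofReal_mul_I_im] using Complex.ext_iff.1 hθ
  have hrot : MeasurePreserving (ContinuousLinearMap.rotation θ : E × E →L[ℝ] E × E)
      (μ.prod μ) (μ.prod μ) :=
    ⟨(ContinuousLinearMap.rotation θ : E × E →L[ℝ] E × E).measurable,
      IsGaussian.map_rotation_eq_self hμ θ⟩
  exact measurePreserving_fst.comp hrot

lemma hypercontractivePair_gaussianReal (hρσ : ρ ^ 2 + σ ^ 2 = 1) (hα : α ∈ Ioo 0 1)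
    (hβ : β ∈ Ioo 0 1) (hαβ : ρ ^ 2 * (α * β) ≤ (1 - α) * (1 - β)) :
    HypercontractivePair α β ((gaussianReal 0 1).prod (gaussianReal 0 1))
      (fun p => ρ * p.1 + σ * p.2) Prod.fst := by
  have hrot : MeasurePreserving (fun p : ℝ × ℝ => ρ * p.1 + σ * p.2)
      ((gaussianReal 0 1).prod (gaussianReal 0 1)) (gaussianReal 0 1) :=
    measurePreserving_smul_add_smul integral_id_gaussianReal hρσ
  refine .of_boundedContinuous hα.1 hβ.1 hrot.measurable measurable_fst fun f g hf hg => ?_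
  rw [hrot.lintegral_comp (f := fun x => ENNReal.ofReal (f x))
      f.continuous.measurable.ennreal_ofReal,
    measurePreserving_fst.lintegral_comp (f := fun x => ENNReal.ofReal (g x))
      g.continuous.measurable.ennreal_ofReal,
    ← ofReal_integral_eq_lintegral_ofReal (f.integrable _) (.of_forall fun x => (hf x).le),
    ← ofReal_integral_eq_lintegral_ofReal (g.integrable _) (.of_forall fun x => (hg x).le)]
  exact lintegral_ofReal_rpow_mul_rpow_le hρσ hα hβ hαβ f.continuous (f.integrable _) hf
    g.continuous (g.integrable _) hg

end GaussianPlane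

section StdGaussian

variable {E : Type*} [NormedAddCommGroup E] [InnerProductSpace ℝ E] [FiniteDimensional ℝ E]
  [MeasurableSpace E] [BorelSpace E] {ρ σ α β : ℝ}

lemma hypercontractivePair_stdGaussian (hρσ : ρ ^ 2 + σ ^ 2 = 1) (hα : α ∈ Ioo 0 1)
    (hβ : β ∈ Ioo 0 1) (hαβ : ρ ^ 2 * (α * β) ≤ (1 - α) * (1 - β)) :
    HypercontractivePair α β ((stdGaussian E).prod (stdGaussian E))
      (fun p => ρ • p.1 + σ • p.2) Prod.fst := by
  let L (c : Fin (Module.finrank ℝ E) → ℝ) : E := ∑ i, c i • stdOrthonormalBasis ℝ E i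
  have hL : Measurable L := by fun_prop
  have hpi := ((hypercontractivePair_gaussianReal hρσ hα hβ hαβ).piMap (by fun_prop)
    measurable_fst (Module.finrank ℝ E)).comp hL hL
  have hstd : stdGaussian E = (Measure.pi fun _ => gaussianReal 0 1).map L := rfl
  rw [hstd, Measure.map_prod_map _ _ hL hL,
    ← (measurePreserving_arrowProdEquivProdArrow ℝ ℝ _ _ _).map_eq]
  refine .map (by fun_prop) (by fun_prop) (by fun_prop) ?_
  refine .map (MeasurableEquiv.measurable _) (by fun_prop) (by fun_prop) ?_
  convert hpi using 1
  · ext c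
    simp [L, MeasurableEquiv.arrowProdEquivProdArrow, Equiv.arrowProdEquivProdArrow, add_smul,
      mul_smul, Finset.sum_add_distrib, Finset.smul_sum]
  · rfl

end StdGaussian

section Duality

variable {X : Type*} [MeasurableSpace X] {μ : Measure X} [IsFiniteMeasure μ]

lemma lintegral_rpow_le_of_forall_lintegral_mul_rpow_le {q : ℝ} (hq : 1 < q) {g : X → ℝ≥0∞}
    {C : ℝ≥0∞} (h : ∀ ⦃G : X → ℝ≥0∞⦄, Measurable G →
      ∫⁻ x, g x * G x ^ (1 - q⁻¹) ∂μ ≤ C * (∫⁻ x, G x ∂μ) ^ (1 - q⁻¹)) :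
    (∫⁻ x, g x ^ q ∂μ) ^ (q⁻¹) ≤ C := by
  have hq0 : 0 < q := one_pos.trans hq
  have hβ : 0 ≤ 1 - q⁻¹ := sub_nonneg.2 (inv_le_one_of_one_le₀ hq.le)
  have hq1 : q⁻¹ + (1 - q⁻¹) = 1 := add_sub_cancel _ _
  -- Simple functions `φ ≤ g ^ q` have finite integral, so that one may test against `φ` and divide.
  rw [ENNReal.rpow_inv_le_iff hq0, lintegral_eq_nnreal]
  refine iSup₂_le fun φ hφ => ?_
  rw [← ENNReal.rpow_inv_le_iff hq0, ← SimpleFunc.lintegral_eq_lintegral]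
  simp only [SimpleFunc.coe_map, Function.comp_apply]
  have hφfin : ∫⁻ x, φ x ∂μ ≠ ∞ := by
    obtain ⟨c, hc⟩ := φ.exists_forall_le
    exact (IsFiniteMeasure.lintegral_lt_top_of_bounded_to_ennreal μ
      ⟨c, fun x => ENNReal.coe_le_coe.2 (hc x)⟩).ne
  rcases eq_or_ne (∫⁻ x, (φ x : ℝ≥0∞) ∂μ) 0 with hφ0 | hφ0
  · simp [hφ0, hq0]
  have hφg (x : X) : (φ x : ℝ≥0∞) ≤ g x * (φ x : ℝ≥0∞) ^ (1 - q⁻¹) := by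
    calc (φ x : ℝ≥0∞) = (φ x : ℝ≥0∞) ^ (q⁻¹) * (φ x : ℝ≥0∞) ^ (1 - q⁻¹) := by
          rw [← ENNReal.rpow_add_of_nonneg _ _ (inv_nonneg.2 hq0.le) hβ, hq1, ENNReal.rpow_one]
      _ ≤ g x * (φ x : ℝ≥0∞) ^ (1 - q⁻¹) := by
          gcongr
          exact (ENNReal.rpow_inv_le_iff hq0).2 (hφ x)
  refine (ENNReal.mul_le_mul_iff_left (ENNReal.rpow_pos (pos_iff_ne_zero.2 hφ0) hφfin).ne'
    (ENNReal.rpow_ne_top_of_nonneg hβ hφfin)).1 ?_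
  calc (∫⁻ x, φ x ∂μ) ^ (q⁻¹) * (∫⁻ x, φ x ∂μ) ^ (1 - q⁻¹)
      = ∫⁻ x, φ x ∂μ := by
        rw [← ENNReal.rpow_add_of_nonneg _ _ (inv_nonneg.2 hq0.le) hβ, hq1, ENNReal.rpow_one]
    _ ≤ ∫⁻ x, g x * (φ x : ℝ≥0∞) ^ (1 - q⁻¹) ∂μ := lintegral_mono hφg
    _ ≤ C * (∫⁻ x, φ x ∂μ) ^ (1 - q⁻¹) := h φ.measurable.coe_nnreal_ennreal

lemma HypercontractivePair.lintegral_lintegral_rpow_le {Y Z : Type*} [MeasurableSpace Y]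
    [MeasurableSpace Z] {ν : Measure Y} [IsProbabilityMeasure ν] {A : X × Y → Z}
    (hA : Measurable A) {p q : ℝ} (hp : 0 < p) (hq : 1 < q)
    (h : HypercontractivePair p⁻¹ (1 - q⁻¹) (μ.prod ν) A Prod.fst) {f : Z → ℝ≥0∞}
    (hf : Measurable f) :
    (∫⁻ x, (∫⁻ y, f (A (x, y)) ∂ν) ^ q ∂μ) ^ q⁻¹ ≤ (∫⁻ w, f (A w) ^ p ∂μ.prod ν) ^ p⁻¹ := by
  refine lintegral_rpow_le_of_forall_lintegral_mul_rpow_le hq fun G hG => ?_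
  calc ∫⁻ x, (∫⁻ y, f (A (x, y)) ∂ν) * G x ^ (1 - q⁻¹) ∂μ
      = ∫⁻ w, f (A w) * G w.1 ^ (1 - q⁻¹) ∂μ.prod ν := by
        rw [lintegral_prod _ (by fun_prop)]
        exact lintegral_congr fun x => (lintegral_mul_const _ (by fun_prop)).symm
    _ = ∫⁻ w, (f (A w) ^ p) ^ p⁻¹ * G w.1 ^ (1 - q⁻¹) ∂μ.prod ν := by
        simp only [ENNReal.rpow_rpow_inv hp.ne']
    _ ≤ (∫⁻ w, f (A w) ^ p ∂μ.prod ν) ^ p⁻¹ * (∫⁻ w, G w.1 ∂μ.prod ν) ^ (1 - q⁻¹) :=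
        h (hf.pow_const p) hG
    _ = (∫⁻ w, f (A w) ^ p ∂μ.prod ν) ^ p⁻¹ * (∫⁻ x, G x ∂μ) ^ (1 - q⁻¹) := by
        rw [measurePreserving_fst.lintegral_comp hG]

end Duality

section HeatMeasure

variable {E : Type*} [NormedAddCommGroup E] [InnerProductSpace ℝ E] [FiniteDimensional ℝ E]
  [MeasurableSpace E]

/-- The law at time `t` of the diffusion with generator `Δ` (not `Δ / 2`) started at `x`, that is,
the Gaussian measure centred at `x` whose coordinates have variance `2 * t`. -/
noncomputable def heatMeasure (t : ℝ) (x : E) : Measure E :=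
  (stdGaussian E).map fun z => x + √(2 * t) • z

variable [BorelSpace E] {s t : ℝ}

lemma lintegral_heatMeasure {f : E → ℝ≥0∞} (hf : Measurable f) (t : ℝ) (x : E) :
    ∫⁻ y, f y ∂heatMeasure t x = ∫⁻ z, f (x + √(2 * t) • z) ∂stdGaussian E :=
  lintegral_map hf (by fun_prop)

lemma measurable_lintegral_heatMeasure {f : E → ℝ≥0∞} (hf : Measurable f) (t : ℝ) :
    Measurable fun x => ∫⁻ y, f y ∂heatMeasure t x := by
  simp only [lintegral_heatMeasure hf]
  exact Measurable.lintegral_prod_right' (f := fun p : E × E => f (p.1 + √(2 * t) • p.2))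
    (by fun_prop)

lemma div_mul_inv_mul_one_sub_inv_le (hs : 0 < s) (ht : 0 < t) {p q : ℝ} (hp : 1 < p) (hq : 0 < q)
    (hpq : (q - 1) / (p - 1) ≤ t / s) : s / t * (p⁻¹ * (1 - q⁻¹)) ≤ (1 - p⁻¹) * q⁻¹ := by
  have hp0 : 0 < p := one_pos.trans hp
  rw [div_le_div_iff₀ (sub_pos.2 hp) hs] at hpq
  calc s / t * (p⁻¹ * (1 - q⁻¹)) = (q - 1) * s / (t * p * q) := by field_simp
    _ ≤ t * (p - 1) / (t * p * q) := by gcongr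
    _ = (1 - p⁻¹) * q⁻¹ := by field_simp

lemma heatMeasure_hypercontractivity (hs : 0 < s) (hst : s ≤ t) {p q : ℝ} (hp : 1 < p) (hq : 1 < q)
    (hpq : (q - 1) / (p - 1) ≤ t / s) {f : E → ℝ≥0∞} (hf : Measurable f) (x : E) :
    (∫⁻ y, (∫⁻ z, f z ∂heatMeasure (t - s) y) ^ q ∂heatMeasure s x) ^ q⁻¹ ≤
      (∫⁻ z, f z ^ p ∂heatMeasure t x) ^ p⁻¹ := by
  have ht : 0 < t := hs.trans_le hst
  have hst1 : s / t ≤ 1 := (div_le_one ht).2 hst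
  have hρσ : √(s / t) ^ 2 + √(1 - s / t) ^ 2 = 1 := by
    rw [Real.sq_sqrt (by positivity), Real.sq_sqrt (sub_nonneg.2 hst1), add_sub_cancel]
  have hβ : 1 - q⁻¹ ∈ Ioo 0 1 :=
    ⟨sub_pos.2 (inv_lt_one_of_one_lt₀ hq), sub_lt_self _ (inv_pos.2 (one_pos.trans hq))⟩
  have hαβ : √(s / t) ^ 2 * (p⁻¹ * (1 - q⁻¹)) ≤ (1 - p⁻¹) * (1 - (1 - q⁻¹)) := by
    rw [Real.sq_sqrt (by positivity), sub_sub_cancel]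
    exact div_mul_inv_mul_one_sub_inv_le hs ht hp (one_pos.trans hq) hpq
  have hpair := hypercontractivePair_stdGaussian (E := E) hρσ
    ⟨inv_pos.2 (one_pos.trans hp), inv_lt_one_of_one_lt₀ hp⟩ hβ hαβ
  have hsqrt_s : √(2 * t) * √(s / t) = √(2 * s) := by
    rw [← Real.sqrt_mul (by positivity), mul_assoc, mul_div_cancel₀ _ ht.ne']
  have hsqrt_sub : √(2 * t) * √(1 - s / t) = √(2 * (t - s)) := by
    rw [← Real.sqrt_mul (by positivity), mul_assoc, mul_one_sub, mul_div_cancel₀ _ ht.ne']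
  have hrot := measurePreserving_smul_add_smul (integral_id_stdGaussian (E := E)) hρσ
  have hle := (hpair.comp (a := fun v => x + √(2 * t) • v) (by fun_prop)
    measurable_id).lintegral_lintegral_rpow_le (by fun_prop) (one_pos.trans hp) hq hf
  rw [lintegral_heatMeasure ((measurable_lintegral_heatMeasure hf _).pow_const q),
    lintegral_heatMeasure (hf.pow_const p)]
  simp only [lintegral_heatMeasure hf]
  simp only [Function.comp_apply] at hle
  rw [hrot.lintegral_comp (f := fun v => f (x + √(2 * t) • v) ^ p) (by fun_prop)] at hle
  simpa only [smul_add, smul_smul, hsqrt_s, hsqrt_sub, ← add_assoc] using hle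

lemma charFun_heatMeasure (ht : 0 ≤ t) (x w : E) :
    charFun (heatMeasure t x) w =
      Complex.exp (-t * ‖w‖ ^ 2) * Complex.exp (inner ℝ x w * Complex.I) := by
  have hmap : heatMeasure t x = ((stdGaussian E).map (√(2 * t) • ·)).map (x + ·) := by
    rw [Measure.map_map (by fun_prop) (by fun_prop)]
    rfl
  rw [hmap, charFun_map_const_add, charFun_map_smul, charFun_stdGaussian, norm_smul,
    Real.norm_of_nonneg (Real.sqrt_nonneg _), Complex.ofReal_mul, mul_pow, ← Complex.ofReal_pow √_,
    Real.sq_sqrt (by positivity)]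
  push_cast
  ring_nf

lemma integral_exp_neg_sq_norm_sub_mul_cexp_inner (ht : 0 < t) (x w : E) :
    ∫ y, (rexp (-‖x - y‖ ^ 2 / (4 * t)) : ℂ) * Complex.exp (inner ℝ y w * Complex.I) =
      ((4 * π * t) ^ (Module.finrank ℝ E / 2 : ℝ) : ℝ) *
        (Complex.exp (-t * ‖w‖ ^ 2) * Complex.exp (inner ℝ x w * Complex.I)) := by
  have hb : 0 < (((4 * t)⁻¹ : ℝ) : ℂ).re := by
    rw [Complex.ofReal_re]
    positivity
  have hπ : (π / ((4 * t)⁻¹ : ℝ) : ℂ) ^ (Module.finrank ℝ E / 2 : ℂ) =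
      ((4 * π * t) ^ (Module.finrank ℝ E / 2 : ℝ) : ℝ) := by
    rw [Complex.ofReal_cpow (by positivity)]
    push_cast
    congr 1
    field_simp
  rw [← integral_add_left_eq_self _ x]
  calc ∫ v, (rexp (-‖x - (x + v)‖ ^ 2 / (4 * t)) : ℂ) * Complex.exp (inner ℝ (x + v) w * Complex.I)
      = ∫ v, Complex.exp (-((4 * t)⁻¹ : ℝ) * ‖v‖ ^ 2 + Complex.I * inner ℝ w v) *
          Complex.exp (inner ℝ x w * Complex.I) := by
        congr! 2 with v
        rw [Complex.ofReal_exp, ← Complex.exp_add, ← Complex.exp_add, inner_add_left,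
          sub_add_cancel_left, norm_neg, real_inner_comm w v]
        push_cast
        ring_nf
    _ = _ := by
        rw [integral_mul_const, GaussianFourier.integral_cexp_neg_mul_sq_norm_add hb, hπ, mul_assoc]
        congr 3
        rw [Complex.I_sq]
        push_cast
        field_simp

lemma integrable_exp_neg_sq_norm_sub (ht : 0 < t) (x : E) :
    Integrable fun y => rexp (-‖x - y‖ ^ 2 / (4 * t)) := by
  have h0 : Integrable fun v : E => rexp (-(1 / (4 * t)) * ‖v‖ ^ 2) := by
    refine .of_integral_ne_zero ?_
    rw [GaussianFourier.integral_rexp_neg_mul_sq_norm (by positivity)]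
    positivity
  refine (h0.comp_sub_left x).congr (.of_forall fun y => ?_)
  ring_nf

lemma integrable_rpow_mul_exp_neg_sq_norm_sub (ht : 0 < t) {q b : ℝ} (hq : 0 ≤ q) {f : E → ℝ}
    (hf : Measurable f) (hf0 : ∀ y, 0 ≤ f y) (hfb : ∀ y, f y ≤ b) (x : E) :
    Integrable fun y => f y ^ q * rexp (-‖x - y‖ ^ 2 / (4 * t)) := by
  refine (integrable_exp_neg_sq_norm_sub ht x).bdd_mul (c := b ^ q)
    (hf.pow_const q).aestronglyMeasurable (.of_forall fun y => ?_)
  rw [Real.norm_of_nonneg (rpow_nonneg (hf0 y) q)]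
  exact rpow_le_rpow (hf0 y) (hfb y) hq

lemma heatMeasure_eq_withDensity (ht : 0 < t) (x : E) :
    heatMeasure t x = volume.withDensity fun y => ENNReal.ofReal
      ((4 * π * t) ^ (-(Module.finrank ℝ E : ℝ) / 2) * rexp (-‖x - y‖ ^ 2 / (4 * t))) := by
  have : IsFiniteMeasure (heatMeasure t x) := by
    unfold heatMeasure
    infer_instance
  have := isFiniteMeasure_withDensity_ofReal ((integrable_exp_neg_sq_norm_sub ht x).const_mul
    ((4 * π * t) ^ (-(Module.finrank ℝ E : ℝ) / 2))).2
  refine Measure.ext_of_charFun (funext fun w => ?_)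
  have hrpow : (4 * π * t) ^ (-(Module.finrank ℝ E : ℝ) / 2) *
      (4 * π * t) ^ (Module.finrank ℝ E / 2 : ℝ) = 1 := by
    rw [← rpow_add (by positivity), neg_div, neg_add_cancel, rpow_zero]
  rw [charFun_heatMeasure ht.le, charFun_apply, integral_withDensity_eq_integral_toReal_smul
    (by fun_prop) (.of_forall fun _ => ENNReal.ofReal_lt_top)]
  have hsmul (y : E) : (ENNReal.ofReal ((4 * π * t) ^ (-(Module.finrank ℝ E : ℝ) / 2) *
      rexp (-‖x - y‖ ^ 2 / (4 * t)))).toReal • Complex.exp (inner ℝ y w * Complex.I) =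
      ((4 * π * t) ^ (-(Module.finrank ℝ E : ℝ) / 2) : ℝ) *
        (rexp (-‖x - y‖ ^ 2 / (4 * t)) * Complex.exp (inner ℝ y w * Complex.I)) := by
    rw [ENNReal.toReal_ofReal (by positivity), Complex.real_smul, Complex.ofReal_mul, mul_assoc]
  simp only [hsmul]
  rw [integral_const_mul, integral_exp_neg_sq_norm_sub_mul_cexp_inner ht, ← mul_assoc,
    ← Complex.ofReal_mul, hrpow, Complex.ofReal_one, one_mul]

end HeatMeasure

section Heat

variable {n : ℕ} {s t : ℝ}

lemma heat_eq_integral_heatMeasure (ht : 0 ≤ t) (f : EuclideanSpace ℝ (Fin n) → ℝ)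
    (x : EuclideanSpace ℝ (Fin n)) : heat n t f x = ∫ y, f y ∂heatMeasure t x := by
  rcases ht.eq_or_lt with rfl | ht
  · simp [heat, heatMeasure]
  have hsmul (y : EuclideanSpace ℝ (Fin n)) :
      (ENNReal.ofReal ((4 * π * t) ^ (-(n : ℝ) / 2) * rexp (-‖x - y‖ ^ 2 / (4 * t)))).toReal • f y =
        (4 * π * t) ^ (-(n : ℝ) / 2) * (f y * rexp (-‖x - y‖ ^ 2 / (4 * t))) := by
    rw [ENNReal.toReal_ofReal (by positivity), smul_eq_mul]
    ring
  rw [heat, if_neg ht.ne', heatMeasure_eq_withDensity ht, finrank_euclideanSpace_fin,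
    integral_withDensity_eq_integral_toReal_smul (by fun_prop)
      (.of_forall fun _ => ENNReal.ofReal_lt_top)]
  simp only [hsmul]
  exact (integral_const_mul _ _).symm

lemma integrable_heatMeasure_iff (ht : 0 < t) {f : EuclideanSpace ℝ (Fin n) → ℝ}
    {x : EuclideanSpace ℝ (Fin n)} :
    Integrable f (heatMeasure t x) ↔ Integrable fun y => f y * rexp (-‖x - y‖ ^ 2 / (4 * t)) := by
  rw [heatMeasure_eq_withDensity ht, integrable_withDensity_iff_integrable_smul' (by fun_prop)
      (.of_forall fun _ => ENNReal.ofReal_lt_top)]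
  have hc : IsUnit ((4 * π * t) ^ (-(n : ℝ) / 2)) := (by positivity : _ ≠ (0 : ℝ)).isUnit
  refine (integrable_congr (.of_forall fun y => ?_)).trans (integrable_const_mul_iff hc _)
  rw [ENNReal.toReal_ofReal (by positivity), finrank_euclideanSpace_fin, smul_eq_mul]
  ring

lemma heat_nonneg (ht : 0 ≤ t) {f : EuclideanSpace ℝ (Fin n) → ℝ} (hf : ∀ x, 0 ≤ f x)
    (x : EuclideanSpace ℝ (Fin n)) : 0 ≤ heat n t f x := by
  rw [heat_eq_integral_heatMeasure ht]
  exact integral_nonneg hf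

lemma enorm_heat_le (ht : 0 ≤ t) (f : EuclideanSpace ℝ (Fin n) → ℝ)
    (x : EuclideanSpace ℝ (Fin n)) : ‖heat n t f x‖ₑ ≤ ∫⁻ y, ‖f y‖ₑ ∂heatMeasure t x := by
  rw [heat_eq_integral_heatMeasure ht]
  exact enorm_integral_le_lintegral_enorm f

lemma enorm_heat_eq (ht : 0 < t) {f : EuclideanSpace ℝ (Fin n) → ℝ} (hf : ∀ x, 0 ≤ f x)
    {x : EuclideanSpace ℝ (Fin n)}
    (hfi : Integrable fun y => f y * rexp (-‖x - y‖ ^ 2 / (4 * t))) :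
    ‖heat n t f x‖ₑ = ∫⁻ y, ‖f y‖ₑ ∂heatMeasure t x := by
  rw [heat_eq_integral_heatMeasure ht.le,
    Real.enorm_of_nonneg (integral_nonneg hf),
    ofReal_integral_eq_lintegral_ofReal ((integrable_heatMeasure_iff ht).2 hfi) (.of_forall hf)]
  exact lintegral_congr fun y => (Real.enorm_of_nonneg (hf y)).symm

end Heat

end Gaussian

theorem local_hypercontractivity_heat_general {n : ℕ} {s t : ℝ} (hs : 0 < s) (hst : s ≤ t)
    {q₁ q₂ : ℝ} (hq₁ : 1 < q₁) (hq₂ : 1 < q₂) (hrel : (q₂ - 1) / (q₁ - 1) ≤ t / s)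
    {f : EuclideanSpace ℝ (Fin n) → ℝ} (hf : Measurable f) (hf0 : ∀ x, 0 ≤ f x)
    (x : EuclideanSpace ℝ (Fin n))
    (hfi : Integrable fun y => f y ^ q₁ * rexp (-‖x - y‖ ^ 2 / (4 * t))) :
    (heat n s (fun y => heat n (t - s) f y ^ q₂) x) ^ (1 / q₂) ≤
      (heat n t (fun y => f y ^ q₁) x) ^ (1 / q₁) := by
  have hq₁0 : 0 < q₁ := one_pos.trans hq₁
  have hq₂0 : 0 < q₂ := one_pos.trans hq₂
  have ht : 0 < t := hs.trans_le hst
  have hg0 := heat_nonneg (sub_nonneg.2 hst) hf0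
  have hL0 := heat_nonneg hs.le (fun y => rpow_nonneg (hg0 y) q₂) x
  have hR0 := heat_nonneg ht.le (fun y => rpow_nonneg (hf0 y) q₁) x
  have h_enorm : ‖(heat n s (fun y => heat n (t - s) f y ^ q₂) x) ^ q₂⁻¹‖ₑ ≤
      ‖(heat n t (fun y => f y ^ q₁) x) ^ q₁⁻¹‖ₑ := by
    rw [Real.enorm_rpow_of_nonneg hL0 (inv_nonneg.2 hq₂0.le),
      Real.enorm_rpow_of_nonneg hR0 (inv_nonneg.2 hq₁0.le)]
    calc ‖heat n s (fun y => heat n (t - s) f y ^ q₂) x‖ₑ ^ q₂⁻¹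
        ≤ (∫⁻ y, ‖heat n (t - s) f y ^ q₂‖ₑ ∂heatMeasure s x) ^ q₂⁻¹ := by
          gcongr
          exact enorm_heat_le hs.le _ x
      _ = (∫⁻ y, ‖heat n (t - s) f y‖ₑ ^ q₂ ∂heatMeasure s x) ^ q₂⁻¹ := by
          simp only [Real.enorm_rpow_of_nonneg (hg0 _) hq₂0.le]
      _ ≤ (∫⁻ y, (∫⁻ z, ‖f z‖ₑ ∂heatMeasure (t - s) y) ^ q₂ ∂heatMeasure s x) ^ q₂⁻¹ := by
          gcongr with y
          exact enorm_heat_le (sub_nonneg.2 hst) f y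
      _ ≤ (∫⁻ z, ‖f z‖ₑ ^ q₁ ∂heatMeasure t x) ^ q₁⁻¹ :=
          heatMeasure_hypercontractivity hs hst hq₁ hq₂ hrel hf.enorm x
      _ = ‖heat n t (fun y => f y ^ q₁) x‖ₑ ^ q₁⁻¹ := by
          rw [enorm_heat_eq ht (fun y => rpow_nonneg (hf0 y) q₁) hfi]
          simp only [Real.enorm_rpow_of_nonneg (hf0 _) hq₁0.le]
  rw [Real.enorm_of_nonneg (rpow_nonneg hL0 _), Real.enorm_of_nonneg (rpow_nonneg hR0 _),
    ENNReal.ofReal_le_ofReal_iff (rpow_nonneg hR0 _)] at h_enorm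
  simpa only [one_div] using h_enorm

theorem local_hypercontractivity_heat (n : ℕ) (hn : 1 ≤ n)
    (s t : ℝ) (hs : 0 < s) (hst : s ≤ t)
    (q₁ q₂ : ℝ) (hq₁ : 1 < q₁) (hq : q₁ ≤ q₂) (hrel : (q₂ - 1) / (q₁ - 1) = t / s)
    (f : EuclideanSpace ℝ (Fin n) → ℝ) (hf : Measurable f)
    (a b : ℝ) (ha : 0 < a) (hab : ∀ x, a ≤ f x ∧ f x ≤ b)
    (x : EuclideanSpace ℝ (Fin n)) :
    (heat n s (fun y => heat n (t - s) f y ^ q₂) x) ^ (1 / q₂) ≤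
      (heat n t (fun y => f y ^ q₁) x) ^ (1 / q₁) := by
  have hf0 (y) : 0 ≤ f y := ha.le.trans (hab y).1
  exact local_hypercontractivity_heat_general hs hst hq₁ (hq₁.trans_le hq) hrel.le hf hf0 x
    (integrable_rpow_mul_exp_neg_sq_norm_sub (hs.trans_le hst) (one_pos.trans hq₁).le hf hf0
      (fun y => (hab y).2) x)
end
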